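/- arXiv:2107.11528 — 3 statements merged into one kernel-verified Lean document; each statement's English description precedes it below -/
import Mathlib

section
/- (Weighted L¹ bound for the nonlinearity) Let 0 < c < 3/2. There is a constant C = C(c) > 0 such that for every Schwartz function f : ℝ³ → ℂ, ∫_{ℝ³} |f(x)|³ / |x|^c dx ≤ C ‖f‖_{H¹(ℝ³)}³. -/
open MeasureTheory Real Filter
open scoped BigOperators Topology

noncomputable section

/-- Three-dimensional Euclidean space. -/
abbrev E3 : Type := EuclideanSpace ℝ (Fin 3)

/-- The `j`-th standard basis vector of `E3`. -/
def e3 (j : Fin 3) : E3 := EuclideanSpace.single j 1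

/-- The `j`-th spatial partial derivative of a complex-valued function. -/
def pd (j : Fin 3) (f : E3 → ℂ) (x : E3) : ℂ := fderiv ℝ f x (e3 j)

/-- The `j`-th spatial partial derivative of a real-valued function. -/
def pdR (j : Fin 3) (w : E3 → ℝ) (x : E3) : ℝ := fderiv ℝ w x (e3 j)

/-- The Laplacian of a complex-valued function on `E3`. -/
def lap (f : E3 → ℂ) (x : E3) : ℂ := ∑ j : Fin 3, pd j (fun y => pd j f y) x

/-- The Laplacian of a real-valued function on `E3`. -/
def lapR (w : E3 → ℝ) (x : E3) : ℝ := ∑ j : Fin 3, pdR j (fun y => pdR j w y) x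

/-- Second partial derivatives `∂_j ∂_k w` of a real-valued function on `E3`. -/
def pdR2 (j k : Fin 3) (w : E3 → ℝ) (x : E3) : ℝ := pdR j (fun y => pdR k w y) x

/-- A smooth Schwartz solution of the inhomogeneous cubic NLS with inverse-square
potential: `i ∂ₜ u + Δu − (a/|x|²) u = λ |x|^{−b} |u|² u` on `ℝ × (ℝ³ \ {0})`,
with `u(t,·)` Schwartz for each time, and Schwartz seminorms of `u(t,·)`
and `∂ₜ u(t,·)` locally uniformly bounded in `t`. -/
structure IsSchwartzSolution (a b lam : ℝ) (u : ℝ → E3 → ℂ) : Prop where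
  smooth : ContDiff ℝ (⊤ : ℕ∞) (Function.uncurry u)
  schwartz : ∀ t : ℝ, ∃ f : SchwartzMap E3 ℂ, ∀ x : E3, f x = u t x
  schwartz_dt : ∀ t : ℝ, ∃ f : SchwartzMap E3 ℂ, ∀ x : E3,
      f x = deriv (fun s => u s x) t
  unif_bound : ∀ (k n : ℕ) (T : ℝ), 0 < T → ∃ C : ℝ, ∀ t ∈ Set.Icc (-T) T, ∀ x : E3,
      ‖x‖ ^ k * ‖iteratedFDeriv ℝ n (u t) x‖
        + ‖x‖ ^ k * ‖iteratedFDeriv ℝ n (fun y => deriv (fun s => u s y) t) x‖ ≤ C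
  eqn : ∀ (t : ℝ) (x : E3), x ≠ 0 →
      Complex.I * deriv (fun s => u s x) t + lap (u t) x
          - ((a / ‖x‖ ^ 2 : ℝ) : ℂ) * u t x
        = (lam : ℂ) * ((‖x‖ ^ (-b) : ℝ) : ℂ) * ((‖u t x‖ ^ 2 : ℝ) : ℂ) * u t x

lemma w_opnorm (L : E3 →L[ℝ] ℂ) : ‖L‖ ^ 2 ≤ 3 * ∑ j : Fin 3, ‖L (e3 j)‖ ^ 2 := by
  have h : ‖L‖ ≤ ∑ j : Fin 3, ‖L (e3 j)‖ := by
    refine L.opNorm_le_bound (Finset.sum_nonneg fun _ _ => norm_nonneg _) fun v => ?_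
    have hv : v = ∑ j : Fin 3, v j • e3 j := by
      ext i
      simp [e3, Finset.sum_apply, Pi.single_apply]
    calc ‖L v‖ = ‖∑ j : Fin 3, v j • L (e3 j)‖ := by
          conv_lhs => rw [hv]
          simp only [map_sum, map_smul]
      _ ≤ ∑ j : Fin 3, ‖v j • L (e3 j)‖ := norm_sum_le _ _
      _ ≤ ∑ j : Fin 3, ‖L (e3 j)‖ * ‖v‖ := by
          refine Finset.sum_le_sum fun j _ => ?_
          rw [norm_smul, mul_comm]
          exact mul_le_mul_of_nonneg_left (PiLp.norm_apply_le v j) (norm_nonneg _)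
      _ = _ := by rw [Finset.sum_mul]
  calc ‖L‖ ^ 2 ≤ (∑ j : Fin 3, ‖L (e3 j)‖) ^ 2 := by gcongr
    _ ≤ _ := by
      have := sq_sum_le_card_mul_sum_sq (s := (Finset.univ : Finset (Fin 3)))
        (f := fun j => ‖L (e3 j)‖)
      simpa using this

lemma w_sobolev : ∃ K : ℝ, 0 ≤ K ∧ ∀ u : E3 → ℂ, ContDiff ℝ 1 u → HasCompactSupport u →
    ∫ x, ‖u x‖ ^ 6 ≤ K * (∫ x, ‖fderiv ℝ u x‖ ^ 2) ^ 3 := by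
  refine ⟨(SNormLESNormFDerivOfEqConst ℂ (volume : Measure E3) 2 : ℝ) ^ 6, by positivity, ?_⟩
  intro u hu h2u
  have h := eLpNorm_le_eLpNorm_fderiv_of_eq (volume : Measure E3) hu h2u (p := 2) (p' := 6)
    (by norm_num) (by simp) (by simp; norm_num)
  have hu6 : MemLp u 6 := hu.continuous.memLp_of_hasCompactSupport h2u
  have hd2 : MemLp (fderiv ℝ u) 2 :=
    (hu.continuous_fderiv (by norm_num)).memLp_of_hasCompactSupport (h2u.fderiv ℝ)
  have e6 : ((6 : NNReal) : ENNReal) = 6 := by norm_num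
  have e2 : ((2 : NNReal) : ENNReal) = 2 := by norm_num
  rw [e6, e2, hu6.eLpNorm_eq_integral_rpow_norm (by norm_num) (by norm_num),
    hd2.eLpNorm_eq_integral_rpow_norm (by norm_num) (by norm_num),
    ← ENNReal.ofReal_coe_nnreal, ← ENNReal.ofReal_mul (by positivity),
    ENNReal.ofReal_le_ofReal_iff (by positivity)] at h
  simp only [ENNReal.toReal_ofNat] at h
  have r6 : ∀ t : ℝ, t ^ (6 : ℝ) = t ^ 6 := fun t => by exact_mod_cast rpow_natCast t 6
  have r2 : ∀ t : ℝ, t ^ (2 : ℝ) = t ^ 2 := fun t => by exact_mod_cast rpow_natCast t 2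
  simp only [r6, r2] at h
  have hA : 0 ≤ ∫ x, ‖u x‖ ^ 6 := integral_nonneg fun _ => by positivity
  have hB : 0 ≤ ∫ x, ‖fderiv ℝ u x‖ ^ 2 := integral_nonneg fun _ => by positivity
  have h' := pow_le_pow_left₀ (by positivity) h 6
  rw [mul_pow, ← rpow_natCast, ← rpow_mul hA, ← rpow_natCast (_ ^ (2:ℝ)⁻¹), ← rpow_mul hB] at h'
  norm_num at h'
  have r3 : ∀ t : ℝ, t ^ (3 : ℝ) = t ^ 3 := fun t => by exact_mod_cast rpow_natCast t 3
  simpa only [r3] using h'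

lemma w_cutoff : ∃ M : ℝ, 0 ≤ M ∧ ∀ n : ℕ, ∃ χ : E3 → ℝ, ContDiff ℝ 1 χ ∧ HasCompactSupport χ ∧
    (∀ x, |χ x| ≤ 1) ∧ (∀ x, ‖fderiv ℝ χ x‖ ≤ M) ∧ ∀ x ∈ Metric.ball (0 : E3) (n + 1), χ x = 1 := by
  let b : ContDiffBump (0 : E3) := ⟨1, 2, by norm_num, by norm_num⟩
  have hb : ContDiff ℝ 1 b := b.contDiff
  obtain ⟨M, hM⟩ := (hb.continuous_fderiv (by norm_num)).bounded_above_of_compact_support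
    (b.hasCompactSupport.fderiv ℝ)
  have hM0 : 0 ≤ M := (norm_nonneg _).trans (hM 0)
  refine ⟨M, hM0, fun n => ?_⟩
  have hn : (0 : ℝ) < n + 1 := by positivity
  have hn' : ((n : ℝ) + 1)⁻¹ ≠ 0 := by positivity
  refine ⟨fun x => b (((n : ℝ) + 1)⁻¹ • x), hb.comp (contDiff_const_smul _), ?_, ?_, ?_, ?_⟩
  · exact b.hasCompactSupport.comp_smul hn'
  · intro x
    rw [abs_of_nonneg b.nonneg]
    exact b.le_one
  · intro x
    rw [fderiv_comp_smul, norm_smul]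
    have : ‖((n : ℝ) + 1)⁻¹‖ ≤ 1 := by
      rw [norm_inv, Real.norm_of_nonneg hn.le]
      exact inv_le_one_of_one_le₀ (by linarith [(Nat.cast_nonneg n : (0:ℝ) ≤ n)])
    calc _ ≤ 1 * M := mul_le_mul this (hM _) (norm_nonneg _) zero_le_one
      _ = M := one_mul _
  · intro x hx
    apply b.one_of_mem_closedBall
    rw [mem_ball_zero_iff] at hx
    rw [mem_closedBall_zero_iff, norm_smul, norm_inv, Real.norm_of_nonneg hn.le, inv_mul_le_iff₀ hn]
    change ‖x‖ ≤ (n + 1) * 1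
    linarith

lemma w_int_pow (f : SchwartzMap E3 ℂ) (n : ℕ) (hn : n ≠ 0) : Integrable fun x => ‖f x‖ ^ n :=
  (f.memLp n).integrable_norm_pow hn

lemma w_int_pd (f : SchwartzMap E3 ℂ) (j : Fin 3) : Integrable fun x => ‖pd j f x‖ ^ 2 := by
  have h := ((SchwartzMap.evalCLM ℝ E3 ℂ (e3 j) (SchwartzMap.fderivCLM ℝ E3 ℂ f)).memLp
    ((2 : ℕ) : ENNReal) volume).integrable_norm_pow (by norm_num)
  exact h

lemma w_int_H (f : SchwartzMap E3 ℂ) :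
    Integrable fun x => ‖f x‖ ^ 2 + ∑ j : Fin 3, ‖pd j (⇑f) x‖ ^ 2 :=
  (w_int_pow f 2 (by norm_num)).add (integrable_finsetSum _ fun j _ => w_int_pd f j)

lemma w_sobolev_schwartz : ∃ K : ℝ, 0 ≤ K ∧ ∀ f : SchwartzMap E3 ℂ,
    ∫ x, ‖f x‖ ^ 6 ≤ K * (∫ x : E3, (‖f x‖ ^ 2 + ∑ j : Fin 3, ‖pd j (⇑f) x‖ ^ 2)) ^ 3 := by
  obtain ⟨K, hK, hS⟩ := w_sobolev
  obtain ⟨M, hM, hχ⟩ := w_cutoff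
  set D : ℝ := 6 + 2 * M ^ 2 with hD
  refine ⟨K * D ^ 3, by positivity, fun f => ?_⟩
  have hint6 := w_int_pow f 6 (by norm_num)
  have key : ∀ n : ℕ, ∫ x in Metric.ball (0 : E3) (n + 1), ‖f x‖ ^ 6 ≤
      K * D ^ 3 * (∫ x : E3, (‖f x‖ ^ 2 + ∑ j : Fin 3, ‖pd j (⇑f) x‖ ^ 2)) ^ 3 := by
    intro n
    obtain ⟨χ, c1, c2, c3, c4, c5⟩ := hχ n
    let u : E3 → ℂ := fun x => χ x • f x
    have hf1 : ContDiff ℝ 1 f := f.smooth 1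
    have hu : ContDiff ℝ 1 u := c1.smul hf1
    have hus : HasCompactSupport u := c2.smul_right
    have hpt : ∀ x, ‖fderiv ℝ u x‖ ^ 2 ≤ D * (‖f x‖ ^ 2 + ∑ j : Fin 3, ‖pd j (⇑f) x‖ ^ 2) := by
      intro x
      have e : fderiv ℝ u x = χ x • fderiv ℝ f x + (fderiv ℝ χ x).smulRight (f x) :=
        fderiv_fun_smul (c1.differentiable (by norm_num) x) (hf1.differentiable (by norm_num) x)
      have h1 : ‖fderiv ℝ u x‖ ≤ ‖fderiv ℝ f x‖ + M * ‖f x‖ := by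
        rw [e]
        refine (norm_add_le _ _).trans (add_le_add ?_ ?_)
        · rw [norm_smul]
          exact mul_le_of_le_one_left (norm_nonneg _) (c3 x)
        · rw [ContinuousLinearMap.norm_smulRight_apply]
          exact mul_le_mul_of_nonneg_right (c4 x) (norm_nonneg _)
      have h2 := w_opnorm (fderiv ℝ f x)
      have h3 : ‖fderiv ℝ u x‖ ^ 2 ≤ (‖fderiv ℝ f x‖ + M * ‖f x‖) ^ 2 := by gcongr
      have h4 : (‖fderiv ℝ f x‖ + M * ‖f x‖) ^ 2 ≤ 2 * ‖fderiv ℝ f x‖ ^ 2 + 2 * (M * ‖f x‖) ^ 2 := by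
        nlinarith [sq_nonneg (‖fderiv ℝ f x‖ - M * ‖f x‖)]
      have h5 : 0 ≤ ∑ j : Fin 3, ‖pd j (⇑f) x‖ ^ 2 := Finset.sum_nonneg fun _ _ => by positivity
      change _ ≤ 3 * ∑ j : Fin 3, ‖pd j (⇑f) x‖ ^ 2 at h2
      have h6 : 0 ≤ M ^ 2 * ∑ j : Fin 3, ‖pd j (⇑f) x‖ ^ 2 := by positivity
      nlinarith [sq_nonneg ‖f x‖]
    have hB : ∫ x, ‖fderiv ℝ u x‖ ^ 2 ≤
        D * ∫ x : E3, (‖f x‖ ^ 2 + ∑ j : Fin 3, ‖pd j (⇑f) x‖ ^ 2) := by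
      rw [← integral_const_mul]
      exact integral_mono_of_nonneg (ae_of_all _ fun x => by positivity)
        ((w_int_H f).const_mul D) (ae_of_all _ hpt)
    have hB0 : 0 ≤ ∫ x, ‖fderiv ℝ u x‖ ^ 2 := integral_nonneg fun _ => by positivity
    have hu6 : Integrable fun x => ‖u x‖ ^ 6 :=
      (hu.continuous.memLp_of_hasCompactSupport hus (p := (6 : ℕ))).integrable_norm_pow (by norm_num)
    calc ∫ x in Metric.ball (0 : E3) (n + 1), ‖f x‖ ^ 6
        = ∫ x in Metric.ball (0 : E3) (n + 1), ‖u x‖ ^ 6 := by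
          refine setIntegral_congr_fun Metric.isOpen_ball.measurableSet fun x hx => ?_
          simp [u, c5 x hx]
      _ ≤ ∫ x, ‖u x‖ ^ 6 :=
          setIntegral_le_integral hu6 (ae_of_all _ fun x => by positivity)
      _ ≤ K * (∫ x, ‖fderiv ℝ u x‖ ^ 2) ^ 3 := hS u hu hus
      _ ≤ K * (D * ∫ x : E3, (‖f x‖ ^ 2 + ∑ j : Fin 3, ‖pd j (⇑f) x‖ ^ 2)) ^ 3 := by gcongr
      _ = _ := by ring
  have hU : (⋃ n : ℕ, Metric.ball (0 : E3) (n + 1)) = Set.univ := by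
    refine Set.eq_univ_of_forall fun x => ?_
    obtain ⟨n, hn⟩ := exists_nat_gt ‖x‖
    exact Set.mem_iUnion.2 ⟨n, by rw [mem_ball_zero_iff]; linarith⟩
  have ht := tendsto_setIntegral_of_monotone (μ := volume) (f := fun x => ‖f x‖ ^ 6)
    (s := fun n : ℕ => Metric.ball (0 : E3) (n + 1))
    (fun n => Metric.isOpen_ball.measurableSet)
    (fun m n h => Metric.ball_subset_ball (by simpa using h)) (by rw [hU]; exact hint6.integrableOn)
  rw [hU, setIntegral_univ] at ht
  exact le_of_tendsto' ht key

lemma w_weight (c : ℝ) (hc1 : c < 3/2) :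
    IntegrableOn (fun x : E3 => ‖x‖ ^ (-(2 * c))) (Metric.ball 0 1) := by
  refine (integrableOn_fun_norm_addHaar (volume : Measure E3)
    (f := fun y : ℝ => y ^ (-(2 * c)))).2 ?_
  have h : IntegrableOn (fun y : ℝ => y ^ (2 - 2 * c)) (Set.Ioo 0 1) :=
    (intervalIntegral.integrableOn_Ioo_rpow_iff one_pos).2 (by linarith)
  refine h.congr_fun (fun y hy => ?_) measurableSet_Ioo
  simp only [finrank_euclideanSpace, Fintype.card_fin, smul_eq_mul]
  rw [← rpow_natCast, ← rpow_add hy.1]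
  congr 1

/-- **Weighted `L¹` bound for the nonlinearity.** For `0 < c < 3/2` there is
`C = C(c) > 0` such that for every Schwartz `f : ℝ³ → ℂ`,
`∫ |f|³/|x|^c ≤ C ‖f‖_{H¹}³`. -/
theorem weighted_L1_nonlinearity_bound (c : ℝ) (hc0 : 0 < c) (hc1 : c < 3/2) :
    ∃ C : ℝ, 0 < C ∧ ∀ f : SchwartzMap E3 ℂ,
      ∫ x : E3, ‖f x‖ ^ 3 * ‖x‖ ^ (-c)
        ≤ C * (∫ x : E3, (‖f x‖ ^ 2 + ∑ j : Fin 3, ‖pd j (⇑f) x‖ ^ 2))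
            ^ ((3 : ℝ)/2) := by
  obtain ⟨K, hK, hS⟩ := w_sobolev_schwartz
  set W : E3 → ℝ := (Metric.ball (0 : E3) 1).indicator fun x => ‖x‖ ^ (-(2 * c)) with hW
  have hWint : Integrable W :=
    (integrable_indicator_iff Metric.isOpen_ball.measurableSet).2 (w_weight c hc1)
  have hW0 : ∀ x, 0 ≤ W x := fun x => Set.indicator_nonneg (fun _ _ => by positivity) x
  have hD0 : 0 ≤ ∫ x, W x := integral_nonneg hW0
  refine ⟨1 + K + ∫ x, W x, by positivity, fun f => ?_⟩
  set H := ∫ x : E3, (‖f x‖ ^ 2 + ∑ j : Fin 3, ‖pd j (⇑f) x‖ ^ 2) with hH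
  have hH0 : 0 ≤ H := integral_nonneg fun _ => by positivity
  have h2H : ∫ x, ‖f x‖ ^ 2 ≤ H :=
    integral_mono (w_int_pow f 2 (by norm_num)) (w_int_H f) fun x =>
      le_add_of_nonneg_right (Finset.sum_nonneg fun _ _ => by positivity)
  have i2 := w_int_pow f 2 (by norm_num)
  have i6 := w_int_pow f 6 (by norm_num)
  have h6 := hS f
  rw [← hH] at h6
  rcases hH0.eq_or_lt with h0 | hpos
  · have hz : ∫ x, ‖f x‖ ^ 6 = 0 := by
      refine le_antisymm ?_ (integral_nonneg fun _ => by positivity)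
      rw [← h0] at h6
      simpa using h6
    rw [integral_eq_zero_iff_of_nonneg (fun _ => by positivity) i6] at hz
    have : ∫ x : E3, ‖f x‖ ^ 3 * ‖x‖ ^ (-c) = 0 := by
      refine integral_eq_zero_of_ae ?_
      filter_upwards [hz] with x hx
      have : ‖f x‖ = 0 := by simpa using hx
      simp [this]
    rw [this]
    positivity
  · set A := √H with hA
    have hA0 : 0 < A := Real.sqrt_pos.2 hpos
    have hAH : A ^ 2 = H := Real.sq_sqrt hH0
    have hr : H ^ ((3 : ℝ)/2) = A ^ 3 := by
      rw [hA, Real.sqrt_eq_rpow, ← rpow_natCast, ← rpow_mul hH0]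
      norm_num
    rw [hr]
    have hpt : ∀ x : E3, ‖f x‖ ^ 3 * ‖x‖ ^ (-c) ≤
        A * ‖f x‖ ^ 2 + (A ^ 3)⁻¹ * ‖f x‖ ^ 6 + A ^ 3 * W x := by
      intro x
      set t := ‖f x‖
      have ht : 0 ≤ t := norm_nonneg _
      by_cases hx : x ∈ Metric.ball (0 : E3) 1
      · have e : W x = (‖x‖ ^ (-c)) ^ 2 := by
          rw [hW, Set.indicator_of_mem hx, ← rpow_natCast, ← rpow_mul (norm_nonneg x)]
          congr 1
          push_cast
          ring
        rw [e]
        set w := ‖x‖ ^ (-c)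
        have hw : 0 ≤ w := by positivity
        have h1 : 0 ≤ A * t ^ 2 := by positivity
        have h2 : (A ^ 3)⁻¹ * t ^ 6 + A ^ 3 * w ^ 2 - 2 * (t ^ 3 * w)
            = (A ^ 3)⁻¹ * (t ^ 3 - A ^ 3 * w) ^ 2 := by
          field_simp
          ring
        have h3 : 0 ≤ (A ^ 3)⁻¹ * (t ^ 3 - A ^ 3 * w) ^ 2 := by positivity
        have h4 : 0 ≤ t ^ 3 * w := by positivity
        linarith
      · have hx1 : 1 ≤ ‖x‖ := by simpa using hx
        have hw : ‖x‖ ^ (-c) ≤ 1 := rpow_le_one_of_one_le_of_nonpos hx1 (by linarith)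
        have h1 : t ^ 3 * ‖x‖ ^ (-c) ≤ t ^ 3 := mul_le_of_le_one_right (by positivity) hw
        have h2 : 0 ≤ A ^ 3 * W x := mul_nonneg (by positivity) (hW0 x)
        have h3 : t ^ 3 ≤ A * t ^ 2 + (A ^ 3)⁻¹ * t ^ 6 := by
          rcases le_total t A with h | h
          · have : t ^ 3 ≤ A * t ^ 2 := by
              rw [pow_succ' t 2]
              gcongr
            have : 0 ≤ (A ^ 3)⁻¹ * t ^ 6 := by positivity
            linarith
          · have : t ^ 3 ≤ (A ^ 3)⁻¹ * t ^ 6 := by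
              rw [le_inv_mul_iff₀ (by positivity)]
              calc A ^ 3 * t ^ 3 ≤ t ^ 3 * t ^ 3 := by gcongr
                _ = t ^ 6 := by ring
            have : 0 ≤ A * t ^ 2 := by positivity
            linarith
        linarith
    have hI : ∫ x : E3, ‖f x‖ ^ 3 * ‖x‖ ^ (-c) ≤
        ∫ x : E3, (A * ‖f x‖ ^ 2 + (A ^ 3)⁻¹ * ‖f x‖ ^ 6 + A ^ 3 * W x) :=
      integral_mono_of_nonneg (ae_of_all _ fun x => by positivity)
        (((i2.const_mul A).add (i6.const_mul _)).add (hWint.const_mul _)) (ae_of_all _ hpt)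
    have i26 : Integrable fun x => A * ‖f x‖ ^ 2 + (A ^ 3)⁻¹ * ‖f x‖ ^ 6 :=
      (i2.const_mul A).add (i6.const_mul _)
    rw [integral_add i26 (hWint.const_mul _),
      integral_add (i2.const_mul A) (i6.const_mul _), integral_const_mul, integral_const_mul,
      integral_const_mul] at hI
    have e1 : A * ∫ x, ‖f x‖ ^ 2 ≤ A ^ 3 := by
      calc A * ∫ x, ‖f x‖ ^ 2 ≤ A * A ^ 2 := by rw [hAH]; gcongr
        _ = A ^ 3 := by ring
    have e2 : (A ^ 3)⁻¹ * ∫ x, ‖f x‖ ^ 6 ≤ K * A ^ 3 := by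
      rw [inv_mul_le_iff₀ (by positivity)]
      calc _ ≤ K * H ^ 3 := h6
        _ = _ := by rw [← hAH]; ring
    linarith
end
end

section
/- (L^{6/5} bound for the nonlinearity under local mass smallness) Let 0 < b < 1. There is a constant C = C(b) > 0 such that for every Schwartz function f : ℝ³ → ℂ, every R ≥ 1 and every ε > 0 satisfying ∫_{|x| ≤ 2R} |f(x)|² dx ≤ ε², one has ( ∫_{ℝ³} ( |f(x)|³ / |x|^b )^{6/5} dx )^{5/6} ≤ C ( ε^{1−b} ‖f‖_{H¹(ℝ³)}^{2+b} + R^{−b} ‖f‖_{H¹(ℝ³)}³ ). -/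
open MeasureTheory Real Filter
open scoped BigOperators Topology

noncomputable section

/-- The pointwise `H¹` density. -/
def hDen (f : SchwartzMap E3 ℂ) (x : E3) : ℝ :=
  Real.sqrt (‖f x‖ ^ 2 + ∑ j : Fin 3, ‖pd j (⇑f) x‖ ^ 2)

/-- The `H¹` norm. -/
def hNorm (f : SchwartzMap E3 ℂ) : ℝ :=
  (∫ x : E3, (‖f x‖ ^ 2 + ∑ j : Fin 3, ‖pd j (⇑f) x‖ ^ 2)) ^ ((1 : ℝ)/2)

lemma hDen_nonneg (f : SchwartzMap E3 ℂ) (x : E3) : 0 ≤ hDen f x := Real.sqrt_nonneg _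

lemma hDen_sq (f : SchwartzMap E3 ℂ) (x : E3) :
    hDen f x ^ 2 = ‖f x‖ ^ 2 + ∑ j : Fin 3, ‖pd j (⇑f) x‖ ^ 2 := by
  unfold hDen
  rw [Real.sq_sqrt (by positivity)]

lemma norm_le_hDen (f : SchwartzMap E3 ℂ) (x : E3) : ‖f x‖ ≤ hDen f x := by
  apply Real.le_sqrt_of_sq_le
  have : 0 ≤ ∑ j : Fin 3, ‖pd j (⇑f) x‖ ^ 2 := by positivity
  linarith

lemma fderiv_le_hDen (f : SchwartzMap E3 ℂ) (x : E3) : ‖fderiv ℝ (⇑f) x‖ ≤ hDen f x := by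
  refine ContinuousLinearMap.opNorm_le_bound _ (hDen_nonneg f x) fun v => ?_
  have hv : v = ∑ j : Fin 3, v j • e3 j := by
    ext i
    fin_cases i <;> simp [e3, Fin.sum_univ_three]
  have h1 : fderiv ℝ (⇑f) x v = ∑ j : Fin 3, v j • pd j (⇑f) x := by
    conv_lhs => rw [hv]
    simp [pd, map_sum]
  rw [h1]
  calc ‖∑ j : Fin 3, v j • pd j (⇑f) x‖ ≤ ∑ j : Fin 3, ‖v j‖ * ‖pd j (⇑f) x‖ := by
        refine (norm_sum_le _ _).trans (Finset.sum_le_sum fun j _ => ?_)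
        rw [norm_smul]
    _ ≤ Real.sqrt (∑ j : Fin 3, ‖v j‖ ^ 2) * Real.sqrt (∑ j : Fin 3, ‖pd j (⇑f) x‖ ^ 2) :=
        Real.sum_mul_le_sqrt_mul_sqrt _ _ _
    _ ≤ hDen f x * ‖v‖ := by
        rw [EuclideanSpace.norm_eq, mul_comm]
        gcongr
        unfold hDen
        gcongr
        have : 0 ≤ ‖f x‖ ^ 2 := by positivity
        linarith

lemma pd_memLp (f : SchwartzMap E3 ℂ) (j : Fin 3) : MemLp (pd j (⇑f)) 2 := by
  have := (SchwartzMap.memLp (LineDeriv.lineDerivOp (e3 j) f : SchwartzMap E3 ℂ) 2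
    (volume : Measure E3))
  refine this.ae_eq (Eventually.of_forall fun x => ?_)
  simp [SchwartzMap.lineDerivOp_apply_eq_fderiv, pd]

lemma hDen_integrable (f : SchwartzMap E3 ℂ) :
    Integrable (fun x : E3 => ‖f x‖ ^ 2 + ∑ j : Fin 3, ‖pd j (⇑f) x‖ ^ 2) := by
  refine Integrable.add ?_ (integrable_finsetSum _ fun j _ => ?_)
  · exact (f.memLp 2).integrable_norm_pow (by norm_num)
  · exact (pd_memLp f j).integrable_norm_pow (by norm_num)

lemma hDen_memLp (f : SchwartzMap E3 ℂ) : MemLp (hDen f) 2 := by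
  have h := hDen_integrable f
  rw [memLp_two_iff_integrable_sq]
  · simpa only [hDen_sq] using h
  · exact Real.continuous_sqrt.comp_aestronglyMeasurable h.aestronglyMeasurable

lemma hNorm_nonneg (f : SchwartzMap E3 ℂ) : 0 ≤ hNorm f := by
  unfold hNorm
  refine Real.rpow_nonneg (integral_nonneg fun x => ?_) _
  simp only [Pi.zero_apply]
  positivity

lemma eLpNorm_hDen (f : SchwartzMap E3 ℂ) :
    eLpNorm (hDen f) 2 volume = ENNReal.ofReal (hNorm f) := by
  rw [(hDen_memLp f).eLpNorm_eq_integral_rpow_norm (by norm_num) (by norm_num)]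
  congr 1
  unfold hNorm
  congr 1
  · refine integral_congr_ae (Eventually.of_forall fun x => ?_)
    simp only [ENNReal.toReal_ofNat, Real.rpow_ofNat, Real.norm_eq_abs, sq_abs]
    exact hDen_sq f x
  · norm_num

lemma eLpNorm_two_le (f : SchwartzMap E3 ℂ) :
    eLpNorm (⇑f) 2 volume ≤ ENNReal.ofReal (hNorm f) := by
  rw [← eLpNorm_hDen]
  exact eLpNorm_mono_real (norm_le_hDen f)

/-- Sobolev embedding for Schwartz functions. -/
lemma sobolev_six : ∃ K : ℝ, 0 < K ∧ ∀ f : SchwartzMap E3 ℂ,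
    eLpNorm (⇑f) 6 volume ≤ ENNReal.ofReal (K * hNorm f) := by
  let χ : ContDiffBump (0 : E3) := ⟨1, 2, by norm_num, by norm_num⟩
  have hχc : ContDiff ℝ 1 χ := χ.contDiff
  obtain ⟨M, hM⟩ : ∃ M, ∀ x, ‖fderiv ℝ (χ : E3 → ℝ) x‖ ≤ M :=
    (χ.hasCompactSupport.fderiv (𝕜 := ℝ)).exists_bound_of_continuous
      (hχc.continuous_fderiv one_ne_zero)
  have hM0 : 0 ≤ M := (norm_nonneg _).trans (hM 0)
  let K0 : NNReal := eLpNormLESNormFDerivOfEqInnerConst (volume : Measure E3) ((2 : NNReal) : ℝ)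
  refine ⟨(K0 : ℝ) * (1 + M) + 1, by positivity, fun f => ?_⟩
  let c : ℕ → ℝ := fun n => ((n : ℝ) + 1)⁻¹
  have hc0 : ∀ n, 0 < c n := fun n => by positivity
  have hc1 : ∀ n, c n ≤ 1 := fun n => inv_le_one_of_one_le₀ (by linarith [n.cast_nonneg (α := ℝ)])
  let u : ℕ → E3 → ℂ := fun n x => χ (c n • x) • f x
  have hf1 : ContDiff ℝ 1 (⇑f) := f.smooth 1
  have hcut : ∀ n, ContDiff ℝ 1 (fun x : E3 => χ (c n • x)) := fun n =>
    hχc.comp (contDiff_const_smul (c n))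
  have hu : ∀ n, ContDiff ℝ 1 (u n) := fun n => (hcut n).smul hf1
  have husupp : ∀ n, HasCompactSupport (u n) := fun n => by
    refine HasCompactSupport.smul_right (f := fun x : E3 => χ (c n • x)) ?_
    exact χ.hasCompactSupport.comp_smul (hc0 n).ne'
  have hfd : ∀ n x, ‖fderiv ℝ (u n) x‖ ≤ (1 + M) * ‖hDen f x‖ := by
    intro n x
    have h1 : DifferentiableAt ℝ (fun x : E3 => χ (c n • x)) x :=
      (hcut n).differentiable one_ne_zero x
    have h2 : DifferentiableAt ℝ (⇑f) x := hf1.differentiable one_ne_zero x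
    have h3 : fderiv ℝ (u n) x = _ := fderiv_fun_smul h1 h2
    have h4 : fderiv ℝ (fun x : E3 => χ (c n • x)) x = c n • fderiv ℝ (χ : E3 → ℝ) (c n • x) := by
      exact fderiv_comp_smul (c n)
    have hχ1 : ‖χ (c n • x)‖ ≤ 1 := by
      rw [Real.norm_of_nonneg χ.nonneg]; exact χ.le_one
    rw [h3, h4, Real.norm_of_nonneg (hDen_nonneg f x)]
    refine (norm_add_le _ _).trans ?_
    rw [norm_smul, ContinuousLinearMap.norm_smulRight_apply, norm_smul,
      Real.norm_of_nonneg (hc0 n).le]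
    have a1 : ‖χ (c n • x)‖ * ‖fderiv ℝ (⇑f) x‖ ≤ 1 * hDen f x :=
      mul_le_mul hχ1 (fderiv_le_hDen f x) (norm_nonneg _) zero_le_one
    have a2 : c n * ‖fderiv ℝ (χ : E3 → ℝ) (c n • x)‖ * ‖f x‖ ≤ (1 * M) * hDen f x :=
      mul_le_mul (mul_le_mul (hc1 n) (hM _) (norm_nonneg _) zero_le_one)
        (norm_le_hDen f x) (norm_nonneg _) (by positivity)
    linarith
  have hbd : ∀ n, eLpNorm (u n) 6 volume ≤ ENNReal.ofReal (((K0 : ℝ) * (1 + M) + 1) * hNorm f) := by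
    intro n
    have hs := eLpNorm_le_eLpNorm_fderiv_of_eq_inner (volume : Measure E3) (hu n) (husupp n)
      (p := 2) (p' := 6) (by norm_num) (by simp) (by simp; norm_num)
    have hs2 : eLpNorm (fderiv ℝ (u n)) 2 volume ≤
        ENNReal.ofReal (1 + M) * eLpNorm (hDen f) 2 volume :=
      eLpNorm_le_mul_eLpNorm_of_ae_le_mul (Eventually.of_forall (hfd n)) 2
    rw [eLpNorm_hDen] at hs2
    calc eLpNorm (u n) 6 volume ≤ (K0 : ENNReal) * eLpNorm (fderiv ℝ (u n)) 2 volume := by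
          simpa [K0] using hs
      _ ≤ ENNReal.ofReal K0 * (ENNReal.ofReal (1 + M) * ENNReal.ofReal (hNorm f)) := by
          rw [ENNReal.ofReal_coe_nnreal]; gcongr
      _ = ENNReal.ofReal (K0 * (1 + M) * hNorm f) := by
          rw [← ENNReal.ofReal_mul (by positivity), ← ENNReal.ofReal_mul (by positivity), mul_assoc]
      _ ≤ _ := by
          apply ENNReal.ofReal_le_ofReal
          have := hNorm_nonneg f
          nlinarith
  have hlim : ∀ x, Tendsto (fun n => u n x) atTop (𝓝 (f x)) := by
    intro x
    have hc : Tendsto c atTop (𝓝 0) := by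
      simpa [c, one_div] using tendsto_one_div_add_atTop_nhds_zero_nat (𝕜 := ℝ)
    have h1 : Tendsto (fun n => c n • x) atTop (𝓝 0) := by
      simpa using hc.smul_const x
    have h2 := (χ.continuous.tendsto 0).comp h1
    have h3 : χ 0 = 1 := χ.one_of_mem_closedBall (by simp [χ])
    rw [h3] at h2
    simpa [u] using h2.smul_const (f x)
  refine (Lp.eLpNorm_lim_le_liminf_eLpNorm (fun n => (hu n).continuous.aestronglyMeasurable) _
    (Eventually.of_forall hlim)).trans ?_
  exact liminf_le_of_frequently_le' (Frequently.of_forall hbd)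

lemma weight_bound (b : ℝ) (hb0 : 0 < b) (hb1 : b < 1) : ∃ A : ℝ, 0 < A ∧ ∀ r : ℝ, 0 < r →
    eLpNorm ((Metric.ball (0 : E3) r).indicator fun x => ‖x‖ ^ (-b)) 3 volume
      ≤ ENNReal.ofReal (A * r ^ (1 - b)) := by
  let V : ℝ := (volume : Measure E3).real (Metric.ball 0 1)
  have hV : 0 ≤ V := measureReal_nonneg
  let A0 : ℝ := 3 * V / (3 - 3 * b)
  have hA0 : 0 ≤ A0 := div_nonneg (by positivity) (by linarith)
  refine ⟨A0 ^ ((1:ℝ)/3) + 1, by positivity, fun r hr => ?_⟩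
  let g : ℝ → ℝ := (Set.Iio r).indicator fun y => y ^ (-b)
  have hg : ((Metric.ball (0 : E3) r).indicator fun x => ‖x‖ ^ (-b)) = fun x => g ‖x‖ := by
    ext x
    simp [g, Set.indicator]
  let G : ℝ → ℝ := fun y => ‖g y‖ ^ (3:ℝ)
  have hG : ∀ y ∈ Set.Ioi (0:ℝ), y ^ (Module.finrank ℝ E3 - 1) • G y
      = (Set.Ioo 0 r).indicator (fun y => y ^ (2 - 3 * b)) y := by
    intro y hy
    have hy : 0 < y := hy
    by_cases hyr : y < r
    · have : (0:ℝ) ≤ y ^ (-b) := by positivity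
      simp only [G, g, Set.indicator, Set.mem_Iio, hyr, Set.mem_Ioo, hy, and_self, if_true,
        finrank_euclideanSpace, Fintype.card_fin, smul_eq_mul]
      rw [Real.norm_of_nonneg this, ← Real.rpow_mul hy.le, ← Real.rpow_natCast,
        ← Real.rpow_add hy]
      congr 1
      push_cast
      ring
    · simp [G, g, Set.indicator, hyr]
  have hint1 : IntegrableOn (fun y : ℝ => y ^ (2 - 3 * b)) (Set.Ioo 0 r) := by
    rw [← intervalIntegrable_iff_integrableOn_Ioo_of_le hr.le]
    exact intervalIntegral.intervalIntegrable_rpow' (by linarith)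
  have hint : Integrable (fun x : E3 => G ‖x‖) := by
    rw [integrable_fun_norm_addHaar (volume : Measure E3) (f := G)]
    rw [integrableOn_congr_fun hG measurableSet_Ioi]
    exact ((integrable_indicator_iff measurableSet_Ioo).2 hint1).integrableOn
  have hval : ∫ x : E3, G ‖x‖ = A0 * r ^ (3 - 3 * b) := by
    rw [integral_fun_norm_addHaar (volume : Measure E3) G, setIntegral_congr_fun measurableSet_Ioi hG,
      setIntegral_indicator measurableSet_Ioo]
    have : Set.Ioi (0:ℝ) ∩ Set.Ioo 0 r = Set.Ioo 0 r := by
      ext y; simp +contextual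
    rw [this, ← integral_Ioc_eq_integral_Ioo, ← intervalIntegral.integral_of_le hr.le,
      integral_rpow (Or.inl (by linarith))]
    have e : 2 - 3 * b + 1 = 3 - 3 * b := by ring
    rw [e, Real.zero_rpow (by linarith)]
    simp only [finrank_euclideanSpace, Fintype.card_fin, nsmul_eq_mul, smul_eq_mul, A0, V]
    push_cast
    ring
  have hmeas : AEStronglyMeasurable (fun x : E3 => g ‖x‖) := by
    rw [← hg]
    exact (Measurable.indicator (by fun_prop) measurableSet_ball).aestronglyMeasurable
  have hmem : MemLp (fun x : E3 => g ‖x‖) 3 := by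
    rw [← integrable_norm_rpow_iff hmeas (by norm_num) (by norm_num)]
    simpa [G] using hint
  rw [hg, hmem.eLpNorm_eq_integral_rpow_norm (by norm_num) (by norm_num)]
  apply ENNReal.ofReal_le_ofReal
  have : (∫ x : E3, ‖g ‖x‖‖ ^ (3 : ENNReal).toReal) = A0 * r ^ (3 - 3 * b) := by
    rw [← hval]; simp [G]
  rw [this, Real.mul_rpow hA0 (by positivity), ← Real.rpow_mul hr.le]
  have e : (3 - 3 * b) * (3 : ENNReal).toReal⁻¹ = 1 - b := by
    simp; ring
  have e2 : (3 : ENNReal).toReal⁻¹ = (1:ℝ)/3 := by simp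
  rw [e, e2]
  have : 0 < r ^ (1 - b) := by positivity
  nlinarith

lemma holder_32 : ENNReal.HolderTriple 3 2 (ENNReal.ofReal (6/5)) := by
  constructor
  rw [← ENNReal.ofReal_inv_of_pos (by norm_num), ← ENNReal.ofReal_ofNat 3,
    ← ENNReal.ofReal_ofNat 2, ← ENNReal.ofReal_inv_of_pos (by norm_num),
    ← ENNReal.ofReal_inv_of_pos (by norm_num), ← ENNReal.ofReal_add (by norm_num) (by norm_num)]
  norm_num

/-- **`L^{6/5}` bound for the nonlinearity under local mass smallness.** For
`0 < b < 1` there is `C = C(b) > 0` such that for every Schwartz `f`, every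
`R ≥ 1` and `ε > 0` with `∫_{|x| ≤ 2R} |f|² ≤ ε²`,
`‖ |x|^{−b}|f|³ ‖_{L^{6/5}} ≤ C ( ε^{1−b} ‖f‖_{H¹}^{2+b} + R^{−b} ‖f‖_{H¹}³ )`. -/
theorem L65_nonlinearity_bound (b : ℝ) (hb0 : 0 < b) (hb1 : b < 1) :
    ∃ C : ℝ, 0 < C ∧ ∀ f : SchwartzMap E3 ℂ, ∀ R : ℝ, 1 ≤ R → ∀ ε : ℝ, 0 < ε →
      (∫ x in Metric.closedBall (0 : E3) (2 * R), ‖f x‖ ^ 2) ≤ ε ^ 2 →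
      (∫ x : E3, (‖f x‖ ^ 3 * ‖x‖ ^ (-b)) ^ ((6 : ℝ)/5)) ^ ((5 : ℝ)/6)
        ≤ C * (ε ^ (1 - b)
              * ((∫ x : E3, (‖f x‖ ^ 2 + ∑ j : Fin 3, ‖pd j (⇑f) x‖ ^ 2))
                  ^ ((1 : ℝ)/2)) ^ (2 + b)
            + R ^ (-b)
              * ((∫ x : E3, (‖f x‖ ^ 2 + ∑ j : Fin 3, ‖pd j (⇑f) x‖ ^ 2))
                  ^ ((1 : ℝ)/2)) ^ (3 : ℕ)) := by
  obtain ⟨K, hK, hsob⟩ := sobolev_six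
  obtain ⟨A, hA, hw⟩ := weight_bound b hb0 hb1
  refine ⟨A * K ^ 3 + K ^ 2, by positivity, fun f R hR ε hε hloc => ?_⟩
  change _ ≤ (A * K ^ 3 + K ^ 2) * (ε ^ (1 - b) * (hNorm f) ^ (2 + b) + R ^ (-b) * (hNorm f) ^ 3)
  set H := hNorm f with hHdef
  have hH : 0 ≤ H := hNorm_nonneg f
  have hR0 : 0 < R := by linarith
  let p : ENNReal := ENNReal.ofReal (6/5)
  have hp1 : 1 ≤ p := by
    rw [← ENNReal.ofReal_one]; exact ENNReal.ofReal_le_ofReal (by norm_num)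
  have hp0 : p ≠ 0 := (zero_lt_one.trans_le hp1).ne'
  have hpt : p ≠ ⊤ := ENNReal.ofReal_ne_top
  have hpr : p.toReal = 6/5 := ENNReal.toReal_ofReal (by norm_num)
  have h32 : ENNReal.HolderTriple 3 2 p := holder_32
  have h23 : ENNReal.HolderTriple 2 3 p := h32.symm
  have hfc : Continuous (⇑f) := f.continuous
  have hf3 : eLpNorm (fun x => ‖f x‖ ^ (3:ℝ)) 2 volume ≤ ENNReal.ofReal ((K * H) ^ 3) := by
    rw [eLpNorm_norm_rpow _ (by norm_num)]
    have : (2 : ENNReal) * ENNReal.ofReal 3 = 6 := by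
      rw [ENNReal.ofReal_ofNat]; norm_num
    rw [this, ENNReal.ofReal_pow (by positivity)]
    have := hsob f
    rw [← ENNReal.rpow_natCast]
    exact ENNReal.rpow_le_rpow this (by norm_num)
  have hf2 : eLpNorm (fun x => ‖f x‖ ^ (2:ℝ)) 3 volume ≤ ENNReal.ofReal ((K * H) ^ 2) := by
    rw [eLpNorm_norm_rpow _ (by norm_num)]
    have : (3 : ENNReal) * ENNReal.ofReal 2 = 6 := by
      rw [ENNReal.ofReal_ofNat]; norm_num
    rw [this, ENNReal.ofReal_pow (by positivity)]
    have := hsob f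
    rw [← ENNReal.rpow_natCast]
    exact ENNReal.rpow_le_rpow this (by norm_num)
  have hf3m : AEStronglyMeasurable (fun x => ‖f x‖ ^ (3:ℝ)) (volume : Measure E3) :=
    (Continuous.rpow_const (by fun_prop) (by norm_num)).aestronglyMeasurable
  have hf2m : AEStronglyMeasurable (fun x => ‖f x‖ ^ (2:ℝ)) (volume : Measure E3) :=
    (Continuous.rpow_const (by fun_prop) (by norm_num)).aestronglyMeasurable
  let B : Set E3 := Metric.closedBall 0 (2 * R)
  have hlocm : MemLp (⇑f) 2 (volume.restrict B) := (f.memLp 2).restrict _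
  have hlocn : eLpNorm (B.indicator fun x => ‖f x‖) 2 volume ≤ ENNReal.ofReal ε := by
    rw [eLpNorm_indicator_eq_eLpNorm_restrict Metric.isClosed_closedBall.measurableSet,
      eLpNorm_norm, hlocm.eLpNorm_eq_integral_rpow_norm (by norm_num) (by norm_num)]
    apply ENNReal.ofReal_le_ofReal
    simp only [ENNReal.toReal_ofNat, Real.rpow_ofNat]
    calc _ ≤ (ε ^ 2) ^ ((2:ℝ)⁻¹) := by
          refine Real.rpow_le_rpow (integral_nonneg fun x => by positivity) hloc (by norm_num)
      _ = ε := by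
          rw [← Real.rpow_natCast, ← Real.rpow_mul hε.le]; norm_num
  have hBm : AEStronglyMeasurable (B.indicator fun x => ‖f x‖) volume :=
    (hfc.norm.aestronglyMeasurable).indicator Metric.isClosed_closedBall.measurableSet
  -- the main estimate at a general radius
  have key : ∀ r : ℝ, 0 < r →
      (∫ x : E3, (‖f x‖ ^ 3 * ‖x‖ ^ (-b)) ^ ((6 : ℝ)/5)) ^ ((5 : ℝ)/6) ≤
        A * r ^ (1 - b) * (K * H) ^ 3 + r ^ (-b) * (ε * (K * H) ^ 2)
          + R ^ (-b) * (H * (K * H) ^ 2) := by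
    intro r hr
    let w : E3 → ℝ := (Metric.ball (0 : E3) r).indicator fun x => ‖x‖ ^ (-b)
    have hwm : AEStronglyMeasurable w volume :=
      (Measurable.indicator (by fun_prop) measurableSet_ball).aestronglyMeasurable
    let g : E3 → ℝ := fun x => ‖f x‖ ^ 3 * ‖x‖ ^ (-b)
    have hgm : AEStronglyMeasurable g volume := by
      have : Measurable (⇑f) := hfc.measurable
      exact Measurable.aestronglyMeasurable (by fun_prop)
    let g1 : E3 → ℝ := w • fun x => ‖f x‖ ^ (3:ℝ)
    let g2 : E3 → ℝ := (B.indicator fun x => ‖f x‖) • fun x => ‖f x‖ ^ (2:ℝ)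
    let g3 : E3 → ℝ := (fun x => ‖f x‖) • fun x => ‖f x‖ ^ (2:ℝ)
    have b1 : eLpNorm g1 p volume ≤ ENNReal.ofReal (A * r ^ (1 - b) * (K * H) ^ 3) := by
      refine (eLpNorm_smul_le_mul_eLpNorm (p := 3) (q := 2) hf3m hwm).trans ?_
      rw [ENNReal.ofReal_mul (by positivity)]
      exact mul_le_mul' (hw r hr) hf3
    have b2 : eLpNorm g2 p volume ≤ ENNReal.ofReal (ε * (K * H) ^ 2) := by
      refine (eLpNorm_smul_le_mul_eLpNorm (p := 2) (q := 3) hf2m hBm).trans ?_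
      rw [ENNReal.ofReal_mul (by positivity)]
      exact mul_le_mul' hlocn hf2
    have b3 : eLpNorm g3 p volume ≤ ENNReal.ofReal (H * (K * H) ^ 2) := by
      refine (eLpNorm_smul_le_mul_eLpNorm (p := 2) (q := 3) hf2m
        hfc.norm.aestronglyMeasurable).trans ?_
      rw [ENNReal.ofReal_mul (by positivity)]
      refine mul_le_mul' ?_ hf2
      rw [eLpNorm_norm]; exact eLpNorm_two_le f
    have m1 : AEStronglyMeasurable g1 volume := hwm.smul hf3m
    have m2 : AEStronglyMeasurable g2 volume := hBm.smul hf2m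
    have m3 : AEStronglyMeasurable g3 volume := hfc.norm.aestronglyMeasurable.smul hf2m
    have hpt1 : ∀ x, ‖g x‖ ≤ (g1 + r ^ (-b) • g2 + R ^ (-b) • g3) x := by
      intro x
      have hn : 0 ≤ ‖f x‖ := norm_nonneg _
      have hrb : 0 < r ^ (-b) := by positivity
      have hRb : 0 < R ^ (-b) := by positivity
      have hxb : 0 ≤ ‖x‖ ^ (-b) := by positivity
      have hgx : ‖g x‖ = ‖f x‖ ^ 3 * ‖x‖ ^ (-b) := Real.norm_of_nonneg (by positivity)
      rw [hgx]
      have h1 : 0 ≤ g1 x := by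
        simp only [g1, w, Pi.mul_apply, smul_eq_mul]
        exact mul_nonneg (Set.indicator_nonneg (fun y _ => by positivity) _) (by positivity)
      have h2 : 0 ≤ g2 x := by
        simp only [g2, Pi.mul_apply, smul_eq_mul]
        exact mul_nonneg (Set.indicator_nonneg (fun y _ => by positivity) _) (by positivity)
      have h3e : g3 x = ‖f x‖ ^ 3 := by
        simp only [g3, Pi.mul_apply, smul_eq_mul, Real.rpow_ofNat]; ring
      have h3 : 0 ≤ g3 x := by rw [h3e]; positivity
      simp only [Pi.add_apply, Pi.smul_apply, smul_eq_mul]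
      have h2' := mul_nonneg hrb.le h2
      have h3' := mul_nonneg hRb.le h3
      by_cases c1 : x ∈ Metric.ball (0 : E3) r
      · have : g1 x = ‖f x‖ ^ 3 * ‖x‖ ^ (-b) := by
          simp only [g1, w, Pi.mul_apply, smul_eq_mul, Set.indicator_of_mem c1, Real.rpow_ofNat]
          ring
        linarith
      · have hxr : r ≤ ‖x‖ := by simpa using c1
        by_cases c2 : x ∈ B
        · have : g2 x = ‖f x‖ ^ 3 := by
            simp only [g2, Pi.mul_apply, smul_eq_mul, Set.indicator_of_mem c2, Real.rpow_ofNat]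
            ring
          have h5 : ‖x‖ ^ (-b) ≤ r ^ (-b) :=
            Real.rpow_le_rpow_of_nonpos hr hxr (by linarith)
          have h6 : ‖f x‖ ^ 3 * ‖x‖ ^ (-b) ≤ ‖f x‖ ^ 3 * r ^ (-b) := by gcongr
          rw [this]
          linarith
        · have hxR : 2 * R < ‖x‖ := by simpa [B] using c2
          have h5 : ‖x‖ ^ (-b) ≤ R ^ (-b) :=
            Real.rpow_le_rpow_of_nonpos hR0 (by linarith) (by linarith)
          have h6 : ‖f x‖ ^ 3 * ‖x‖ ^ (-b) ≤ ‖f x‖ ^ 3 * R ^ (-b) := by gcongr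
          rw [h3e]
          linarith
    have hsum : eLpNorm g p volume ≤ ENNReal.ofReal (A * r ^ (1 - b) * (K * H) ^ 3
        + r ^ (-b) * (ε * (K * H) ^ 2) + R ^ (-b) * (H * (K * H) ^ 2)) := by
      refine (eLpNorm_mono_real hpt1).trans ?_
      refine (eLpNorm_add_le (m1.add (m2.const_smul _)) (m3.const_smul _) hp1).trans ?_
      rw [ENNReal.ofReal_add (by positivity) (by positivity)]
      refine add_le_add ?_ ?_
      · refine (eLpNorm_add_le m1 (m2.const_smul _) hp1).trans ?_
        rw [ENNReal.ofReal_add (by positivity) (by positivity)]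
        refine add_le_add b1 ?_
        rw [eLpNorm_const_smul, Real.enorm_of_nonneg (by positivity),
          ENNReal.ofReal_mul (by positivity)]
        exact mul_le_mul' le_rfl b2
      · rw [eLpNorm_const_smul, Real.enorm_of_nonneg (by positivity),
          ENNReal.ofReal_mul (p := R ^ (-b)) (by positivity)]
        exact mul_le_mul' le_rfl b3
    have hgmem : MemLp g p := ⟨hgm, hsum.trans_lt ENNReal.ofReal_lt_top⟩
    rw [hgmem.eLpNorm_eq_integral_rpow_norm hp0 hpt,
      ENNReal.ofReal_le_ofReal_iff (by positivity), hpr] at hsum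
    convert hsum using 2
    · refine integral_congr_ae (Eventually.of_forall fun x => ?_)
      have : ‖g x‖ = ‖f x‖ ^ 3 * ‖x‖ ^ (-b) := Real.norm_of_nonneg (by positivity)
      simp only [this]
    · norm_num
  rcases hH.eq_or_lt with h0 | hpos
  · have := key 1 one_pos
    rw [← h0] at this ⊢
    rw [Real.zero_rpow (by linarith)]
    simpa using this
  · have hk := key (ε / H) (by positivity)
    have e1 : (ε / H) ^ (1 - b) * H ^ 3 = ε ^ (1 - b) * H ^ (2 + b) := by
      rw [Real.div_rpow hε.le hH, div_mul_eq_mul_div, mul_div_assoc, ← Real.rpow_natCast,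
        ← Real.rpow_sub hpos]
      congr 2
      push_cast; ring
    have e2 : (ε / H) ^ (-b) * (ε * H ^ 2) = ε ^ (1 - b) * H ^ (2 + b) := by
      rw [← e1, show (1 - b) = -b + 1 by ring, Real.rpow_add_one (by positivity)]
      field_simp
    have e3 : A * (ε / H) ^ (1 - b) * (K * H) ^ 3 + (ε / H) ^ (-b) * (ε * (K * H) ^ 2)
        + R ^ (-b) * (H * (K * H) ^ 2)
        = A * K ^ 3 * ((ε / H) ^ (1 - b) * H ^ 3) + K ^ 2 * ((ε / H) ^ (-b) * (ε * H ^ 2))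
          + K ^ 2 * (R ^ (-b) * H ^ 3) := by ring
    rw [e3, e1, e2] at hk
    have : 0 ≤ A * K ^ 3 * (R ^ (-b) * H ^ 3) := by positivity
    linarith
end
end

section
/- (Interaction Morawetz estimate) Let a > 0, 0 < b < 1, λ = 1, and let u be a smooth Schwartz solution of (INLS) with E := sup_{t∈ℝ} ‖u(t)‖_{H¹(ℝ³)} < ∞. Then there is a constant C > 0, depending only on a and b, such that ∫_ℝ ∫_{ℝ³} |u(t,x)|⁴ dx dt ≤ C E⁴. -/
open MeasureTheory Real Filter
open scoped BigOperators Topology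

noncomputable section

/-! ### Pointwise partial derivatives, decaying and bounded functions -/

/-- The second function is the partial derivative of the first one everywhere. -/
def PD (j : Fin 3) (f f' : E3 → ℝ) : Prop :=
  ∀ x, HasDerivAt (fun s : ℝ => f (x + s • e3 j)) (f' x) 0

lemma PD.add {j : Fin 3} {f f' g g' : E3 → ℝ} (hf : PD j f f') (hg : PD j g g') :
    PD j (fun x => f x + g x) (fun x => f' x + g' x) := fun x => (hf x).fun_add (hg x)

lemma PD.sub {j : Fin 3} {f f' g g' : E3 → ℝ} (hf : PD j f f') (hg : PD j g g') :
    PD j (fun x => f x - g x) (fun x => f' x - g' x) := fun x => (hf x).fun_sub (hg x)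

lemma PD.mul {j : Fin 3} {f f' g g' : E3 → ℝ} (hf : PD j f f') (hg : PD j g g') :
    PD j (fun x => f x * g x) (fun x => f' x * g x + f x * g' x) := fun x => by
  have := (hf x).fun_mul (hg x)
  simpa using this

lemma PD.const_mul {j : Fin 3} {f f' : E3 → ℝ} (c : ℝ) (hf : PD j f f') :
    PD j (fun x => c * f x) (fun x => c * f' x) := fun x => (hf x).const_mul c

lemma PD.sum {j : Fin 3} {f f' : Fin 3 → E3 → ℝ} (hf : ∀ k, PD j (f k) (f' k)) :
    PD j (fun x => ∑ k, f k x) (fun x => ∑ k, f' k x) := fun x =>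
  HasDerivAt.fun_sum fun k _ => hf k x

lemma PD.congr {j : Fin 3} {f f' f'' : E3 → ℝ} (hf : PD j f f') (h : ∀ x, f' x = f'' x) :
    PD j f f'' := fun x => h x ▸ hf x

/-- The decay profile. -/
def dk (x : E3) : ℝ := (1 + ‖x‖) ^ (-4 : ℝ)

lemma dk_pos (x : E3) : 0 < dk x := by unfold dk; positivity
lemma dk_nonneg (x : E3) : 0 ≤ dk x := (dk_pos x).le

lemma dk_le_one (x : E3) : dk x ≤ 1 := by
  unfold dk
  exact Real.rpow_le_one_of_one_le_of_nonpos (by linarith [norm_nonneg x]) (by norm_num)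

lemma dk_integrable : Integrable dk := by
  have : Integrable (fun x : E3 => (1 + ‖x‖) ^ (-4 : ℝ)) :=
    integrable_one_add_norm (by simp; norm_num)
  exact this

/-- Measurable with decay. -/
def Dec (f : E3 → ℝ) : Prop := Measurable f ∧ ∃ C : ℝ, 0 ≤ C ∧ ∀ x, |f x| ≤ C * dk x
/-- Measurable and bounded. -/
def Bd (f : E3 → ℝ) : Prop := Measurable f ∧ ∃ C : ℝ, 0 ≤ C ∧ ∀ x, |f x| ≤ C

lemma Dec.bd {f : E3 → ℝ} (h : Dec f) : Bd f := by
  obtain ⟨m, C, hC, h⟩ := h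
  exact ⟨m, C, hC, fun x => (h x).trans (mul_le_of_le_one_right hC (dk_le_one x))⟩

lemma Dec.integrable {f : E3 → ℝ} (h : Dec f) : Integrable f := by
  obtain ⟨m, C, hC, h⟩ := h
  exact (dk_integrable.const_mul C).mono' m.aestronglyMeasurable
    (Eventually.of_forall fun x => by simpa using h x)

lemma Dec.add {f g : E3 → ℝ} (hf : Dec f) (hg : Dec g) : Dec (fun x => f x + g x) := by
  obtain ⟨m, C, hC, h⟩ := hf
  obtain ⟨m', C', hC', h'⟩ := hg
  refine ⟨m.add m', C + C', by positivity, fun x => (abs_add_le _ _).trans ?_⟩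
  linarith [h x, h' x]

lemma Dec.mulBd {f g : E3 → ℝ} (hf : Dec f) (hg : Bd g) : Dec (fun x => f x * g x) := by
  obtain ⟨m, C, hC, h⟩ := hf
  obtain ⟨m', C', hC', h'⟩ := hg
  refine ⟨m.mul m', C * C', by positivity, fun x => ?_⟩
  rw [abs_mul]
  calc |f x| * |g x| ≤ (C * dk x) * C' :=
        mul_le_mul (h x) (h' x) (abs_nonneg _) (mul_nonneg hC (dk_nonneg x))
    _ = _ := by ring

lemma Dec.bdMul {f g : E3 → ℝ} (hf : Bd f) (hg : Dec g) : Dec (fun x => f x * g x) := by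
  have := hg.mulBd hf
  simpa only [mul_comm] using this

lemma Dec.mul {f g : E3 → ℝ} (hf : Dec f) (hg : Dec g) : Dec (fun x => f x * g x) :=
  hf.mulBd hg.bd

lemma Bd.const (c : ℝ) : Bd (fun _ => c) := ⟨measurable_const, |c|, abs_nonneg _, fun _ => le_rfl⟩

lemma Dec.const_mul {f : E3 → ℝ} (c : ℝ) (hf : Dec f) : Dec (fun x => c * f x) :=
  Dec.bdMul (Bd.const c) hf

lemma Dec.neg {f : E3 → ℝ} (hf : Dec f) : Dec (fun x => - f x) := by
  simpa using hf.const_mul (-1)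

lemma Dec.sub {f g : E3 → ℝ} (hf : Dec f) (hg : Dec g) : Dec (fun x => f x - g x) := by
  simpa only [sub_eq_add_neg] using hf.add hg.neg

lemma Dec.zero : Dec (fun _ => 0) := ⟨measurable_const, 0, le_rfl, fun x => by simp⟩

lemma Dec.sum {f : Fin 3 → E3 → ℝ} (hf : ∀ k, Dec (f k)) : Dec (fun x => ∑ k, f k x) := by
  simp only [Fin.sum_univ_three]
  exact ((hf 0).add (hf 1)).add (hf 2)

lemma Dec.sq {f : E3 → ℝ} (hf : Dec f) : Dec (fun x => f x ^ 2) := by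
  simpa only [pow_two] using hf.mul hf

lemma Bd.mul {f g : E3 → ℝ} (hf : Bd f) (hg : Bd g) : Bd (fun x => f x * g x) := by
  obtain ⟨m, C, hC, h⟩ := hf
  obtain ⟨m', C', hC', h'⟩ := hg
  refine ⟨m.mul m', C * C', by positivity, fun x => ?_⟩
  rw [abs_mul]
  exact mul_le_mul (h x) (h' x) (abs_nonneg _) hC

lemma Bd.add {f g : E3 → ℝ} (hf : Bd f) (hg : Bd g) : Bd (fun x => f x + g x) := by
  obtain ⟨m, C, hC, h⟩ := hf
  obtain ⟨m', C', hC', h'⟩ := hg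
  refine ⟨m.add m', C + C', by positivity, fun x => (abs_add_le _ _).trans ?_⟩
  linarith [h x, h' x]

lemma Bd.sum {f : Fin 3 → E3 → ℝ} (hf : ∀ k, Bd (f k)) : Bd (fun x => ∑ k, f k x) := by
  simp only [Fin.sum_univ_three]
  exact ((hf 0).add (hf 1)).add (hf 2)

/-- Divergence lemma. -/
lemma integral_PD {j : Fin 3} {f f' : E3 → ℝ} (h : PD j f f') (hf : Dec f) (hf' : Dec f') :
    ∫ x, f' x = 0 := by
  have := integral_bilinear_hasLineDerivAt_right_eq_neg_left_of_integrable
    (μ := (volume : Measure E3)) (f := fun _ : E3 => (1 : ℝ)) (f' := fun _ => 0) (g := f) (g' := f')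
    (v := e3 j) (B := ContinuousLinearMap.mul ℝ ℝ) (by simp) (by simpa using hf'.integrable)
    (by simpa using hf.integrable)
    (fun x _ => by
      show HasDerivAt _ _ _
      simpa using hasDerivAt_const (0 : ℝ) (1 : ℝ)) (fun x _ => h x)
  simpa using this

lemma integral_div {f f' : Fin 3 → E3 → ℝ} (h : ∀ j, PD j (f j) (f' j)) (hf : ∀ j, Dec (f j))
    (hf' : ∀ j, Dec (f' j)) : ∫ x, ∑ j, f' j x = 0 := by
  rw [integral_finsetSum _ fun j _ => (hf' j).integrable]
  exact Finset.sum_eq_zero fun j _ => integral_PD (h j) (hf j) (hf' j)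

/-- A decaying field with two derivatives. -/
structure Fld (f : E3 → ℝ) (f1 : Fin 3 → E3 → ℝ) (f2 : Fin 3 → Fin 3 → E3 → ℝ) : Prop where
  d0 : Dec f
  d1 : ∀ j, Dec (f1 j)
  d2 : ∀ j k, Dec (f2 j k)
  h1 : ∀ j, PD j f (f1 j)
  h2 : ∀ j k, PD j (f1 k) (f2 j k)
  symm : ∀ j k x, f2 j k x = f2 k j x

/-- A weight with four derivatives (`w1` gradient, `w2` Hessian, `l1` gradient of the Laplacian,
`l2` the terms of the bilaplacian). -/
structure Wt (w1 : Fin 3 → E3 → ℝ) (w2 : Fin 3 → Fin 3 → E3 → ℝ) (l1 l2 : Fin 3 → E3 → ℝ) :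
    Prop where
  b1 : ∀ j, Bd (w1 j)
  b2 : ∀ j k, Bd (w2 j k)
  b3 : ∀ j, Bd (l1 j)
  b4 : ∀ j, Bd (l2 j)
  h1 : ∀ j k, PD j (w1 k) (w2 j k)
  h3 : ∀ j, PD j (fun x => ∑ k, w2 k k x) (l1 j)
  h4 : ∀ j, PD j (l1 j) (l2 j)

lemma lemA1 {f : E3 → ℝ} {f1 : Fin 3 → E3 → ℝ} {f2 : Fin 3 → Fin 3 → E3 → ℝ}
    {w1 : Fin 3 → E3 → ℝ} {w2 : Fin 3 → Fin 3 → E3 → ℝ} {l1 l2 : Fin 3 → E3 → ℝ}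
    (F : Fld f f1 f2) (W : Wt w1 w2 l1 l2) :
    ∫ x, (2 * (∑ k, w1 k x * f1 k x) + (∑ k, w2 k k x) * f x) * (∑ j, f2 j j x)
      = ∫ x, (-2 * (∑ j, ∑ k, w2 j k x * (f1 j x * f1 k x)) + 1 / 2 * (∑ j, l2 j x) * f x ^ 2) := by
  have hd0 := F.d0
  have hd1 := F.d1
  have hd2 := F.d2
  have hb1 := W.b1
  have hb2 := W.b2
  have hb3 := W.b3
  have hb4 := W.b4
  have hL : Bd (fun x => ∑ k, w2 k k x) := Bd.sum fun k => hb2 k k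
  have hPD : ∀ j, PD j _ _ := fun j =>
    (((((PD.sum fun k => (W.h1 j k).mul (F.h2 j k)).mul (F.h2 j j)).const_mul 2).sub
      ((W.h1 j j).mul (PD.sum fun k => (F.h2 j k).mul (F.h2 j k)))).add
      ((W.h3 j).mul ((F.h1 j).mul (F.h2 j j)))).sub
      (((W.h4 j).mul ((F.h1 j).mul (F.h1 j))).const_mul (1 / 2))
  have key := integral_div hPD
    (fun j => (((((Dec.sum fun k => Dec.bdMul (hb1 k) (hd1 k)).mul (hd1 j)).const_mul 2).sub
      (Dec.bdMul (hb1 j) (Dec.sum fun k => (hd1 k).mul (hd1 k)))).add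
      (Dec.bdMul hL ((hd0).mul (hd1 j)))).sub
      ((Dec.bdMul (hb3 j) (hd0.mul hd0)).const_mul (1 / 2)))
    (fun j => by
      refine Dec.sub (Dec.add (Dec.sub (Dec.const_mul _ (Dec.add (Dec.mul (Dec.sum fun k =>
        Dec.add (Dec.bdMul (hb2 j k) (hd1 k)) (Dec.bdMul (hb1 k) (hd2 j k))) (hd1 j)) (Dec.mul
          (Dec.sum fun k => Dec.bdMul (hb1 k) (hd1 k)) (hd2 j j)))) (Dec.add (Dec.bdMul (hb2 j j)
          (Dec.sum fun k => (hd1 k).mul (hd1 k)))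
          (Dec.bdMul (hb1 j) (Dec.sum fun k => Dec.add ((hd2 j k).mul (hd1 k))
          ((hd1 k).mul (hd2 j k))))))
        (Dec.add (Dec.bdMul (hb3 j) (hd0.mul (hd1 j))) (Dec.bdMul hL (Dec.add ((hd1 j).mul (hd1 j))
          (hd0.mul (hd2 j j))))))
        (Dec.const_mul _ (Dec.add (Dec.bdMul (hb4 j) (hd0.mul hd0)) (Dec.bdMul (hb3 j)
          (Dec.add ((hd1 j).mul hd0) (hd0.mul (hd1 j)))))))
  have hR : Dec (fun x => -2 * (∑ j, ∑ k, w2 j k x * (f1 j x * f1 k x))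
      + 1 / 2 * (∑ j, l2 j x) * f x ^ 2) :=
    Dec.add (Dec.const_mul _ (Dec.sum fun j => Dec.sum fun k =>
      Dec.bdMul (hb2 j k) ((hd1 j).mul (hd1 k))))
      (Dec.bdMul (Bd.mul (Bd.const _) (Bd.sum hb4)) hd0.sq)
  have hLft : Dec (fun x => (2 * (∑ k, w1 k x * f1 k x) + (∑ k, w2 k k x) * f x) *
      (∑ j, f2 j j x)) :=
    Dec.mul (Dec.add (Dec.const_mul _ (Dec.sum fun k => Dec.bdMul (hb1 k) (hd1 k)))
      (Dec.bdMul hL hd0)) (Dec.sum fun j => hd2 j j)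
  rw [← sub_eq_zero, ← integral_sub hLft.integrable hR.integrable, ← key]
  congr 1
  ext x
  simp only [Fin.sum_univ_three]
  rw [F.symm 1 0, F.symm 2 0, F.symm 2 1]
  ring

/-! ### Singular coefficients -/

lemma e3_apply (j k : Fin 3) : e3 j k = if k = j then 1 else 0 := by
  simp [e3]

lemma abs_coord_le (x : E3) (k : Fin 3) : |x k| ≤ ‖x‖ := by
  simpa using PiLp.norm_apply_le x k

lemma normsq_eq (x : E3) : ‖x‖ ^ 2 = ∑ k, x k ^ 2 := by
  rw [EuclideanSpace.norm_sq_eq]; simp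

lemma hasDerivAt_coord (x : E3) (j k : Fin 3) :
    HasDerivAt (fun s : ℝ => (x + s • e3 j) k) (if k = j then 1 else 0) 0 := by
  have : (fun s : ℝ => (x + s • e3 j) k) = fun s => x k + s * (if k = j then 1 else 0) := by
    ext s; simp [e3_apply]
  rw [this]
  simpa using ((hasDerivAt_id (0 : ℝ)).mul_const (if k = j then (1 : ℝ) else 0)).const_add (x k)

lemma hasDerivAt_normsq (x : E3) (j : Fin 3) :
    HasDerivAt (fun s : ℝ => ‖x + s • e3 j‖ ^ 2) (2 * x j) 0 := by
  simp only [normsq_eq]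
  have := HasDerivAt.fun_sum (u := Finset.univ) fun k _ => (hasDerivAt_coord x j k).fun_pow 2
  refine this.congr_deriv ?_
  simp

lemma hasDerivAt_norm (x : E3) (hx : x ≠ 0) (j : Fin 3) :
    HasDerivAt (fun s : ℝ => ‖x + s • e3 j‖) (x j / ‖x‖) 0 := by
  have h := (hasDerivAt_normsq x j).sqrt (by simpa using hx)
  simp only [norm_nonneg, Real.sqrt_sq] at h
  refine h.congr_deriv ?_
  simp
  field_simp

/-- Strong decay: vanishing to fourth order at the origin. -/
def SD (h : E3 → ℝ) : Prop := Dec h ∧ ∃ C : ℝ, 0 ≤ C ∧ ∀ x, |h x| ≤ C * ‖x‖ ^ 4 * dk x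

/-- Singular coefficients. -/
def Sing (q : E3 → ℝ) : Prop :=
  Measurable q ∧ ∃ c : ℝ, 0 ≤ c ∧ ∀ x, x ≠ 0 → |q x| ≤ c * (1 + (‖x‖ ^ 4)⁻¹)

lemma SD.mulBd {h q : E3 → ℝ} (hh : SD h) (hq : Bd q) : SD (fun x => h x * q x) := by
  refine ⟨hh.1.mulBd hq, ?_⟩
  obtain ⟨-, C, hC, hh⟩ := hh
  obtain ⟨-, D, hD, hq⟩ := hq
  refine ⟨C * D, by positivity, fun x => ?_⟩
  rw [abs_mul]
  calc |h x| * |q x| ≤ (C * ‖x‖ ^ 4 * dk x) * D :=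
        mul_le_mul (hh x) (hq x) (abs_nonneg _) (by have := dk_nonneg x; positivity)
    _ = _ := by ring

lemma Sing.mulSD {q h : E3 → ℝ} (hq : Sing q) (hh : SD h) : Dec (fun x => q x * h x) := by
  obtain ⟨mq, c, hc, hq⟩ := hq
  obtain ⟨⟨mh, C, hC, hh⟩, C', hC', hh'⟩ := hh
  refine ⟨mq.mul mh, c * (C + C'), by positivity, fun x => ?_⟩
  have hd := dk_nonneg x
  by_cases hx : x = 0
  · have : h x = 0 := by
      have := hh' x
      simp [hx] at this ⊢
      exact this
    show |q x * h x| ≤ _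
    rw [this]; simp; positivity
  · show |q x * h x| ≤ _
    rw [abs_mul]
    have hn : 0 < ‖x‖ := norm_pos_iff.mpr hx
    calc |q x| * |h x| ≤ (c * (1 + (‖x‖ ^ 4)⁻¹)) * |h x| := by gcongr; exact hq x hx
      _ = c * (|h x| + (‖x‖ ^ 4)⁻¹ * |h x|) := by ring
      _ ≤ c * (C * dk x + (‖x‖ ^ 4)⁻¹ * (C' * ‖x‖ ^ 4 * dk x)) := by
          gcongr
          · exact hh x
          · exact hh' x
      _ = _ := by field_simp

lemma rpow_sing {r q : ℝ} (hr : 0 < r) (hq0 : 0 ≤ q) (hq : q ≤ 4) :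
    r ^ (-q) ≤ 1 + (r ^ 4)⁻¹ := by
  have h4 : 0 < (r ^ 4)⁻¹ := by positivity
  rcases le_total 1 r with h | h
  · have := Real.rpow_le_one_of_one_le_of_nonpos h (by linarith : -q ≤ 0)
    linarith
  · have := Real.rpow_le_rpow_of_exponent_ge hr h (by linarith : -4 ≤ -q)
    rw [Real.rpow_neg hr.le 4] at this
    have e : r ^ (4 : ℝ) = r ^ 4 := by exact_mod_cast Real.rpow_natCast r 4
    rw [e] at this
    linarith

lemma Sing.rpow {q : ℝ} (hq0 : 0 ≤ q) (hq : q ≤ 4) : Sing (fun x => ‖x‖ ^ (-q)) := by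
  refine ⟨measurable_norm.pow_const _, 1, zero_le_one, fun x hx => ?_⟩
  rw [abs_of_nonneg (by positivity), one_mul]
  exact rpow_sing (norm_pos_iff.mpr hx) hq0 hq

lemma Sing.of_le {q q' : E3 → ℝ} (c : ℝ) (hc : 0 ≤ c) (hq : Sing q') (m : Measurable q)
    (h : ∀ x, x ≠ 0 → |q x| ≤ c * |q' x|) : Sing q := by
  obtain ⟨-, d, hd, hq⟩ := hq
  refine ⟨m, c * d, by positivity, fun x hx => (h x hx).trans ?_⟩
  rw [mul_assoc]
  gcongr
  exact hq x hx

lemma rpow_neg_nat (x : E3) (n : ℕ) : ‖x‖ ^ (-(n : ℝ)) = (‖x‖ ^ n)⁻¹ := by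
  rw [Real.rpow_neg (norm_nonneg x), Real.rpow_natCast]

lemma Sing.inv_pow (n : ℕ) (hn : n ≤ 4) : Sing (fun x => (‖x‖ ^ n)⁻¹) := by
  have := Sing.rpow (q := n) (by positivity) (by exact_mod_cast hn)
  simpa only [rpow_neg_nat] using this

lemma measurable_coord (k : Fin 3) : Measurable (fun x : E3 => x k) :=
  by fun_prop

/-- The force density. -/
def kap (a b : ℝ) (x : E3) (r : ℝ) : ℝ :=
  2 * a * ((‖x‖ ^ 4)⁻¹ * r) + b / 2 * (‖x‖ ^ (-(b + 2)) * (r * r))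

section
variable {a b A : ℝ} {f g : E3 → ℝ} {f1 g1 : Fin 3 → E3 → ℝ} {f2 g2 : Fin 3 → Fin 3 → E3 → ℝ}
  {w1 : Fin 3 → E3 → ℝ} {w2 : Fin 3 → Fin 3 → E3 → ℝ} {l1 l2 : Fin 3 → E3 → ℝ}

lemma SD_sq (F : Fld f f1 f2) (hA : 0 ≤ A) (hf : ∀ x, |f x| ≤ A * ‖x‖ ^ 2 * dk x) :
    SD (fun x => f x ^ 2) := by
  refine ⟨F.d0.sq, A ^ 2, by positivity, fun x => ?_⟩
  show |f x ^ 2| ≤ _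
  rw [abs_of_nonneg (sq_nonneg _), ← sq_abs (f x)]
  have hd := dk_nonneg x
  calc |f x| ^ 2 ≤ (A * ‖x‖ ^ 2 * dk x) ^ 2 := by gcongr; exact hf x
    _ = A ^ 2 * ‖x‖ ^ 4 * (dk x * dk x) := by ring
    _ ≤ A ^ 2 * ‖x‖ ^ 4 * (dk x * 1) := by gcongr; exact dk_le_one x
    _ = _ := by ring

lemma SD.add {h q : E3 → ℝ} (hh : SD h) (hq : SD q) : SD (fun x => h x + q x) := by
  refine ⟨hh.1.add hq.1, ?_⟩
  obtain ⟨-, C, hC, hh⟩ := hh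
  obtain ⟨-, D, hD, hq⟩ := hq
  refine ⟨C + D, by positivity, fun x => (abs_add_le _ _).trans ?_⟩
  linarith [hh x, hq x]

lemma SD_rho (F : Fld f f1 f2) (G : Fld g g1 g2) (hA : 0 ≤ A)
    (hf : ∀ x, |f x| ≤ A * ‖x‖ ^ 2 * dk x) (hg : ∀ x, |g x| ≤ A * ‖x‖ ^ 2 * dk x) :
    SD (fun x => f x ^ 2 + g x ^ 2) := (SD_sq F hA hf).add (SD_sq G hA hg)

lemma SD_rho2 {r : E3 → ℝ} (h : SD r) : SD (fun x => r x * r x) := h.mulBd h.1.bd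

lemma Dec_kap {r : E3 → ℝ} (h : SD r) (hb0 : 0 < b) (hb1 : b < 1) :
    Dec (fun x => kap a b x (r x)) := by
  unfold kap
  exact (Dec.const_mul _ ((Sing.inv_pow 4 le_rfl).mulSD h)).add
    (Dec.const_mul _ ((Sing.rpow (by linarith) (by linarith)).mulSD (SD_rho2 h)))

lemma Dec_Vf (F : Fld f f1 f2) (hA : 0 ≤ A) (hf : ∀ x, |f x| ≤ A * ‖x‖ ^ 2 * dk x) :
    Dec (fun x => (‖x‖ ^ 2)⁻¹ * f x) := by
  refine ⟨(by fun_prop : Measurable fun x : E3 => (‖x‖ ^ 2)⁻¹).mul F.d0.1, A, hA, fun x => ?_⟩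
  have hd := dk_nonneg x
  by_cases hx : x = 0
  · subst hx; simpa using mul_nonneg hA (dk_nonneg 0)
  have hn : 0 < ‖x‖ := norm_pos_iff.mpr hx
  show |(‖x‖ ^ 2)⁻¹ * f x| ≤ _
  rw [abs_mul, abs_of_nonneg (by positivity)]
  calc (‖x‖ ^ 2)⁻¹ * |f x| ≤ (‖x‖ ^ 2)⁻¹ * (A * ‖x‖ ^ 2 * dk x) := by gcongr; exact hf x
    _ = _ := by field_simp

/-- The potential (pressure) density. -/
def pot (a b : ℝ) (x : E3) (r : ℝ) : ℝ :=
  a * ((‖x‖ ^ 2)⁻¹ * r) + 1 / 2 * (‖x‖ ^ (-b) * (r * r))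

lemma Dec_pot {r : E3 → ℝ} (h : SD r) (hb0 : 0 < b) (hb1 : b < 1) :
    Dec (fun x => pot a b x (r x)) := by
  unfold pot
  exact (Dec.const_mul _ ((Sing.inv_pow 2 (by norm_num)).mulSD h)).add
    (Dec.const_mul _ ((Sing.rpow (by linarith) (by linarith)).mulSD (SD_rho2 h)))

lemma Dec_kapx {r : E3 → ℝ} (h : SD r) (hb0 : 0 < b) (hb1 : b < 1) (k : Fin 3) :
    Dec (fun x => x k * kap a b x (r x)) := by
  have h1 : Sing (fun x => x k * (‖x‖ ^ 4)⁻¹) := by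
    refine Sing.of_le 1 zero_le_one (Sing.inv_pow 3 (by norm_num))
      ((measurable_coord k).mul (by fun_prop)) fun x hx => ?_
    have hn : 0 < ‖x‖ := norm_pos_iff.mpr hx
    rw [abs_mul, one_mul, abs_of_nonneg (by positivity : 0 ≤ (‖x‖ ^ 4)⁻¹),
      abs_of_nonneg (by positivity : 0 ≤ (‖x‖ ^ 3)⁻¹)]
    calc |x k| * (‖x‖ ^ 4)⁻¹ ≤ ‖x‖ * (‖x‖ ^ 4)⁻¹ := by gcongr; exact abs_coord_le x k
      _ = _ := by field_simp
  have h2 : Sing (fun x => x k * ‖x‖ ^ (-(b + 2))) := by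
    refine Sing.of_le 1 zero_le_one (Sing.rpow (q := b + 1) (by linarith) (by linarith))
      ((measurable_coord k).mul (measurable_norm.pow_const _)) fun x hx => ?_
    have hn : 0 < ‖x‖ := norm_pos_iff.mpr hx
    rw [abs_mul, one_mul, abs_of_nonneg (by positivity : 0 ≤ ‖x‖ ^ (-(b + 2))),
      abs_of_nonneg (by positivity : 0 ≤ ‖x‖ ^ (-(b + 1)))]
    calc |x k| * ‖x‖ ^ (-(b + 2)) ≤ ‖x‖ * ‖x‖ ^ (-(b + 2)) := by
          gcongr; exact abs_coord_le x k
      _ = ‖x‖ ^ (1 + (-(b + 2))) := by rw [Real.rpow_add hn, Real.rpow_one]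
      _ = _ := by congr 1; ring
  have := (Dec.const_mul (2 * a) (h1.mulSD h)).add
    (Dec.const_mul (b / 2) (h2.mulSD (SD_rho2 h)))
  convert this using 2
  unfold kap
  ring

/-- The derivative of the potential density. -/
def potd (a b : ℝ) (f g fk gk : E3 → ℝ) (k : Fin 3) (x : E3) : ℝ :=
  a * (2 * (((‖x‖ ^ 2)⁻¹ * f x) * fk x + ((‖x‖ ^ 2)⁻¹ * g x) * gk x))
    + (‖x‖ ^ (-b) * (f x ^ 2 + g x ^ 2)) * (2 * (f x * fk x + g x * gk x))
    - x k * kap a b x (f x ^ 2 + g x ^ 2)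

lemma PD_pot (F : Fld f f1 f2) (G : Fld g g1 g2) (hA : 0 ≤ A) (hb0 : 0 < b) (hb1 : b < 1)
    (hf : ∀ x, |f x| ≤ A * ‖x‖ ^ 2 * dk x) (hg : ∀ x, |g x| ≤ A * ‖x‖ ^ 2 * dk x) (k : Fin 3) :
    PD k (fun x => pot a b x (f x ^ 2 + g x ^ 2)) (potd a b f g (f1 k) (g1 k) k) := by
  intro x
  by_cases hx : x = 0
  · subst hx
    have hSD := SD_rho F G hA hf hg
    obtain ⟨⟨-, C, hC, h1⟩, C', hC', h2⟩ := hSD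
    have e0 : potd a b f g (f1 k) (g1 k) k 0 = 0 := by
      have : f 0 = 0 := by simpa using hf 0
      have : g 0 = 0 := by simpa using hg 0
      simp [potd, *]
    rw [e0]
    have hbig : (fun s : ℝ => pot a b ((0 : E3) + s • e3 k)
        (f ((0 : E3) + s • e3 k) ^ 2 + g ((0 : E3) + s • e3 k) ^ 2))
        =O[𝓝 0] fun s => ‖s - 0‖ ^ 2 := by
      refine Asymptotics.IsBigO.of_bound (|a| * C' + 1 / 2 * (C' * C')) ?_
      have : ∀ᶠ s : ℝ in 𝓝 0, |s| < 1 := by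
        have := Metric.ball_mem_nhds (0 : ℝ) zero_lt_one
        filter_upwards [this] with s hs
        simpa using hs
      filter_upwards [this] with s hs
      by_cases hs0 : s = 0
      · subst hs0
        have : f 0 = 0 := by simpa using hf 0
        have : g 0 = 0 := by simpa using hg 0
        simp [pot, *]
      have hy : ‖(0 : E3) + s • e3 k‖ = |s| := by simp [norm_smul, e3]
      set y := (0 : E3) + s • e3 k with hyd
      have hy0 : 0 < |s| := abs_pos.mpr hs0
      have hr := h2 y
      have hr' : f y ^ 2 + g y ^ 2 ≤ C' * |s| ^ 4 := by
        rw [hy] at hr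
        calc f y ^ 2 + g y ^ 2 ≤ C' * |s| ^ 4 * dk y := (le_abs_self _).trans hr
          _ ≤ C' * |s| ^ 4 * 1 := by gcongr; exact dk_le_one y
          _ = _ := by ring
      have hrn : 0 ≤ f y ^ 2 + g y ^ 2 := by positivity
      generalize f y ^ 2 + g y ^ 2 = r at *
      have hb : |s| ^ (-b) ≤ (|s| ^ 4)⁻¹ := by
        have := Real.rpow_le_rpow_of_exponent_ge hy0 hs.le (by linarith : (-4 : ℝ) ≤ -b)
        have e : |s| ^ (4 : ℝ) = |s| ^ 4 := by exact_mod_cast Real.rpow_natCast |s| 4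
        rwa [Real.rpow_neg hy0.le 4, e] at this
      unfold pot
      rw [hy]
      simp only [sub_zero, Real.norm_eq_abs]
      rw [abs_of_nonneg (by positivity : 0 ≤ |s| ^ 2)]
      refine (abs_add_le _ _).trans ?_
      rw [add_mul]
      gcongr
      · rw [abs_mul, mul_assoc]
        gcongr
        rw [abs_of_nonneg (by positivity)]
        calc (|s| ^ 2)⁻¹ * r ≤ (|s| ^ 2)⁻¹ * (C' * |s| ^ 4) := by gcongr
          _ = _ := by field_simp
      · rw [abs_of_nonneg (by positivity), mul_assoc]
        refine mul_le_mul_of_nonneg_left ?_ (by norm_num)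
        calc |s| ^ (-b) * (r * r) ≤ (|s| ^ 4)⁻¹ * ((C' * |s| ^ 4) * (C' * |s| ^ 4)) := by gcongr
          _ = C' * C' * (|s| ^ 2 * |s| ^ 2) := by field_simp
          _ ≤ C' * C' * (|s| ^ 2 * 1) := by
              gcongr
              exact pow_le_one₀ hy0.le hs.le
          _ = _ := by ring
    have := hbig.hasFDerivAt (𝕜 := ℝ) (by norm_num)
    simpa using this.hasDerivAt
  · have hn : 0 < ‖x‖ := norm_pos_iff.mpr hx
    have hr : HasDerivAt (fun s : ℝ => f (x + s • e3 k) ^ 2 + g (x + s • e3 k) ^ 2)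
        (2 * (f x * f1 k x + g x * g1 k x)) 0 := by
      have := ((F.h1 k x).fun_pow 2).fun_add ((G.h1 k x).fun_pow 2)
      refine this.congr_deriv ?_
      simp; ring
    have hV : HasDerivAt (fun s : ℝ => (‖x + s • e3 k‖ ^ 2)⁻¹) (-(2 * x k) / (‖x‖ ^ 2) ^ 2) 0 := by
      have := (hasDerivAt_normsq x k).fun_inv (by simp [hx])
      simpa using this
    have hgd : HasDerivAt (fun s : ℝ => ‖x + s • e3 k‖ ^ (-b))
        (x k / ‖x‖ * (-b) * ‖x‖ ^ (-b - 1)) 0 := by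
      have := (hasDerivAt_norm x hx k).rpow_const (p := -b) (Or.inl (by simp [hx]))
      simpa using this
    have := ((hV.fun_mul hr).const_mul a).fun_add
      ((hgd.fun_mul (hr.fun_mul hr)).const_mul (1 / 2))
    unfold pot
    refine this.congr_deriv ?_
    simp only [zero_smul, add_zero, potd, kap]
    have e1 : ‖x‖ ^ (-b - 1) = ‖x‖ ^ (-(b + 2)) * ‖x‖ := by
      rw [← Real.rpow_add_one hn.ne']; congr 1; ring
    rw [e1]
    field_simp
    ring

lemma Dec_potd (F : Fld f f1 f2) (G : Fld g g1 g2) (hA : 0 ≤ A) (hb0 : 0 < b) (hb1 : b < 1)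
    (hf : ∀ x, |f x| ≤ A * ‖x‖ ^ 2 * dk x) (hg : ∀ x, |g x| ≤ A * ‖x‖ ^ 2 * dk x) (k : Fin 3) :
    Dec (potd a b f g (f1 k) (g1 k) k) := by
  have hSD := SD_rho F G hA hf hg
  unfold potd
  refine Dec.sub (Dec.add (Dec.const_mul _ (Dec.const_mul _ (Dec.add ((Dec_Vf F hA hf).mul (F.d1 k))
    ((Dec_Vf G hA hg).mul (G.d1 k))))) (Dec.mul ((Sing.rpow hb0.le (by linarith)).mulSD hSD)
      (Dec.const_mul _ ((F.d0.mul (F.d1 k)).add (G.d0.mul (G.d1 k)))))) (Dec_kapx hSD hb0 hb1 k)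

/-- The nonlinear and linear potential. -/
def QQ (a b : ℝ) (x : E3) (r : ℝ) : ℝ := a * (‖x‖ ^ 2)⁻¹ + ‖x‖ ^ (-b) * r

lemma Dec_Qf (F : Fld f f1 f2) (G : Fld g g1 g2) (hA : 0 ≤ A) (hb0 : 0 < b) (hb1 : b < 1)
    (hf : ∀ x, |f x| ≤ A * ‖x‖ ^ 2 * dk x) (hg : ∀ x, |g x| ≤ A * ‖x‖ ^ 2 * dk x)
    {h : E3 → ℝ} {h1 : Fin 3 → E3 → ℝ} {h2 : Fin 3 → Fin 3 → E3 → ℝ} (H : Fld h h1 h2)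
    (hh : ∀ x, |h x| ≤ A * ‖x‖ ^ 2 * dk x) :
    Dec (fun x => QQ a b x (f x ^ 2 + g x ^ 2) * h x) := by
  have hSD := SD_rho F G hA hf hg
  have := (Dec.const_mul a (Dec_Vf H hA hh)).add
    (Dec.mul ((Sing.rpow hb0.le (by linarith)).mulSD hSD) H.d0)
  convert this using 2
  unfold QQ
  ring

lemma lemA2 (F : Fld f f1 f2) (G : Fld g g1 g2) (W : Wt w1 w2 l1 l2)
    (hA : 0 ≤ A) (hb0 : 0 < b) (hb1 : b < 1)
    (hf : ∀ x, |f x| ≤ A * ‖x‖ ^ 2 * dk x) (hg : ∀ x, |g x| ≤ A * ‖x‖ ^ 2 * dk x) :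
    ∫ x, (∑ k, w1 k x * (2 * ((QQ a b x (f x ^ 2 + g x ^ 2) * f x) * f1 k x
            + (QQ a b x (f x ^ 2 + g x ^ 2) * g x) * g1 k x))
          + (∑ k, w2 k k x) * ((QQ a b x (f x ^ 2 + g x ^ 2) * f x) * f x +
            (QQ a b x (f x ^ 2 + g x ^ 2) * g x) * g x))
      = ∫ x, (∑ k, w1 k x * (x k * kap a b x (f x ^ 2 + g x ^ 2))
          + (∑ k, w2 k k x) * (1 / 2 * (‖x‖ ^ (-b) *
            ((f x ^ 2 + g x ^ 2) * (f x ^ 2 + g x ^ 2))))) := by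
  have hSD := SD_rho F G hA hf hg
  have hL : Bd (fun x => ∑ k, w2 k k x) := Bd.sum fun k => W.b2 k k
  have hQf := Dec_Qf (a := a) F G hA hb0 hb1 hf hg F hf
  have hQg := Dec_Qf (a := a) F G hA hb0 hb1 hf hg G hg
  have hpd := fun k => Dec_potd (a := a) F G hA hb0 hb1 hf hg k
  have key := integral_div (fun k => (W.h1 k k).mul (PD_pot (a := a) F G hA hb0 hb1 hf hg k))
    (fun k => Dec.bdMul (W.b1 k) (Dec_pot hSD hb0 hb1))
    (fun k => (Dec.bdMul (W.b2 k k) (Dec_pot hSD hb0 hb1)).add (Dec.bdMul (W.b1 k) (hpd k)))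
  have h1 : Dec (fun x => (∑ k, w1 k x * (2 * ((QQ a b x (f x ^ 2 + g x ^ 2) * f x) * f1 k x
            + (QQ a b x (f x ^ 2 + g x ^ 2) * g x) * g1 k x))
          + (∑ k, w2 k k x) * ((QQ a b x (f x ^ 2 + g x ^ 2) * f x) * f x +
            (QQ a b x (f x ^ 2 + g x ^ 2) * g x) * g x))) :=
    (Dec.sum fun k => Dec.bdMul (W.b1 k) (Dec.const_mul _ ((hQf.mul (F.d1 k)).add
      (hQg.mul (G.d1 k))))).add (Dec.bdMul hL ((hQf.mul F.d0).add (hQg.mul G.d0)))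
  have h2 : Dec (fun x => (∑ k, w1 k x * (x k * kap a b x (f x ^ 2 + g x ^ 2))
          + (∑ k, w2 k k x) * (1 / 2 * (‖x‖ ^ (-b) *
            ((f x ^ 2 + g x ^ 2) * (f x ^ 2 + g x ^ 2)))))) :=
    (Dec.sum fun k => Dec.bdMul (W.b1 k) (Dec_kapx hSD hb0 hb1 k)).add
      (Dec.bdMul hL (Dec.const_mul _ ((Sing.rpow hb0.le (by linarith)).mulSD (SD_rho2 hSD))))
  rw [← sub_eq_zero, ← integral_sub h1.integrable h2.integrable, ← key]
  congr 1
  ext x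
  simp only [Fin.sum_univ_three, potd, pot, QQ]
  ring

end

/-! ### The fixed-time virial identity -/

section
variable {a b A : ℝ} {f g : E3 → ℝ} {f1 g1 : Fin 3 → E3 → ℝ} {f2 g2 : Fin 3 → Fin 3 → E3 → ℝ}
  {w1 : Fin 3 → E3 → ℝ} {w2 : Fin 3 → Fin 3 → E3 → ℝ} {l1 l2 : Fin 3 → E3 → ℝ}
  {ft gt : E3 → ℝ} {ft1 gt1 : Fin 3 → E3 → ℝ}

/-- All fixed-time data of a solution. -/
structure Slice (a b A : ℝ) (f g : E3 → ℝ) (f1 g1 : Fin 3 → E3 → ℝ)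
    (f2 g2 : Fin 3 → Fin 3 → E3 → ℝ) (ft gt : E3 → ℝ) (ft1 gt1 : Fin 3 → E3 → ℝ) : Prop where
  a0 : 0 < a
  b0 : 0 < b
  b1 : b < 1
  A0 : 0 ≤ A
  F : Fld f f1 f2
  G : Fld g g1 g2
  hf : ∀ x, |f x| ≤ A * ‖x‖ ^ 2 * dk x
  hg : ∀ x, |g x| ≤ A * ‖x‖ ^ 2 * dk x
  dft : Dec ft
  dgt : Dec gt
  dft1 : ∀ k, Dec (ft1 k)
  dgt1 : ∀ k, Dec (gt1 k)
  hft : ∀ k, PD k ft (ft1 k)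
  hgt : ∀ k, PD k gt (gt1 k)
  eq1 : ∀ x, x ≠ 0 → ft x = - (∑ j, g2 j j x) + QQ a b x (f x ^ 2 + g x ^ 2) * g x
  eq2 : ∀ x, x ≠ 0 → gt x = (∑ j, f2 j j x) - QQ a b x (f x ^ 2 + g x ^ 2) * f x

lemma ae_ne_zero : ∀ᵐ x : E3, x ≠ 0 := by
  rw [ae_iff]; simp

lemma lemA (S : Slice a b A f g f1 g1 f2 g2 ft gt ft1 gt1) (W : Wt w1 w2 l1 l2) :
    ∫ x, ∑ k, w1 k x * (ft x * g1 k x + f x * gt1 k x - gt x * f1 k x - g x * ft1 k x)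
      = ∫ x, (2 * (∑ j, ∑ k, w2 j k x * (f1 j x * f1 k x + g1 j x * g1 k x))
        - 1 / 2 * (∑ j, l2 j x) * (f x ^ 2 + g x ^ 2)
        + (∑ k, w1 k x * (x k * kap a b x (f x ^ 2 + g x ^ 2))
          + (∑ k, w2 k k x) * (1 / 2 * (‖x‖ ^ (-b) *
            ((f x ^ 2 + g x ^ 2) * (f x ^ 2 + g x ^ 2)))))) := by
  have hSD := SD_rho S.F S.G S.A0 S.hf S.hg
  have hL : Bd (fun x => ∑ k, w2 k k x) := Bd.sum fun k => W.b2 k k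
  have hQf := Dec_Qf (a := a) S.F S.G S.A0 S.b0 S.b1 S.hf S.hg S.F S.hf
  have hQg := Dec_Qf (a := a) S.F S.G S.A0 S.b0 S.b1 S.hf S.hg S.G S.hg
  have d0 := S.F.d0
  have c0 := S.G.d0
  have d1 := S.F.d1
  have c1 := S.G.d1
  have key := integral_div (fun k => (W.h1 k k).mul (((S.F.h1 k).mul (S.hgt k)).sub
      ((S.G.h1 k).mul (S.hft k))))
    (fun k => Dec.bdMul (W.b1 k) ((d0.mul S.dgt).sub (c0.mul S.dft)))
    (fun k => (Dec.bdMul (W.b2 k k) ((d0.mul S.dgt).sub (c0.mul S.dft))).add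
      (Dec.bdMul (W.b1 k) ((((d1 k).mul S.dgt).add (d0.mul (S.dgt1 k))).sub
        (((c1 k).mul S.dft).add (c0.mul (S.dft1 k))))))
  have hdiv : Integrable (fun x => ∑ k, (w2 k k x * (f x * gt x - g x * ft x) +
      w1 k x * ((f1 k x * gt x + f x * gt1 k x) - (g1 k x * ft x + g x * ft1 k x)))) :=
    (Dec.sum (fun k => (Dec.bdMul (W.b2 k k) ((d0.mul S.dgt).sub (c0.mul S.dft))).add
      (Dec.bdMul (W.b1 k) ((((d1 k).mul S.dgt).add (d0.mul (S.dgt1 k))).sub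
        (((c1 k).mul S.dft).add (c0.mul (S.dft1 k))))))).integrable
  have hI0 : Integrable (fun x => ∑ k, w1 k x * (ft x * g1 k x + f x * gt1 k x
      - gt x * f1 k x - g x * ft1 k x)) :=
    (Dec.sum fun k => Dec.bdMul (W.b1 k) ((((S.dft.mul (c1 k)).add (d0.mul (S.dgt1 k))).sub
      (S.dgt.mul (d1 k))).sub (c0.mul (S.dft1 k)))).integrable
  have hLf : Integrable (fun x => (2 * (∑ k, w1 k x * f1 k x) + (∑ k, w2 k k x) * f x) *
      (∑ j, f2 j j x)) :=
    (Dec.mul (Dec.add (Dec.const_mul _ (Dec.sum fun k => Dec.bdMul (W.b1 k) (d1 k)))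
      (Dec.bdMul hL d0)) (Dec.sum fun j => S.F.d2 j j)).integrable
  have hLg : Integrable (fun x => (2 * (∑ k, w1 k x * g1 k x) + (∑ k, w2 k k x) * g x) *
      (∑ j, g2 j j x)) :=
    (Dec.mul (Dec.add (Dec.const_mul _ (Dec.sum fun k => Dec.bdMul (W.b1 k) (c1 k)))
      (Dec.bdMul hL c0)) (Dec.sum fun j => S.G.d2 j j)).integrable
  have hQ : Integrable (fun x => (∑ k, w1 k x * (2 * ((QQ a b x (f x ^ 2 + g x ^ 2) * f x) * f1 k x
            + (QQ a b x (f x ^ 2 + g x ^ 2) * g x) * g1 k x))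
          + (∑ k, w2 k k x) * ((QQ a b x (f x ^ 2 + g x ^ 2) * f x) * f x +
            (QQ a b x (f x ^ 2 + g x ^ 2) * g x) * g x))) :=
    ((Dec.sum fun k => Dec.bdMul (W.b1 k) (Dec.const_mul _ ((hQf.mul (d1 k)).add
      (hQg.mul (c1 k))))).add (Dec.bdMul hL ((hQf.mul d0).add (hQg.mul c0)))).integrable
  have hRf : Integrable (fun x => -2 * (∑ j, ∑ k, w2 j k x * (f1 j x * f1 k x))
      + 1 / 2 * (∑ j, l2 j x) * f x ^ 2) :=
    (Dec.add (Dec.const_mul _ (Dec.sum fun j => Dec.sum fun k =>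
      Dec.bdMul (W.b2 j k) ((d1 j).mul (d1 k))))
      (Dec.bdMul (Bd.mul (Bd.const _) (Bd.sum W.b4)) d0.sq)).integrable
  have hRg : Integrable (fun x => -2 * (∑ j, ∑ k, w2 j k x * (g1 j x * g1 k x))
      + 1 / 2 * (∑ j, l2 j x) * g x ^ 2) :=
    (Dec.add (Dec.const_mul _ (Dec.sum fun j => Dec.sum fun k =>
      Dec.bdMul (W.b2 j k) ((c1 j).mul (c1 k))))
      (Dec.bdMul (Bd.mul (Bd.const _) (Bd.sum W.b4)) c0.sq)).integrable
  have hRQ : Integrable (fun x => (∑ k, w1 k x * (x k * kap a b x (f x ^ 2 + g x ^ 2))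
          + (∑ k, w2 k k x) * (1 / 2 * (‖x‖ ^ (-b) *
            ((f x ^ 2 + g x ^ 2) * (f x ^ 2 + g x ^ 2)))))) :=
    ((Dec.sum fun k => Dec.bdMul (W.b1 k) (Dec_kapx hSD S.b0 S.b1 k)).add
      (Dec.bdMul hL (Dec.const_mul _ ((Sing.rpow S.b0.le (by linarith [S.b1])).mulSD
        (SD_rho2 hSD))))).integrable
  have hA1f := lemA1 S.F W
  have hA1g := lemA1 S.G W
  have hA2 := lemA2 (a := a) S.F S.G W S.A0 S.b0 S.b1 S.hf S.hg
  have e1 := integral_sub hI0 hdiv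
  have e2 := integral_sub (hQ.sub hLf) hLg
  have e3 := integral_sub hQ hLf
  have e4 := integral_sub (hRQ.sub hRf) hRg
  have e5 := integral_sub hRQ hRf
  simp only [Pi.sub_apply] at e2 e4
  rw [key, sub_zero] at e1
  rw [e3] at e2
  rw [e5] at e4
  rw [← e1]
  trans ∫ x, ((∑ k, w1 k x * (2 * ((QQ a b x (f x ^ 2 + g x ^ 2) * f x) * f1 k x
            + (QQ a b x (f x ^ 2 + g x ^ 2) * g x) * g1 k x))
          + (∑ k, w2 k k x) * ((QQ a b x (f x ^ 2 + g x ^ 2) * f x) * f x +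
            (QQ a b x (f x ^ 2 + g x ^ 2) * g x) * g x))
          - (2 * (∑ k, w1 k x * f1 k x) + (∑ k, w2 k k x) * f x) * (∑ j, f2 j j x)
          - (2 * (∑ k, w1 k x * g1 k x) + (∑ k, w2 k k x) * g x) * (∑ j, g2 j j x))
  · refine integral_congr_ae ?_
    filter_upwards [ae_ne_zero] with x hx
    have h1 := S.eq1 x hx
    have h2 := S.eq2 x hx
    simp only [h1, h2]
    simp only [Fin.sum_univ_three]
    ring
  · rw [e2, hA2, hA1f, hA1g, ← e4]
    refine integral_congr_ae (Eventually.of_forall fun x => ?_)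
    simp only [Fin.sum_univ_three]
    ring

end

/-! ### The explicit weight -/

/-- `1 / sqrt(|z|^2 + ε^2)`. -/
def qe (ε : ℝ) (z : E3) : ℝ := (√(‖z‖ ^ 2 + ε ^ 2))⁻¹

/-- Kronecker delta. -/
def kd (j k : Fin 3) : ℝ := if k = j then 1 else 0

/-- gradient of the weight -/
def v1 (ε : ℝ) (k : Fin 3) (z : E3) : ℝ := z k * qe ε z
/-- Hessian of the weight -/
def v2 (ε : ℝ) (j k : Fin 3) (z : E3) : ℝ := kd j k * qe ε z - z j * z k * qe ε z ^ 3
/-- gradient of the Laplacian -/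
def m1 (ε : ℝ) (j : Fin 3) (z : E3) : ℝ := -2 * z j * qe ε z ^ 3 - 3 * ε ^ 2 * z j * qe ε z ^ 5
/-- terms of the bilaplacian -/
def m2 (ε : ℝ) (j : Fin 3) (z : E3) : ℝ :=
  -2 * qe ε z ^ 3 + 6 * z j ^ 2 * qe ε z ^ 5 - 3 * ε ^ 2 * qe ε z ^ 5
    + 15 * ε ^ 2 * z j ^ 2 * qe ε z ^ 7

section
variable {ε : ℝ}

lemma qe_pos (hε : 0 < ε) (z : E3) : 0 < qe ε z := by unfold qe; positivity

lemma qe_sq (hε : 0 < ε) (z : E3) : qe ε z ^ 2 * (‖z‖ ^ 2 + ε ^ 2) = 1 := by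
  unfold qe
  rw [inv_pow, Real.sq_sqrt (by positivity)]
  field_simp

lemma qe_rel (hε : 0 < ε) (z : E3) : qe ε z ^ 2 * (z 0 ^ 2 + z 1 ^ 2 + z 2 ^ 2 + ε ^ 2) = 1 := by
  have := qe_sq hε z
  rwa [normsq_eq, Fin.sum_univ_three] at this

lemma qe_le (hε : 0 < ε) (z : E3) : qe ε z ≤ ε⁻¹ := by
  unfold qe
  refine inv_anti₀ hε ?_
  exact Real.le_sqrt_of_sq_le (by nlinarith [norm_nonneg z])

lemma qe_norm (z : E3) : ‖z‖ * qe ε z ≤ 1 := by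
  unfold qe
  rcases eq_or_lt_of_le (Real.sqrt_nonneg (‖z‖ ^ 2 + ε ^ 2)) with h | h
  · rw [← h]; simp
  · rw [mul_inv_le_iff₀ h, one_mul]
    exact Real.le_sqrt_of_sq_le (by nlinarith [sq_nonneg ε])

lemma qe_PD (hε : 0 < ε) (j : Fin 3) : PD j (qe ε) (fun z => - z j * qe ε z ^ 3) := by
  intro z
  have hp : ‖z‖ ^ 2 + ε ^ 2 ≠ 0 := by positivity
  have h1 := ((hasDerivAt_normsq z j).add_const (ε ^ 2)).sqrt (by simpa using hp)
  have h2 := h1.fun_inv (by simp; positivity)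
  refine h2.congr_deriv ?_
  simp only [zero_smul, add_zero]
  unfold qe
  have : √(‖z‖ ^ 2 + ε ^ 2) ≠ 0 := by positivity
  field_simp

lemma coord_PD (j k : Fin 3) : PD j (fun z => z k) (fun _ => kd j k) :=
  fun z => hasDerivAt_coord z j k

lemma PD.pow {j : Fin 3} {f f' : E3 → ℝ} (hf : PD j f f') (n : ℕ) :
    PD j (fun x => f x ^ n) (fun x => n * f x ^ (n - 1) * f' x) := fun x => by
  have := (hf x).fun_pow n
  simpa using this

lemma measurable_qe : Measurable (qe ε) := by
  unfold qe
  fun_prop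

lemma Bd_qe (hε : 0 < ε) : Bd (qe ε) :=
  ⟨measurable_qe, ε⁻¹, by positivity, fun z => by
    rw [abs_of_pos (qe_pos hε z)]; exact qe_le hε z⟩

lemma abs_v1_le (hε : 0 < ε) (k : Fin 3) (z : E3) : |v1 ε k z| ≤ 1 := by
  unfold v1
  rw [abs_mul, abs_of_pos (qe_pos hε z)]
  exact (mul_le_mul_of_nonneg_right (abs_coord_le z k) (qe_pos hε z).le).trans (qe_norm z)

lemma Bd_v1 (hε : 0 < ε) (k : Fin 3) : Bd (v1 ε k) :=
  ⟨(measurable_coord k).mul measurable_qe, 1, zero_le_one, abs_v1_le hε k⟩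

lemma Bd.pow {f : E3 → ℝ} (hf : Bd f) (n : ℕ) : Bd (fun x => f x ^ n) := by
  induction n with
  | zero => simpa using Bd.const 1
  | succ n ih => simpa only [pow_succ] using ih.mul hf

lemma Bd.congr {f g : E3 → ℝ} (hf : Bd f) (h : ∀ x, g x = f x) : Bd g := by
  have : g = f := funext h
  rwa [this]

lemma wt_v (hε : 0 < ε) : Wt (v1 ε) (v2 ε) (m1 ε) (m2 ε) where
  b1 := Bd_v1 hε
  b2 j k := by
    refine (((Bd.const (kd j k)).mul (Bd_qe hε)).add
      ((Bd.const (-1)).mul (((Bd_v1 hε j).mul (Bd_v1 hε k)).mul (Bd_qe hε)))).congr fun z => ?_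
    unfold v2 v1; ring
  b3 j := by
    refine (((Bd.const (-2)).mul ((Bd_v1 hε j).mul ((Bd_qe hε).pow 2))).add
      ((Bd.const (-3 * ε ^ 2)).mul ((Bd_v1 hε j).mul ((Bd_qe hε).pow 4)))).congr fun z => ?_
    unfold m1 v1; ring
  b4 j := by
    refine (((Bd.const (-2)).mul ((Bd_qe hε).pow 3)).add
      (((Bd.const 6).mul (((Bd_v1 hε j).pow 2).mul ((Bd_qe hε).pow 3))).add
      (((Bd.const (-3 * ε ^ 2)).mul ((Bd_qe hε).pow 5)).add
      ((Bd.const (15 * ε ^ 2)).mul (((Bd_v1 hε j).pow 2).mul ((Bd_qe hε).pow 5)))))).congr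
      fun z => ?_
    unfold m2 v1; ring
  h1 j k := by
    refine ((coord_PD j k).mul (qe_PD hε j)).congr fun z => ?_
    unfold v2; ring
  h3 j := by
    have h : ∀ k, PD j (v2 ε k k) _ := fun k => ((qe_PD hε j).const_mul (kd k k)).sub
      (((coord_PD j k).mul (coord_PD j k)).mul ((qe_PD hε j).pow 3))
    refine (PD.sum h).congr fun z => ?_
    have hr := qe_rel hε z
    simp only [Fin.sum_univ_three, m1]
    fin_cases j <;> simp [kd] <;> linear_combination (3 * qe ε z ^ 3 * z _) * hr
  h4 j := by
    have := ((((coord_PD j j).const_mul (-2)).mul ((qe_PD hε j).pow 3))).sub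
      (((coord_PD j j).const_mul (3 * ε ^ 2)).mul ((qe_PD hε j).pow 5))
    refine this.congr fun z => ?_
    simp [m2, kd]
    ring

lemma PD.shift {j : Fin 3} {f f' : E3 → ℝ} (hf : PD j f f') (y : E3) :
    PD j (fun x => f (x - y)) (fun x => f' (x - y)) := fun x => by
  have := hf (x - y)
  simpa only [sub_add_eq_add_sub] using this

lemma Bd.shift {f : E3 → ℝ} (hf : Bd f) (y : E3) : Bd (fun x => f (x - y)) := by
  obtain ⟨m, C, hC, h⟩ := hf
  exact ⟨m.comp (measurable_id.sub_const y), C, hC, fun x => h _⟩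

lemma Wt.shift {w1 : Fin 3 → E3 → ℝ} {w2 : Fin 3 → Fin 3 → E3 → ℝ} {l1 l2 : Fin 3 → E3 → ℝ}
    (W : Wt w1 w2 l1 l2) (y : E3) : Wt (fun k x => w1 k (x - y)) (fun j k x => w2 j k (x - y))
      (fun j x => l1 j (x - y)) (fun j x => l2 j (x - y)) where
  b1 j := (W.b1 j).shift y
  b2 j k := (W.b2 j k).shift y
  b3 j := (W.b3 j).shift y
  b4 j := (W.b4 j).shift y
  h1 j k := (W.h1 j k).shift y
  h3 j := (W.h3 j).shift y
  h4 j := (W.h4 j).shift y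

lemma sum_m2 (hε : 0 < ε) (z : E3) : ∑ j, m2 ε j z = - (15 * ε ^ 4 * qe ε z ^ 7) := by
  have hr := qe_rel hε z
  simp only [Fin.sum_univ_three, m2]
  linear_combination (6 * qe ε z ^ 3 + 15 * ε ^ 2 * qe ε z ^ 5) * hr

lemma sum_v2_nonneg (hε : 0 < ε) (z : E3) : 0 ≤ ∑ k, v2 ε k k z := by
  have hr := qe_rel hε z
  have hq := qe_pos hε z
  have : ∑ k, v2 ε k k z = qe ε z * (2 + ε ^ 2 * qe ε z ^ 2) := by
    simp only [Fin.sum_univ_three, v2, kd]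
    simp
    linear_combination (- qe ε z) * hr
  rw [this]; positivity

lemma v2_psd (hε : 0 < ε) (z : E3) (c : Fin 3 → ℝ) :
    0 ≤ ∑ j, ∑ k, v2 ε j k z * (c j * c k) := by
  have hr := qe_rel hε z
  have hq := qe_pos hε z
  have : ∑ j, ∑ k, v2 ε j k z * (c j * c k) = qe ε z ^ 3 * (
      ε ^ 2 * (c 0 ^ 2 + c 1 ^ 2 + c 2 ^ 2)
      + ((z 0 * c 1 - z 1 * c 0) ^ 2 + (z 0 * c 2 - z 2 * c 0) ^ 2
        + (z 1 * c 2 - z 2 * c 1) ^ 2)) := by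
    simp only [Fin.sum_univ_three, v2, kd]
    simp
    linear_combination (- qe ε z * (c 0 ^ 2 + c 1 ^ 2 + c 2 ^ 2)) * hr
  rw [this]; positivity

lemma v2_symm (j k : Fin 3) (z : E3) : v2 ε j k z = v2 ε k j z := by
  unfold v2 kd
  simp only [eq_comm (a := k)]
  ring

lemma qe_neg (z : E3) : qe ε (-z) = qe ε z := by simp [qe]

lemma v2_neg (j k : Fin 3) (z : E3) : v2 ε j k (-z) = v2 ε j k z := by
  simp [v2, qe_neg]

lemma v1_dot (hε : 0 < ε) (z x : E3) : |∑ k, v1 ε k z * x k| ≤ ‖x‖ := by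
  have e : ∑ k, v1 ε k z * x k = inner ℝ z x * qe ε z := by
    simp [v1, PiLp.inner_apply, Fin.sum_univ_three]; ring
  rw [e, abs_mul, abs_of_pos (qe_pos hε z)]
  calc |inner ℝ z x| * qe ε z ≤ (‖z‖ * ‖x‖) * qe ε z := by
        gcongr
        · exact (qe_pos hε z).le
        · exact abs_real_inner_le_norm z x
    _ = (‖z‖ * qe ε z) * ‖x‖ := by ring
    _ ≤ 1 * ‖x‖ := by gcongr; exact qe_norm z
    _ = _ := one_mul _

lemma v1_self (hε : 0 < ε) (x : E3) : ‖x‖ - ε ≤ ∑ k, v1 ε k x * x k := by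
  have e : ∑ k, v1 ε k x * x k = ‖x‖ ^ 2 * qe ε x := by
    rw [normsq_eq]; simp [v1, Fin.sum_univ_three]; ring
  rw [e]
  have hs := qe_sq hε x
  have hq := qe_pos hε x
  have hn := norm_nonneg x
  have h1 : 1 ≤ qe ε x * (‖x‖ + ε) := by
    have h : 1 ≤ (qe ε x * (‖x‖ + ε)) ^ 2 := by
      rw [← hs]; nlinarith [mul_nonneg (mul_nonneg hn hε.le) (sq_nonneg (qe ε x))]
    exact (one_le_sq_iff₀ (by positivity)).mp h
  rcases le_total ‖x‖ ε with h | h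
  · have : 0 ≤ ‖x‖ ^ 2 * qe ε x := by positivity
    linarith
  · have : (‖x‖ - ε) * 1 ≤ (‖x‖ - ε) * (qe ε x * (‖x‖ + ε)) :=
      mul_le_mul_of_nonneg_left h1 (by linarith)
    nlinarith [mul_nonneg (sq_nonneg ε) hq.le]

end

/-! ### Fixed-time interaction inequality -/

/-- Product measure on pairs. -/
abbrev vol2 : Measure (E3 × E3) := (volume : Measure E3).prod (volume : Measure E3)

lemma int3 {α β V : E3 → ℝ} (hα : Dec α) (hβ : Dec β) (hV : Bd V) :
    Integrable (fun z : E3 × E3 => α z.1 * (V (z.2 - z.1) * β z.2)) vol2 := by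
  obtain ⟨mα, C, hC, hα⟩ := hα
  obtain ⟨mβ, D, hD, hβ⟩ := hβ
  obtain ⟨mV, K, hK, hV⟩ := hV
  have hb := (dk_integrable.mul_prod dk_integrable).const_mul (C * K * D)
  refine hb.mono' (Measurable.aestronglyMeasurable ?_) (Eventually.of_forall fun z => ?_)
  · exact (mα.comp measurable_fst).mul ((mV.comp (measurable_snd.sub measurable_fst)).mul
      (mβ.comp measurable_snd))
  · rw [Real.norm_eq_abs, abs_mul, abs_mul]
    have h1 := dk_nonneg z.1
    have h2 := dk_nonneg z.2
    calc |α z.1| * (|V (z.2 - z.1)| * |β z.2|) ≤ (C * dk z.1) * (K * (D * dk z.2)) := by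
          gcongr
          · exact hα _
          · exact hV _
          · exact hβ _
      _ = _ := by ring

lemma int3s {α : E3 → ℝ} {β V : Fin 3 → E3 → ℝ} (hα : Dec α) (hβ : ∀ k, Dec (β k))
    (hV : ∀ k, Bd (V k)) :
    Integrable (fun z : E3 × E3 => α z.1 * ∑ k, V k (z.2 - z.1) * β k z.2) vol2 := by
  simp only [Finset.mul_sum]
  exact integrable_finsetSum _ fun k _ => int3 hα (hβ k) (hV k)

lemma int3ss {α : E3 → ℝ} {β V : Fin 3 → Fin 3 → E3 → ℝ} (hα : Dec α) (hβ : ∀ j k, Dec (β j k))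
    (hV : ∀ j k, Bd (V j k)) :
    Integrable (fun z : E3 × E3 => α z.1 * ∑ j, ∑ k, V j k (z.2 - z.1) * β j k z.2) vol2 := by
  simp only [Finset.mul_sum]
  exact integrable_finsetSum _ fun j _ => integrable_finsetSum _ fun k _ =>
    int3 hα (hβ j k) (hV j k)

section
variable {a b A ε : ℝ} {f g : E3 → ℝ} {f1 g1 : Fin 3 → E3 → ℝ} {f2 g2 : Fin 3 → Fin 3 → E3 → ℝ}
  {ft gt : E3 → ℝ} {ft1 gt1 : Fin 3 → E3 → ℝ}

lemma mass_id (S : Slice a b A f g f1 g1 f2 g2 ft gt ft1 gt1) (hε : 0 < ε) (x : E3) (k : Fin 3) :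
    ∫ y, 2 * (f y * ft y + g y * gt y) * v1 ε k (x - y)
      = ∫ y, -2 * ∑ j, (f y * g1 j y - g y * f1 j y) * v2 ε j k (x - y) := by
  have W := wt_v hε
  have d0 := S.F.d0
  have c0 := S.G.d0
  have d1 := S.F.d1
  have c1 := S.G.d1
  have hp : ∀ j, PD j (fun y => f y * g1 j y - g y * f1 j y)
      (fun y => f y * g2 j j y - g y * f2 j j y) := fun j => by
    refine (((S.F.h1 j).mul (S.G.h2 j j)).sub ((S.G.h1 j).mul (S.F.h2 j j))).congr fun y => ?_
    ring
  have dp : ∀ j, Dec (fun y => f y * g1 j y - g y * f1 j y) := fun j =>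
    (d0.mul (c1 j)).sub (c0.mul (d1 j))
  have dp' : ∀ j, Dec (fun y => f y * g2 j j y - g y * f2 j j y) := fun j =>
    (d0.mul (S.G.d2 j j)).sub (c0.mul (S.F.d2 j j))
  have hs1 : ∀ y, v1 ε k (x - y) = - v1 ε k (y - x) := fun y => by
    have : qe ε (x - y) = qe ε (y - x) := by rw [← neg_sub y x, qe_neg]
    simp only [v1, this, PiLp.sub_apply]; ring
  have hs2 : ∀ j y, v2 ε j k (x - y) = v2 ε j k (y - x) := fun j y => by
    rw [← neg_sub y x, v2_neg]
  have key := integral_div (fun j => (hp j).mul ((W.h1 j k).shift x))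
    (fun j => (dp j).mulBd ((W.b1 k).shift x))
    (fun j => ((dp' j).mulBd ((W.b1 k).shift x)).add ((dp j).mulBd ((W.b2 j k).shift x)))
  have hkeyint : Integrable (fun y => ∑ j, ((f y * g2 j j y - g y * f2 j j y) * v1 ε k (y - x) +
      (f y * g1 j y - g y * f1 j y) * v2 ε j k (y - x))) :=
    (Dec.sum (fun j => ((dp' j).mulBd ((W.b1 k).shift x)).add
      ((dp j).mulBd ((W.b2 j k).shift x)))).integrable
  simp only [hs1, hs2]
  have i1 : Integrable (fun y => 2 * (f y * ft y + g y * gt y) * - v1 ε k (y - x)) := by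
    have := ((((d0.mul S.dft).add (c0.mul S.dgt)).const_mul 2).mulBd
      ((W.b1 k).shift x)).neg
    refine this.integrable.congr (Eventually.of_forall fun y => ?_)
    simp only; ring
  have i2 : Integrable (fun y => -2 * ∑ j, (f y * g1 j y - g y * f1 j y) * v2 ε j k (y - x)) :=
    (Dec.const_mul _ (Dec.sum fun j => (dp j).mulBd ((W.b2 j k).shift x))).integrable
  rw [← sub_eq_zero, ← integral_sub i1 i2]
  have e : ∫ y, 2 * (∑ j, ((f y * g2 j j y - g y * f2 j j y) * v1 ε k (y - x) +
      (f y * g1 j y - g y * f1 j y) * v2 ε j k (y - x))) = 0 := by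
    rw [integral_const_mul, key, mul_zero]
  rw [← e]
  refine integral_congr_ae ?_
  filter_upwards [ae_ne_zero] with y hy
  rw [S.eq1 y hy, S.eq2 y hy]
  simp only [Fin.sum_univ_three]
  ring

lemma kap_nonneg (ha : 0 < a) (hb : 0 < b) (x : E3) {r : ℝ} (hr : 0 ≤ r) : 0 ≤ kap a b x r := by
  unfold kap; positivity

lemma Dec_kapn {r : E3 → ℝ} (h : SD r) (hb0 : 0 < b) (hb1 : b < 1) :
    Dec (fun x => ‖x‖ * kap a b x (r x)) := by
  have h' := fun k => Dec_kapx (a := a) h hb0 hb1 k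
  choose m C hC hh using h'
  refine ⟨measurable_norm.mul (Dec_kap h hb0 hb1).1, ∑ k, C k,
    Finset.sum_nonneg fun k _ => hC k, fun x => ?_⟩
  have hn : ‖x‖ ≤ ∑ k, |x k| := by
    have h0 : (0 : ℝ) ≤ ∑ k, |x k| := Finset.sum_nonneg fun k _ => abs_nonneg _
    refine le_of_sq_le_sq ?_ h0
    rw [normsq_eq]
    simp only [Fin.sum_univ_three]
    nlinarith [sq_abs (x 0), sq_abs (x 1), sq_abs (x 2), mul_nonneg (abs_nonneg (x 0))
      (abs_nonneg (x 1)), mul_nonneg (abs_nonneg (x 0)) (abs_nonneg (x 2)),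
      mul_nonneg (abs_nonneg (x 1)) (abs_nonneg (x 2))]
  show |‖x‖ * kap a b x (r x)| ≤ _
  rw [abs_mul, abs_of_nonneg (norm_nonneg x), Finset.sum_mul]
  calc ‖x‖ * |kap a b x (r x)| ≤ (∑ k, |x k|) * |kap a b x (r x)| := by gcongr
    _ = ∑ k, |x k * kap a b x (r x)| := by simp only [Finset.sum_mul, abs_mul]
    _ ≤ _ := Finset.sum_le_sum fun k _ => hh k x

lemma Slice.sd (S : Slice a b A f g f1 g1 f2 g2 ft gt ft1 gt1) :
    SD (fun x => f x ^ 2 + g x ^ 2) := SD_rho S.F S.G S.A0 S.hf S.hg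

lemma low_plain (S : Slice a b A f g f1 g1 f2 g2 ft gt ft1 gt1) (hε : 0 < ε) :
    (∫ x, ‖x‖ * kap a b x (f x ^ 2 + g x ^ 2)) - ε * (∫ x, kap a b x (f x ^ 2 + g x ^ 2))
    ≤ ∫ x, ∑ k, v1 ε k x * (ft x * g1 k x + f x * gt1 k x - gt x * f1 k x - g x * ft1 k x) := by
  have W := wt_v hε
  have hSD := S.sd
  have hL : Bd (fun x => ∑ k, v2 ε k k x) := Bd.sum fun k => W.b2 k k
  rw [lemA S W, ← integral_const_mul, ← integral_sub (Dec_kapn hSD S.b0 S.b1).integrable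
    ((Dec_kap hSD S.b0 S.b1).const_mul ε).integrable]
  refine integral_mono (((Dec_kapn hSD S.b0 S.b1)).sub
    ((Dec_kap hSD S.b0 S.b1).const_mul ε)).integrable ?_ ?_
  · exact (((Dec.const_mul _ (Dec.sum fun j => Dec.sum fun k => Dec.bdMul (W.b2 j k)
      (((S.F.d1 j).mul (S.F.d1 k)).add ((S.G.d1 j).mul (S.G.d1 k))))).sub
      (Dec.bdMul (Bd.mul (Bd.const _) (Bd.sum W.b4)) hSD.1)).add
      ((Dec.sum fun k => Dec.bdMul (W.b1 k) (Dec_kapx hSD S.b0 S.b1 k)).add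
      (Dec.bdMul hL (Dec.const_mul _ ((Sing.rpow S.b0.le (by linarith [S.b1])).mulSD
        (SD_rho2 hSD)))))).integrable
  · intro x
    simp only
    have hρ : 0 ≤ f x ^ 2 + g x ^ 2 := by positivity
    have hk := kap_nonneg S.a0 S.b0 x hρ
    have h1 : 0 ≤ ∑ j, ∑ k, v2 ε j k x * (f1 j x * f1 k x + g1 j x * g1 k x) := by
      have h1 := v2_psd hε x (fun j => f1 j x)
      have h2 := v2_psd hε x (fun j => g1 j x)
      simp only [mul_add, Finset.sum_add_distrib]
      linarith
    have h2 : 0 ≤ - (1 / 2 * (∑ j, m2 ε j x) * (f x ^ 2 + g x ^ 2)) := by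
      rw [sum_m2 hε]
      have := qe_pos hε x
      have : 0 ≤ 1 / 2 * (15 * ε ^ 4 * qe ε x ^ 7) * (f x ^ 2 + g x ^ 2) := by positivity
      linarith
    have h3 : ∑ k, v1 ε k x * (x k * kap a b x (f x ^ 2 + g x ^ 2))
        = (∑ k, v1 ε k x * x k) * kap a b x (f x ^ 2 + g x ^ 2) := by
      simp only [Fin.sum_univ_three]; ring
    have h4 : 0 ≤ (∑ k, v2 ε k k x) * (1 / 2 * (‖x‖ ^ (-b) *
            ((f x ^ 2 + g x ^ 2) * (f x ^ 2 + g x ^ 2)))) := by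
      have := sum_v2_nonneg hε x
      positivity
    have h5 := mul_le_mul_of_nonneg_right (v1_self hε x) hk
    rw [h3]
    linarith

/-- Main lower density of the interaction. -/
def dens (ε a b : ℝ) (f g : E3 → ℝ) (f1 g1 : Fin 3 → E3 → ℝ) (y x : E3) : ℝ :=
  2 * (∑ j, ∑ k, v2 ε j k (x - y) * (f1 j x * f1 k x + g1 j x * g1 k x))
  + 1 / 2 * (15 * ε ^ 4 * qe ε (x - y) ^ 7 * (f x ^ 2 + g x ^ 2))
  - ‖x‖ * kap a b x (f x ^ 2 + g x ^ 2)

lemma low_inter (S : Slice a b A f g f1 g1 f2 g2 ft gt ft1 gt1) (hε : 0 < ε) (y : E3) :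
    ∫ x, dens ε a b f g f1 g1 y x
    ≤ ∫ x, ∑ k, v1 ε k (x - y) *
      (ft x * g1 k x + f x * gt1 k x - gt x * f1 k x - g x * ft1 k x) := by
  have W := (wt_v hε).shift y
  have hSD := S.sd
  have hL : Bd (fun x => ∑ k, v2 ε k k (x - y)) := Bd.sum fun k => W.b2 k k
  rw [lemA S W]
  refine integral_mono ?_ ?_ ?_
  · exact (((Dec.const_mul _ (Dec.sum fun j => Dec.sum fun k => Dec.bdMul (W.b2 j k)
      (((S.F.d1 j).mul (S.F.d1 k)).add ((S.G.d1 j).mul (S.G.d1 k))))).add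
      (Dec.const_mul _ (Dec.bdMul ((Bd.const _).mul (((Bd_qe hε).shift y).pow 7)) hSD.1))).sub
      (Dec_kapn hSD S.b0 S.b1)).integrable
  · exact (((Dec.const_mul _ (Dec.sum fun j => Dec.sum fun k => Dec.bdMul (W.b2 j k)
      (((S.F.d1 j).mul (S.F.d1 k)).add ((S.G.d1 j).mul (S.G.d1 k))))).sub
      (Dec.bdMul (Bd.mul (Bd.const _) (Bd.sum W.b4)) hSD.1)).add
      ((Dec.sum fun k => Dec.bdMul (W.b1 k) (Dec_kapx hSD S.b0 S.b1 k)).add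
      (Dec.bdMul hL (Dec.const_mul _ ((Sing.rpow S.b0.le (by linarith [S.b1])).mulSD
        (SD_rho2 hSD)))))).integrable
  · intro x
    simp only [dens]
    have hρ : 0 ≤ f x ^ 2 + g x ^ 2 := by positivity
    have hk := kap_nonneg S.a0 S.b0 x hρ
    rw [sum_m2 hε]
    have h3 : ∑ k, v1 ε k (x - y) * (x k * kap a b x (f x ^ 2 + g x ^ 2))
        = (∑ k, v1 ε k (x - y) * x k) * kap a b x (f x ^ 2 + g x ^ 2) := by
      simp only [Fin.sum_univ_three]; ring
    have h4 : 0 ≤ (∑ k, v2 ε k k (x - y)) * (1 / 2 * (‖x‖ ^ (-b) *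
            ((f x ^ 2 + g x ^ 2) * (f x ^ 2 + g x ^ 2)))) := by
      have := sum_v2_nonneg hε (x - y)
      positivity
    have h5 := mul_le_mul_of_nonneg_right (neg_le_of_abs_le (v1_dot hε (x - y) x)) hk
    rw [h3]
    linarith

lemma sym_alg (w : Fin 3 → Fin 3 → ℝ) (hw : ∀ j k, w j k = w k j) (A B : Fin 3 → Fin 3 → ℝ)
    (h : ∀ j k, A j k + A k j = B j k + B k j) :
    ∑ j, ∑ k, w j k * A j k = ∑ j, ∑ k, w j k * B j k := by
  have e1 : ∀ C : Fin 3 → Fin 3 → ℝ, ∑ j, ∑ k, w j k * C j k = ∑ j, ∑ k, w j k * C k j := by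
    intro C
    rw [Finset.sum_comm]
    exact Finset.sum_congr rfl fun j _ => Finset.sum_congr rfl fun k _ => by rw [hw]
  have e2 : ∑ j, ∑ k, w j k * (A j k + A k j) = ∑ j, ∑ k, w j k * (B j k + B k j) :=
    Finset.sum_congr rfl fun j _ => Finset.sum_congr rfl fun k _ => by rw [h]
  simp only [mul_add, Finset.sum_add_distrib] at e2
  linarith [e1 A, e1 B]

lemma sym_nonneg (hε : 0 < ε) (z : E3) (u v u' v' : ℝ) (p q p' q' : Fin 3 → ℝ) :
    0 ≤ (∑ j, ∑ k, v2 ε j k z * ((u' ^ 2 + v' ^ 2) * (p j * p k + q j * q k)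
        - (u' * q' j - v' * p' j) * (u * q k - v * p k)))
      + (∑ j, ∑ k, v2 ε j k z * ((u ^ 2 + v ^ 2) * (p' j * p' k + q' j * q' k)
        - (u * q j - v * p j) * (u' * q' k - v' * p' k))) := by
  have h1 := v2_psd hε z (fun j => (u' * p j + v' * q j) + (u * p' j + v * q' j))
  have h2 := v2_psd hε z (fun j => (u' * q j - v' * p j) + (v * p' j - u * q' j))
  have h3 := v2_psd hε z (fun j => (u' * p j - v' * q j) - (u * p' j - v * q' j))
  have h4 := v2_psd hε z (fun j => (u' * q j + v' * p j) - (u * q' j + v * p' j))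
  have h5 := add_nonneg (add_nonneg h1 h2) (add_nonneg h3 h4)
  simp only [← Finset.sum_add_distrib, ← mul_add] at h5 ⊢
  have := sym_alg (fun j k => v2 ε j k z) (fun j k => v2_symm j k z) (fun j k =>
      ((u' ^ 2 + v' ^ 2) * (p j * p k + q j * q k)
        - (u' * q' j - v' * p' j) * (u * q k - v * p k)) +
      ((u ^ 2 + v ^ 2) * (p' j * p' k + q' j * q' k)
        - (u * q j - v * p j) * (u' * q' k - v' * p' k)))
    (fun j k => 1 / 2 * (((u' * p j + v' * q j + (u * p' j + v * q' j)) *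
        (u' * p k + v' * q k + (u * p' k + v * q' k)) +
      (u' * q j - v' * p j + (v * p' j - u * q' j)) *
        (u' * q k - v' * p k + (v * p' k - u * q' k))) +
      ((u' * p j - v' * q j - (u * p' j - v * q' j)) *
        (u' * p k - v' * q k - (u * p' k - v * q' k)) +
      (u' * q j + v' * p j - (u * q' j + v * p' j)) *
        (u' * q k + v' * p k - (u * q' k + v * p' k)))))
    (fun j k => by ring)
  rw [this]
  simp only [mul_left_comm _ (1 / 2 : ℝ), ← Finset.mul_sum]
  linarith

end

/-! ### Smoothing kernel -/

lemma dk_eq (x : E3) : dk x = ((1 + ‖x‖) ^ 4)⁻¹ := by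
  unfold dk
  rw [Real.rpow_neg (by positivity)]
  norm_cast

lemma qe1_le (z : E3) : qe 1 z ^ 4 ≤ 4 * dk z := by
  have h := qe_sq one_pos z
  have hq := qe_pos one_pos z
  have hn := norm_nonneg z
  rw [dk_eq, ← div_eq_mul_inv, le_div_iff₀ (by positivity)]
  have h1 : (1 + ‖z‖) ^ 2 ≤ 2 * (‖z‖ ^ 2 + 1 ^ 2) := by nlinarith [sq_nonneg (1 - ‖z‖)]
  have h2 : ((1 + ‖z‖) ^ 2) ^ 2 ≤ (2 * (‖z‖ ^ 2 + 1 ^ 2)) ^ 2 := by gcongr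
  calc qe 1 z ^ 4 * (1 + ‖z‖) ^ 4 = qe 1 z ^ 4 * ((1 + ‖z‖) ^ 2) ^ 2 := by ring
    _ ≤ qe 1 z ^ 4 * (2 * (‖z‖ ^ 2 + 1 ^ 2)) ^ 2 := by gcongr
    _ = 4 * (qe 1 z ^ 2 * (‖z‖ ^ 2 + 1 ^ 2)) ^ 2 := by ring
    _ = 4 := by rw [h]; norm_num

/-- base kernel -/
def ph (z : E3) : ℝ := 15 * qe 1 z ^ 7

lemma ph_pos (z : E3) : 0 < ph z := by
  unfold ph; have := qe_pos one_pos z; positivity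

lemma measurable_ph : Measurable ph := by
  unfold ph; exact (measurable_qe.pow_const 7).const_mul 15

lemma qe1_le_one (z : E3) : qe 1 z ≤ 1 := by simpa using qe_le one_pos z

lemma ph_dec : Dec ph := by
  refine ⟨measurable_ph, 60, by norm_num, fun z => ?_⟩
  rw [abs_of_pos (ph_pos z)]
  have hq := qe_pos one_pos z
  have h1 := qe1_le z
  have h3 : qe 1 z ^ 3 ≤ 1 := pow_le_one₀ hq.le (qe1_le_one z)
  unfold ph
  nlinarith [pow_pos hq 4, pow_pos hq 3]

lemma phn_dec : Dec (fun z => ph z * ‖z‖) := by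
  refine ⟨measurable_ph.mul measurable_norm, 60, by norm_num, fun z => ?_⟩
  have hq := qe_pos one_pos z
  have hn := norm_nonneg z
  rw [abs_of_nonneg (mul_nonneg (ph_pos z).le hn)]
  have h1 := qe1_le z
  have h2 : qe 1 z ^ 2 ≤ 1 := pow_le_one₀ hq.le (qe1_le_one z)
  have h3 := qe_norm (ε := 1) z
  unfold ph
  calc 15 * qe 1 z ^ 7 * ‖z‖ = 15 * (qe 1 z ^ 4 * (qe 1 z ^ 2 * (‖z‖ * qe 1 z))) := by ring
    _ ≤ 15 * (4 * dk z * (1 * 1)) := by gcongr; · have := dk_nonneg z; positivity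
    _ = _ := by ring

/-- mass of kernel -/
def cph : ℝ := ∫ z, ph z
/-- first moment of kernel -/
def cph1 : ℝ := ∫ z, ph z * ‖z‖

lemma cph_pos : 0 < cph := by
  unfold cph
  rw [integral_pos_iff_support_of_nonneg (fun z => (ph_pos z).le) ph_dec.integrable]
  have : Function.support ph = Set.univ := by
    ext z; simp [(ph_pos z).ne']
  rw [this]
  simp

lemma cph1_nonneg : 0 ≤ cph1 :=
  integral_nonneg fun z => mul_nonneg (ph_pos z).le (norm_nonneg z)

lemma qe_scale {ε : ℝ} (hε : 0 < ε) (z : E3) : qe ε (ε • z) = ε⁻¹ * qe 1 z := by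
  unfold qe
  rw [norm_smul, Real.norm_eq_abs, abs_of_pos hε,
    show (ε * ‖z‖) ^ 2 + ε ^ 2 = ε ^ 2 * (‖z‖ ^ 2 + 1 ^ 2) by ring,
    Real.sqrt_mul (by positivity), Real.sqrt_sq hε.le, mul_inv]

lemma smooth_low {ε L : ℝ} (hε : 0 < ε) {r : E3 → ℝ} (hr : Dec r)
    (hL : ∀ x y, |r x - r y| ≤ L * ‖x - y‖) (x : E3) :
    cph * r x - ε * L * cph1 ≤ ∫ y, 15 * ε ^ 4 * qe ε (x - y) ^ 7 * r y := by
  have e1 : ∫ y, 15 * ε ^ 4 * qe ε (x - y) ^ 7 * r y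
      = ∫ z, 15 * ε ^ 4 * qe ε z ^ 7 * r (x - z) := by
    rw [← integral_sub_left_eq_self (fun z => 15 * ε ^ 4 * qe ε z ^ 7 * r (x - z)) volume x]
    simp
  have e2 : ∫ z, 15 * ε ^ 4 * qe ε z ^ 7 * r (x - z) = ∫ z, ph z * r (x - ε • z) := by
    have := Measure.integral_comp_smul_of_nonneg volume
      (fun z : E3 => 15 * ε ^ 4 * qe ε z ^ 7 * r (x - z)) ε (hR := hε.le)
    simp only [finrank_euclideanSpace, Fintype.card_fin, smul_eq_mul] at this
    rw [eq_comm, inv_mul_eq_iff_eq_mul₀ (by positivity), ← integral_const_mul] at this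
    rw [this]
    refine integral_congr_ae (Eventually.of_forall fun z => ?_)
    simp only [qe_scale hε, ph]
    field_simp
  rw [e1, e2, cph, cph1, ← integral_mul_const, ← integral_const_mul, ← integral_sub]
  · refine integral_mono ?_ ?_ ?_
    · exact ((ph_dec.integrable.mul_const _).sub (phn_dec.integrable.const_mul _))
    · refine (ph_dec.mulBd ?_).integrable
      obtain ⟨m, C, hC, h⟩ := hr.bd
      exact ⟨m.comp (by fun_prop), C, hC, fun z => h _⟩
    · intro z
      simp only
      have h := (abs_le.mp (hL x (x - ε • z))).2
      rw [sub_sub_cancel, norm_smul, Real.norm_eq_abs, abs_of_pos hε] at h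
      have := mul_le_mul_of_nonneg_left h (ph_pos z).le
      linarith
  · exact ph_dec.integrable.mul_const _
  · exact phn_dec.integrable.const_mul _

lemma sym_int {K : E3 × E3 → ℝ} (hK : Integrable K vol2) (h : ∀ z, 0 ≤ K z + K z.swap) :
    0 ≤ ∫ z, K z ∂vol2 := by
  have h1 := integral_prod_swap (μ := (volume : Measure E3)) (ν := (volume : Measure E3)) K
  have h2 : 0 ≤ ∫ z, (K z + K z.swap) ∂vol2 := integral_nonneg h
  have h3 : ∫ z, (K z + K z.swap) ∂vol2 = ∫ z, K z ∂vol2 + ∫ z, K z.swap ∂vol2 :=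
    integral_add hK hK.swap
  rw [h3, h1] at h2
  linarith

lemma le_prod_int {A B C D : E3 × E3 → ℝ} (hA : Integrable A vol2) (hB : Integrable B vol2)
    (hC : Integrable C vol2) (hD : Integrable D vol2)
    (h : ∀ y, ∫ x, (A (y, x) + 1 / 2 * B (y, x) - C (y, x)) ≤ ∫ x, D (y, x)) :
    ∫ z, A z ∂vol2 + 1 / 2 * ∫ z, B z ∂vol2 - ∫ z, C z ∂vol2 ≤ ∫ z, D z ∂vol2 := by
  have hB' := hB.const_mul (1 / 2)
  have hI : Integrable (fun z => A z + 1 / 2 * B z - C z) vol2 := (hA.add hB').sub hC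
  have e : ∫ z, (A z + 1 / 2 * B z - C z) ∂vol2
      = ∫ z, A z ∂vol2 + 1 / 2 * ∫ z, B z ∂vol2 - ∫ z, C z ∂vol2 := by
    have e1 : ∫ z, (A z + 1 / 2 * B z - C z) ∂vol2
      = ∫ z, (A z + 1 / 2 * B z) ∂vol2 - ∫ z, C z ∂vol2 := integral_sub (hA.add hB') hC
    rw [e1, integral_add hA hB', integral_const_mul]
  rw [← e, integral_prod _ hI, integral_prod _ hD]
  exact integral_mono hI.integral_prod_left hD.integral_prod_left h

section
variable {a b A ε : ℝ} {f g : E3 → ℝ} {f1 g1 : Fin 3 → E3 → ℝ} {f2 g2 : Fin 3 → Fin 3 → E3 → ℝ}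
  {ft gt : E3 → ℝ} {ft1 gt1 : Fin 3 → E3 → ℝ}

lemma mass_part (S : Slice a b A f g f1 g1 f2 g2 ft gt ft1 gt1) (hε : 0 < ε) :
    ∫ z, 2 * (f z.1 * ft z.1 + g z.1 * gt z.1) *
        (∑ k, v1 ε k (z.2 - z.1) * (f z.2 * g1 k z.2 - g z.2 * f1 k z.2)) ∂vol2
    = ∫ z, -2 * (∑ j, ∑ k, v2 ε j k (z.2 - z.1) *
        ((f z.1 * g1 j z.1 - g z.1 * f1 j z.1) * (f z.2 * g1 k z.2 - g z.2 * f1 k z.2))) ∂vol2 := by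
  have W := wt_v hε
  have dp : ∀ j, Dec (fun y => f y * g1 j y - g y * f1 j y) := fun j =>
    (S.F.d0.mul (S.G.d1 j)).sub (S.G.d0.mul (S.F.d1 j))
  have dm : Dec (fun y => 2 * (f y * ft y + g y * gt y)) :=
    ((S.F.d0.mul S.dft).add (S.G.d0.mul S.dgt)).const_mul 2
  have I1 := int3s (α := fun y => 2 * (f y * ft y + g y * gt y)) dm dp W.b1
  have I2 : Integrable (fun z : E3 × E3 => -2 * (∑ j, ∑ k, v2 ε j k (z.2 - z.1) *
        ((f z.1 * g1 j z.1 - g z.1 * f1 j z.1) * (f z.2 * g1 k z.2 - g z.2 * f1 k z.2)))) vol2 := by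
    refine Integrable.const_mul (integrable_finsetSum _ fun j _ => integrable_finsetSum _ fun k _ =>
      (int3 (dp j) (dp k) (W.b2 j k)).congr (Eventually.of_forall fun z => ?_)) _
    simp only; ring
  rw [integral_prod_symm _ I1, integral_prod_symm _ I2]
  refine integral_congr_ae (Eventually.of_forall fun x => ?_)
  simp only
  have L : ∫ y, 2 * (f y * ft y + g y * gt y) *
        (∑ k, v1 ε k (x - y) * (f x * g1 k x - g x * f1 k x))
      = ∑ k, (f x * g1 k x - g x * f1 k x) *
        ∫ y, 2 * (f y * ft y + g y * gt y) * v1 ε k (x - y) := by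
    simp only [← integral_const_mul]
    rw [← integral_finsetSum]
    · refine integral_congr_ae (Eventually.of_forall fun y => ?_)
      simp only [Fin.sum_univ_three]; ring
    · intro k _
      refine (dm.mulBd ?_).integrable.const_mul _
      obtain ⟨m, C, hC, h⟩ := W.b1 k
      exact ⟨m.comp (by fun_prop), C, hC, fun z => h _⟩
  rw [L]
  simp only [mass_id S hε]
  simp only [← integral_const_mul]
  rw [← integral_finsetSum]
  · refine integral_congr_ae (Eventually.of_forall fun y => ?_)
    simp only [Fin.sum_univ_three]; ring
  · intro k _
    refine Integrable.const_mul (Integrable.const_mul (integrable_finsetSum _ fun j _ =>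
      ((dp j).mulBd ?_).integrable) _) _
    obtain ⟨m, C, hC, h⟩ := W.b2 j k
    exact ⟨m.comp (by fun_prop), C, hC, fun z => h _⟩

lemma Dec_ee (S : Slice a b A f g f1 g1 f2 g2 ft gt ft1 gt1) (j k : Fin 3) :
    Dec (fun x => f1 j x * f1 k x + g1 j x * g1 k x) :=
  ((S.F.d1 j).mul (S.F.d1 k)).add ((S.G.d1 j).mul (S.G.d1 k))

lemma mom_part (S : Slice a b A f g f1 g1 f2 g2 ft gt ft1 gt1) (hε : 0 < ε) :
    (∫ z, 2 * (∑ j, ∑ k, v2 ε j k (z.2 - z.1) * ((f z.1 ^ 2 + g z.1 ^ 2) *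
        (f1 j z.2 * f1 k z.2 + g1 j z.2 * g1 k z.2))) ∂vol2)
    + 1 / 2 * (∫ z, (f z.1 ^ 2 + g z.1 ^ 2) * (15 * ε ^ 4 * qe ε (z.2 - z.1) ^ 7 *
        (f z.2 ^ 2 + g z.2 ^ 2)) ∂vol2)
    - (∫ x, f x ^ 2 + g x ^ 2) * (∫ x, ‖x‖ * kap a b x (f x ^ 2 + g x ^ 2))
    ≤ ∫ z, (f z.1 ^ 2 + g z.1 ^ 2) * (∑ k, v1 ε k (z.2 - z.1) *
      (ft z.2 * g1 k z.2 + f z.2 * gt1 k z.2 - gt z.2 * f1 k z.2 - g z.2 * ft1 k z.2)) ∂vol2 := by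
  have W := wt_v hε
  have hSD := S.sd
  have dpt : ∀ k, Dec (fun x => ft x * g1 k x + f x * gt1 k x - gt x * f1 k x - g x * ft1 k x) :=
    fun k => (((S.dft.mul (S.G.d1 k)).add (S.F.d0.mul (S.dgt1 k))).sub
      (S.dgt.mul (S.F.d1 k))).sub (S.G.d0.mul (S.dft1 k))
  have I0 := int3s hSD.1 dpt W.b1
  have I1 : Integrable (fun z : E3 × E3 => 2 * (∑ j, ∑ k, v2 ε j k (z.2 - z.1) *
      ((f z.1 ^ 2 + g z.1 ^ 2) * (f1 j z.2 * f1 k z.2 + g1 j z.2 * g1 k z.2)))) vol2 := by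
    refine Integrable.const_mul (integrable_finsetSum _ fun j _ => integrable_finsetSum _ fun k _ =>
      (int3 hSD.1 (Dec_ee S j k) (W.b2 j k)).congr (Eventually.of_forall fun z => ?_)) _
    simp only; ring
  have I2 : Integrable (fun z : E3 × E3 => (f z.1 ^ 2 + g z.1 ^ 2) *
      (15 * ε ^ 4 * qe ε (z.2 - z.1) ^ 7 * (f z.2 ^ 2 + g z.2 ^ 2))) vol2 :=
    int3 (V := fun z => 15 * ε ^ 4 * qe ε z ^ 7) hSD.1 hSD.1
      ((Bd.const _).mul ((Bd_qe hε).pow 7))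
  have I3 : Integrable (fun z : E3 × E3 => (f z.1 ^ 2 + g z.1 ^ 2) *
      (‖z.2‖ * kap a b z.2 (f z.2 ^ 2 + g z.2 ^ 2))) vol2 :=
    hSD.1.integrable.mul_prod (Dec_kapn hSD S.b0 S.b1).integrable
  have e3 := integral_prod_mul (μ := (volume : Measure E3)) (ν := (volume : Measure E3))
    (fun x => f x ^ 2 + g x ^ 2) (fun x => ‖x‖ * kap a b x (f x ^ 2 + g x ^ 2))
  rw [← e3]
  refine le_prod_int I1 I2 I3 I0 fun y => ?_
  simp only
  rw [integral_const_mul]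
  have h := mul_le_mul_of_nonneg_left (low_inter S hε y)
    (by positivity : 0 ≤ f y ^ 2 + g y ^ 2)
  refine le_trans (le_of_eq ?_) h
  rw [← integral_const_mul]
  refine integral_congr_ae (Eventually.of_forall fun x => ?_)
  simp only [dens]
  simp only [Fin.sum_univ_three]
  ring

lemma sym_part (S : Slice a b A f g f1 g1 f2 g2 ft gt ft1 gt1) (hε : 0 < ε) :
    0 ≤ (∫ z, 2 * (∑ j, ∑ k, v2 ε j k (z.2 - z.1) * ((f z.1 ^ 2 + g z.1 ^ 2) *
        (f1 j z.2 * f1 k z.2 + g1 j z.2 * g1 k z.2))) ∂vol2)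
    + ∫ z, -2 * (∑ j, ∑ k, v2 ε j k (z.2 - z.1) *
        ((f z.1 * g1 j z.1 - g z.1 * f1 j z.1) * (f z.2 * g1 k z.2 - g z.2 * f1 k z.2))) ∂vol2 := by
  have W := wt_v hε
  have hSD := S.sd
  have dp : ∀ j, Dec (fun y => f y * g1 j y - g y * f1 j y) := fun j =>
    (S.F.d0.mul (S.G.d1 j)).sub (S.G.d0.mul (S.F.d1 j))
  have I1 : Integrable (fun z : E3 × E3 => 2 * (∑ j, ∑ k, v2 ε j k (z.2 - z.1) *
      ((f z.1 ^ 2 + g z.1 ^ 2) * (f1 j z.2 * f1 k z.2 + g1 j z.2 * g1 k z.2)))) vol2 := by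
    refine Integrable.const_mul (integrable_finsetSum _ fun j _ => integrable_finsetSum _ fun k _ =>
      (int3 hSD.1 (Dec_ee S j k) (W.b2 j k)).congr (Eventually.of_forall fun z => ?_)) _
    simp only; ring
  have I2 : Integrable (fun z : E3 × E3 => -2 * (∑ j, ∑ k, v2 ε j k (z.2 - z.1) *
        ((f z.1 * g1 j z.1 - g z.1 * f1 j z.1) * (f z.2 * g1 k z.2 - g z.2 * f1 k z.2)))) vol2 := by
    refine Integrable.const_mul (integrable_finsetSum _ fun j _ => integrable_finsetSum _ fun k _ =>
      (int3 (dp j) (dp k) (W.b2 j k)).congr (Eventually.of_forall fun z => ?_)) _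
    simp only; ring
  rw [← integral_add I1 I2]
  refine sym_int (I1.add I2) fun z => ?_
  obtain ⟨y, x⟩ := z
  have h := sym_nonneg hε (x - y) (f x) (g x) (f y) (g y) (fun j => f1 j x) (fun j => g1 j x)
    (fun j => f1 j y) (fun j => g1 j y)
  have hv : ∀ j k, v2 ε j k (y - x) = v2 ε j k (x - y) := fun j k => by
    rw [← neg_sub x y, v2_neg]
  simp only [Prod.swap, hv]
  simp only [mul_sub (v2 _ _ _ _), Finset.sum_sub_distrib] at h
  linarith

lemma slice_main (S : Slice a b A f g f1 g1 f2 g2 ft gt ft1 gt1) (hε : 0 < ε) {m L : ℝ}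
    (hm : ∫ x, f x ^ 2 + g x ^ 2 ≤ m)
    (hL : ∀ x y, |(f x ^ 2 + g x ^ 2) - (f y ^ 2 + g y ^ 2)| ≤ L * ‖x - y‖) :
    cph / 2 * (∫ x, (f x ^ 2 + g x ^ 2) ^ 2)
      - ε * (L * cph1 / 2 * (∫ x, f x ^ 2 + g x ^ 2)
          + m * ∫ x, kap a b x (f x ^ 2 + g x ^ 2))
    ≤ (∫ z, (2 * (f z.1 * ft z.1 + g z.1 * gt z.1) *
        (∑ k, v1 ε k (z.2 - z.1) * (f z.2 * g1 k z.2 - g z.2 * f1 k z.2)) +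
      (f z.1 ^ 2 + g z.1 ^ 2) * (∑ k, v1 ε k (z.2 - z.1) *
      (ft z.2 * g1 k z.2 + f z.2 * gt1 k z.2 - gt z.2 * f1 k z.2 - g z.2 * ft1 k z.2))) ∂vol2)
    + m * ∫ x, ∑ k, v1 ε k x *
      (ft x * g1 k x + f x * gt1 k x - gt x * f1 k x - g x * ft1 k x) := by
  have W := wt_v hε
  have hSD := S.sd
  have dp : ∀ j, Dec (fun y => f y * g1 j y - g y * f1 j y) := fun j =>
    (S.F.d0.mul (S.G.d1 j)).sub (S.G.d0.mul (S.F.d1 j))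
  have dm : Dec (fun y => 2 * (f y * ft y + g y * gt y)) :=
    ((S.F.d0.mul S.dft).add (S.G.d0.mul S.dgt)).const_mul 2
  have dpt : ∀ k, Dec (fun x => ft x * g1 k x + f x * gt1 k x - gt x * f1 k x - g x * ft1 k x) :=
    fun k => (((S.dft.mul (S.G.d1 k)).add (S.F.d0.mul (S.dgt1 k))).sub
      (S.dgt.mul (S.F.d1 k))).sub (S.G.d0.mul (S.dft1 k))
  have I0 := int3s hSD.1 dpt W.b1
  have I1 := int3s (α := fun y => 2 * (f y * ft y + g y * gt y)) dm dp W.b1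
  rw [integral_add I1 I0, mass_part S hε]
  have h1 := mom_part S hε
  have h2 := sym_part S hε
  have h3 := low_plain S hε
  have hm0 : 0 ≤ ∫ x, f x ^ 2 + g x ^ 2 := integral_nonneg fun x => by positivity
  have hK : 0 ≤ ∫ x, ‖x‖ * kap a b x (f x ^ 2 + g x ^ 2) := integral_nonneg fun x =>
    mul_nonneg (norm_nonneg x) (kap_nonneg S.a0 S.b0 x (by positivity))
  have h4 := mul_le_mul_of_nonneg_left h3 (hm0.trans hm)
  have h5 := mul_le_mul_of_nonneg_right hm hK
  have I2 : Integrable (fun z : E3 × E3 => (f z.1 ^ 2 + g z.1 ^ 2) *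
      (15 * ε ^ 4 * qe ε (z.2 - z.1) ^ 7 * (f z.2 ^ 2 + g z.2 ^ 2))) vol2 :=
    int3 (V := fun z => 15 * ε ^ 4 * qe ε z ^ 7) hSD.1 hSD.1
      ((Bd.const _).mul ((Bd_qe hε).pow 7))
  have h6 : cph * (∫ x, (f x ^ 2 + g x ^ 2) ^ 2) - ε * L * cph1 * (∫ x, f x ^ 2 + g x ^ 2)
      ≤ ∫ z, (f z.1 ^ 2 + g z.1 ^ 2) * (15 * ε ^ 4 * qe ε (z.2 - z.1) ^ 7 *
        (f z.2 ^ 2 + g z.2 ^ 2)) ∂vol2 := by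
    rw [integral_prod_symm _ I2, ← integral_const_mul, ← integral_const_mul, ← integral_sub]
    · refine integral_mono ?_ I2.integral_prod_right fun x => ?_
      · exact ((hSD.1.sq.const_mul _).sub (hSD.1.const_mul _)).integrable
      · simp only
        have h := mul_le_mul_of_nonneg_left (smooth_low hε hSD.1 hL x)
          (by positivity : 0 ≤ f x ^ 2 + g x ^ 2)
        rw [← integral_const_mul] at h
        refine le_trans (le_of_eq ?_) (h.trans (le_of_eq ?_))
        · ring
        · refine integral_congr_ae (Eventually.of_forall fun y => ?_)
          simp only; ring
    · exact (hSD.1.sq.const_mul _).integrable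
    · exact (hSD.1.const_mul _).integrable
  linarith

end

/-! ### Space-time calculus -/

/-- smooth shorthand -/
abbrev Sm {V : Type*} [NormedAddCommGroup V] [NormedSpace ℝ V] (F : ℝ × E3 → V) : Prop :=
  ContDiff ℝ (⊤ : ℕ∞) F

section
variable {V : Type*} [NormedAddCommGroup V] [NormedSpace ℝ V]

/-- directional derivative -/
def dv (v : ℝ × E3) (F : ℝ × E3 → V) (z : ℝ × E3) : V := fderiv ℝ F z v

/-- time direction -/
def vt : ℝ × E3 := (1, 0)
/-- space directions -/
def vx (j : Fin 3) : ℝ × E3 := (0, e3 j)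

lemma Sm.diff {F : ℝ × E3 → V} (hF : Sm F) : Differentiable ℝ F :=
  ContDiff.differentiable hF (by simp)

lemma Sm.fd {F : ℝ × E3 → V} (hF : Sm F) : Sm (fderiv ℝ F) :=
  ContDiff.fderiv_right hF (by simp)

lemma Sm.dv {F : ℝ × E3 → V} (hF : Sm F) (v : ℝ × E3) : Sm (dv v F) :=
  ContDiff.clm_apply hF.fd contDiff_const

lemma dv_dv {F : ℝ × E3 → V} (hF : Sm F) (v w : ℝ × E3) (z : ℝ × E3) :
    dv v (dv w F) z = fderiv ℝ (fderiv ℝ F) z v w := by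
  have h : fderiv ℝ (fun y => fderiv ℝ F y w) z = _ :=
    fderiv_clm_apply (Sm.diff hF.fd z) (differentiableAt_const w)
  unfold dv
  rw [h]
  simp

lemma dv_comm {F : ℝ × E3 → V} (hF : Sm F) (v w : ℝ × E3) (z : ℝ × E3) :
    dv v (dv w F) z = dv w (dv v F) z := by
  rw [dv_dv hF, dv_dv hF]
  exact (ContDiff.contDiffAt hF).isSymmSndFDerivAt
    (by rw [minSmoothness_of_isRCLikeNormedField]; exact WithTop.coe_le_coe.mpr le_top) v w

lemma dv_time {F : ℝ × E3 → V} (hF : Sm F) (t : ℝ) (x : E3) :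
    HasDerivAt (fun s => F (s, x)) (dv vt F (t, x)) t := by
  have h1 : HasDerivAt (fun s : ℝ => (s, x)) vt t :=
    (hasDerivAt_id t).prodMk (hasDerivAt_const t x)
  exact (hF.diff (t, x)).hasFDerivAt.comp_hasDerivAt t h1

lemma dv_space {F : ℝ × E3 → V} (hF : Sm F) (t : ℝ) (x : E3) (w : E3) :
    fderiv ℝ (fun y => F (t, y)) x w = dv (0, w) F (t, x) := by
  have h1 : HasFDerivAt (fun y : E3 => (t, y)) (ContinuousLinearMap.inr ℝ ℝ E3) x :=
    (hasFDerivAt_const t x).prodMk (hasFDerivAt_id x)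
  have h2 := ((hF.diff (t, x)).hasFDerivAt.comp x h1).fderiv
  have h3 : (F ∘ fun y => (t, y)) = fun y => F (t, y) := rfl
  rw [h3] at h2
  rw [h2]
  simp [dv]

lemma Sm.slice {F : ℝ × E3 → V} (hF : Sm F) (t : ℝ) : ContDiff ℝ (⊤ : ℕ∞) (fun y => F (t, y)) :=
  ContDiff.comp hF (contDiff_const.prodMk contDiff_id)

end

lemma dv_PD {F : ℝ × E3 → ℝ} (hF : Sm F) (t : ℝ) (j : Fin 3) :
    PD j (fun x => F (t, x)) (fun x => dv (vx j) F (t, x)) := by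
  intro x
  have h1 : HasDerivAt (fun s : ℝ => (t, x + s • e3 j)) (vx j) 0 := by
    have := ((hasDerivAt_id (0 : ℝ)).smul_const (e3 j)).const_add x
    simp only [one_smul] at this
    exact (hasDerivAt_const (0 : ℝ) t).prodMk this
  have h2 := (hF.diff (t, x + (0 : ℝ) • e3 j)).hasFDerivAt.comp_hasDerivAt (0 : ℝ) h1
  have h3 : HasDerivAt (fun s : ℝ => F (t, x + s • e3 j)) _ 0 := h2
  refine h3.congr_deriv ?_
  simp [dv]

lemma dv_re {U : ℝ × E3 → ℂ} (hU : Sm U) (v z : ℝ × E3) :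
    dv v (fun z => (U z).re) z = (dv v U z).re := by
  have := (Complex.reCLM.hasFDerivAt.comp z (hU.diff z).hasFDerivAt).fderiv
  have h3 : (Complex.reCLM ∘ U) = fun z => (U z).re := rfl
  rw [h3] at this
  unfold dv
  rw [this]; simp

lemma dv_im {U : ℝ × E3 → ℂ} (hU : Sm U) (v z : ℝ × E3) :
    dv v (fun z => (U z).im) z = (dv v U z).im := by
  have := (Complex.imCLM.hasFDerivAt.comp z (hU.diff z).hasFDerivAt).fderiv
  have h3 : (Complex.imCLM ∘ U) = fun z => (U z).im := rfl
  rw [h3] at this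
  unfold dv
  rw [this]; simp

lemma Sm.re {U : ℝ × E3 → ℂ} (hU : Sm U) : Sm (fun z => (U z).re) :=
  Complex.reCLM.contDiff.comp hU
lemma Sm.im {U : ℝ × E3 → ℂ} (hU : Sm U) : Sm (fun z => (U z).im) :=
  Complex.imCLM.contDiff.comp hU

lemma norm_e3 (j : Fin 3) : ‖e3 j‖ = 1 := by simp [e3]

/-- Everything known about the solution on a time interval. -/
structure SolT (a b T B : ℝ) (F G : ℝ × E3 → ℝ) : Prop where
  B0 : 0 ≤ B
  sF : Sm F
  sG : Sm G
  uF : ∀ t ∈ Set.Icc (-T) T, ∀ x, |F (t, x)| ≤ B * dk x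
  uG : ∀ t ∈ Set.Icc (-T) T, ∀ x, |G (t, x)| ≤ B * dk x
  uF1 : ∀ t ∈ Set.Icc (-T) T, ∀ x j, |dv (vx j) F (t, x)| ≤ B * dk x
  uG1 : ∀ t ∈ Set.Icc (-T) T, ∀ x j, |dv (vx j) G (t, x)| ≤ B * dk x
  uF2 : ∀ t ∈ Set.Icc (-T) T, ∀ x j k, |dv (vx j) (dv (vx k) F) (t, x)| ≤ B * dk x
  uG2 : ∀ t ∈ Set.Icc (-T) T, ∀ x j k, |dv (vx j) (dv (vx k) G) (t, x)| ≤ B * dk x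
  uFt : ∀ t ∈ Set.Icc (-T) T, ∀ x, |dv vt F (t, x)| ≤ B * dk x
  uGt : ∀ t ∈ Set.Icc (-T) T, ∀ x, |dv vt G (t, x)| ≤ B * dk x
  uFt1 : ∀ t ∈ Set.Icc (-T) T, ∀ x j, |dv (vx j) (dv vt F) (t, x)| ≤ B * dk x
  uGt1 : ∀ t ∈ Set.Icc (-T) T, ∀ x j, |dv (vx j) (dv vt G) (t, x)| ≤ B * dk x
  lF : ∀ t ∈ Set.Icc (-T) T, ∀ x y, |F (t, x) - F (t, y)| ≤ B * ‖x - y‖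
  lG : ∀ t ∈ Set.Icc (-T) T, ∀ x y, |G (t, x) - G (t, y)| ≤ B * ‖x - y‖
  eq1 : ∀ t x, x ≠ 0 → dv vt F (t, x) = - (∑ j, dv (vx j) (dv (vx j) G) (t, x))
    + QQ a b x (F (t, x) ^ 2 + G (t, x) ^ 2) * G (t, x)
  eq2 : ∀ t x, x ≠ 0 → dv vt G (t, x) = (∑ j, dv (vx j) (dv (vx j) F) (t, x))
    - QQ a b x (F (t, x) ^ 2 + G (t, x) ^ 2) * F (t, x)

lemma decay_of {k0 k4 C r : ℝ} (hr : 0 ≤ r) {x : E3} (hC : k0 + k4 = C)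
    (h0 : ‖x‖ ^ 0 * r ≤ k0) (h4 : ‖x‖ ^ 4 * r ≤ k4) : r ≤ 8 * C * dk x := by
  rw [dk_eq, ← div_eq_mul_inv, le_div_iff₀ (by positivity)]
  have hn := norm_nonneg x
  have h1 : (1 + ‖x‖) ^ 4 ≤ 8 * (1 + ‖x‖ ^ 4) := by
    nlinarith [sq_nonneg (‖x‖ - 1), sq_nonneg (‖x‖ ^ 2 - 1), sq_nonneg (‖x‖ * (‖x‖ - 1)),
      sq_nonneg (‖x‖ ^ 2 - ‖x‖)]
  have := mul_le_mul_of_nonneg_left h1 hr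
  nlinarith

section
variable {a b : ℝ} {u : ℝ → E3 → ℂ}

lemma unif_dk (hu : IsSchwartzSolution a b 1 u) (n : ℕ) (T : ℝ) (hT : 0 < T) :
    ∃ C : ℝ, 0 ≤ C ∧ ∀ t ∈ Set.Icc (-T) T, ∀ x : E3,
      ‖iteratedFDeriv ℝ n (u t) x‖ ≤ C * dk x ∧
      ‖iteratedFDeriv ℝ n (fun y => deriv (fun s => u s y) t) x‖ ≤ C * dk x := by
  obtain ⟨C0, h0⟩ := hu.unif_bound 0 n T hT
  obtain ⟨C4, h4⟩ := hu.unif_bound 4 n T hT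
  have p0 : 0 ≤ C0 := le_trans (by positivity) (h0 0 ⟨by linarith, hT.le⟩ 0)
  have p4 : 0 ≤ C4 := le_trans (by positivity) (h4 0 ⟨by linarith, hT.le⟩ 0)
  refine ⟨8 * (C0 + C4), by positivity, fun t ht x => ?_⟩
  have h0 := h0 t ht x
  have h4 := h4 t ht x
  constructor
  · refine decay_of (norm_nonneg _) rfl (le_trans ?_ h0) (le_trans ?_ h4)
    · exact le_add_of_nonneg_right (by positivity)
    · exact le_add_of_nonneg_right (by positivity)
  · refine decay_of (norm_nonneg _) rfl (le_trans ?_ h0) (le_trans ?_ h4)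
    · exact le_add_of_nonneg_left (by positivity)
    · exact le_add_of_nonneg_left (by positivity)

lemma pd_eq {U : ℝ × E3 → ℂ} (hU : Sm U) (t : ℝ) (x : E3) (j : Fin 3) :
    pd j (fun y => U (t, y)) x = dv (vx j) U (t, x) := dv_space hU t x (e3 j)

lemma norm_dv1 {U : ℝ × E3 → ℂ} (hU : Sm U) (t : ℝ) (x : E3) (j : Fin 3) :
    ‖dv (vx j) U (t, x)‖ ≤ ‖iteratedFDeriv ℝ 1 (fun y => U (t, y)) x‖ := by
  rw [← pd_eq hU, norm_iteratedFDeriv_one, pd]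
  exact (ContinuousLinearMap.le_opNorm _ _).trans (by rw [norm_e3, mul_one])

lemma norm_dv2 {U : ℝ × E3 → ℂ} (hU : Sm U) (t : ℝ) (x : E3) (j k : Fin 3) :
    ‖dv (vx j) (dv (vx k) U) (t, x)‖ ≤ ‖iteratedFDeriv ℝ 2 (fun y => U (t, y)) x‖ := by
  have hs := hU.slice t
  have e : (fun y => dv (vx k) U (t, y)) = fun y => fderiv ℝ (fun y => U (t, y)) y (e3 k) :=
    funext fun y => (pd_eq hU t y k).symm
  have hd : DifferentiableAt ℝ (fderiv ℝ (fun y => U (t, y))) x :=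
    (ContDiff.fderiv_right hs (m := 1) (by norm_cast)).differentiable (by simp) x
  rw [← pd_eq (hU.dv _), e, pd, fderiv_clm_apply hd (differentiableAt_const _),
    show (2 : ℕ) = 1 + 1 from rfl, ← norm_iteratedFDeriv_fderiv, norm_iteratedFDeriv_one]
  simp only [fderiv_fun_const, Pi.zero_apply, ContinuousLinearMap.comp_zero, zero_add,
    ContinuousLinearMap.flip_apply]
  refine (ContinuousLinearMap.le_opNorm _ _).trans ?_
  rw [norm_e3, mul_one]
  exact (ContinuousLinearMap.le_opNorm _ _).trans (by rw [norm_e3, mul_one])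

lemma SolT_of (hu : IsSchwartzSolution a b 1 u) (T : ℝ) (hT : 0 < T) :
    ∃ B, SolT a b T B (fun z => (u z.1 z.2).re) (fun z => (u z.1 z.2).im) := by
  obtain ⟨C0, p0, h0⟩ := unif_dk hu 0 T hT
  obtain ⟨C1, p1, h1⟩ := unif_dk hu 1 T hT
  obtain ⟨C2, p2, h2⟩ := unif_dk hu 2 T hT
  have hU : Sm (fun z : ℝ × E3 => u z.1 z.2) := hu.smooth
  have hd : ∀ x (t : ℝ), deriv (fun s => u s x) t = dv vt (fun z : ℝ × E3 => u z.1 z.2) (t, x) :=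
    fun x t => (dv_time hU t x).deriv
  have hB0 : ∀ x : E3, C0 * dk x ≤ (C0 + C1 + C2) * dk x := fun x =>
    mul_le_mul_of_nonneg_right (by linarith) (dk_nonneg x)
  have hB1 : ∀ x : E3, C1 * dk x ≤ (C0 + C1 + C2) * dk x := fun x =>
    mul_le_mul_of_nonneg_right (by linarith) (dk_nonneg x)
  have hB2 : ∀ x : E3, C2 * dk x ≤ (C0 + C1 + C2) * dk x := fun x =>
    mul_le_mul_of_nonneg_right (by linarith) (dk_nonneg x)
  have reF : ∀ v, dv v (fun z : ℝ × E3 => (u z.1 z.2).re)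
      = fun z => (dv v (fun z : ℝ × E3 => u z.1 z.2) z).re := fun v => funext fun z => dv_re hU v z
  have imF : ∀ v, dv v (fun z : ℝ × E3 => (u z.1 z.2).im)
      = fun z => (dv v (fun z : ℝ × E3 => u z.1 z.2) z).im := fun v => funext fun z => dv_im hU v z
  have reF2 : ∀ v w, dv v (fun z => (dv w (fun z : ℝ × E3 => u z.1 z.2) z).re)
      = fun z => (dv v (dv w (fun z : ℝ × E3 => u z.1 z.2)) z).re :=
    fun v w => funext fun z => dv_re (hU.dv w) v z
  have imF2 : ∀ v w, dv v (fun z => (dv w (fun z : ℝ × E3 => u z.1 z.2) z).im)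
      = fun z => (dv v (dv w (fun z : ℝ × E3 => u z.1 z.2)) z).im :=
    fun v w => funext fun z => dv_im (hU.dv w) v z
  have b0 : ∀ t ∈ Set.Icc (-T) T, ∀ x, ‖u t x‖ ≤ (C0 + C1 + C2) * dk x := fun t ht x => by
    have := (h0 t ht x).1
    rw [norm_iteratedFDeriv_zero] at this
    exact this.trans (hB0 x)
  have b1 : ∀ t ∈ Set.Icc (-T) T, ∀ x j, ‖dv (vx j) (fun z : ℝ × E3 => u z.1 z.2) (t, x)‖
      ≤ (C0 + C1 + C2) * dk x := fun t ht x j =>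
    ((norm_dv1 hU t x j).trans (h1 t ht x).1).trans (hB1 x)
  have b2 : ∀ t ∈ Set.Icc (-T) T, ∀ x j k,
      ‖dv (vx j) (dv (vx k) (fun z : ℝ × E3 => u z.1 z.2)) (t, x)‖
      ≤ (C0 + C1 + C2) * dk x := fun t ht x j k =>
    ((norm_dv2 hU t x j k).trans (h2 t ht x).1).trans (hB2 x)
  have bt : ∀ t ∈ Set.Icc (-T) T, ∀ x, ‖dv vt (fun z : ℝ × E3 => u z.1 z.2) (t, x)‖
      ≤ (C0 + C1 + C2) * dk x := fun t ht x => by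
    have := (h0 t ht x).2
    rw [norm_iteratedFDeriv_zero, hd] at this
    exact this.trans (hB0 x)
  have bt1 : ∀ t ∈ Set.Icc (-T) T, ∀ x j, ‖dv (vx j) (dv vt (fun z : ℝ × E3 => u z.1 z.2)) (t, x)‖
      ≤ (C0 + C1 + C2) * dk x := fun t ht x j => by
    have := (h1 t ht x).2
    simp only [hd] at this
    exact ((norm_dv1 (hU.dv vt) t x j).trans this).trans (hB1 x)
  have lU : ∀ t ∈ Set.Icc (-T) T, ∀ x y, ‖u t x - u t y‖ ≤ (C0 + C1 + C2) * ‖x - y‖ := by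
    intro t ht x y
    refine Convex.norm_image_sub_le_of_norm_fderiv_le (𝕜 := ℝ) (s := Set.univ)
      (fun z _ => (hU.slice t).differentiable (by simp) z) (fun z _ => ?_) convex_univ
      (Set.mem_univ _) (Set.mem_univ _)
    have := (h1 t ht z).1
    rw [norm_iteratedFDeriv_one] at this
    refine this.trans ?_
    calc C1 * dk z ≤ C1 * 1 := mul_le_mul_of_nonneg_left (dk_le_one z) p1
      _ ≤ _ := by linarith
  have heq : ∀ (t : ℝ) (x : E3), x ≠ 0 →
      Complex.I * dv vt (fun z : ℝ × E3 => u z.1 z.2) (t, x)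
        + ∑ j, dv (vx j) (dv (vx j) (fun z : ℝ × E3 => u z.1 z.2)) (t, x)
        = ((QQ a b x ((u t x).re ^ 2 + (u t x).im ^ 2) : ℝ) : ℂ) * u t x := by
    intro t x hx
    have h := hu.eqn t x hx
    have hl : lap (u t) x = ∑ j, dv (vx j) (dv (vx j) (fun z : ℝ × E3 => u z.1 z.2)) (t, x) := by
      unfold lap
      refine Finset.sum_congr rfl fun j _ => ?_
      rw [← pd_eq (hU.dv _)]
      congr 1
      funext y
      exact pd_eq hU t y j
    rw [hd, hl, sub_eq_iff_eq_add] at h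
    rw [h]
    have hn : ‖u t x‖ ^ 2 = (u t x).re ^ 2 + (u t x).im ^ 2 := by
      rw [Complex.sq_norm, Complex.normSq_apply]; ring
    rw [hn, QQ]
    push_cast
    ring
  refine ⟨C0 + C1 + C2, by positivity, hU.re, hU.im, fun t ht x => ?_, fun t ht x => ?_,
    fun t ht x j => ?_, fun t ht x j => ?_, fun t ht x j k => ?_, fun t ht x j k => ?_,
    fun t ht x => ?_, fun t ht x => ?_, fun t ht x j => ?_, fun t ht x j => ?_,
    fun t ht x y => ?_, fun t ht x y => ?_, fun t x hx => ?_, fun t x hx => ?_⟩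
  · exact (Complex.abs_re_le_norm _).trans (b0 t ht x)
  · exact (Complex.abs_im_le_norm _).trans (b0 t ht x)
  · rw [reF]; exact (Complex.abs_re_le_norm _).trans (b1 t ht x j)
  · rw [imF]; exact (Complex.abs_im_le_norm _).trans (b1 t ht x j)
  · rw [reF, reF2]; exact (Complex.abs_re_le_norm _).trans (b2 t ht x j k)
  · rw [imF, imF2]; exact (Complex.abs_im_le_norm _).trans (b2 t ht x j k)
  · rw [reF]; exact (Complex.abs_re_le_norm _).trans (bt t ht x)
  · rw [imF]; exact (Complex.abs_im_le_norm _).trans (bt t ht x)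
  · rw [reF, reF2]; exact (Complex.abs_re_le_norm _).trans (bt1 t ht x j)
  · rw [imF, imF2]; exact (Complex.abs_im_le_norm _).trans (bt1 t ht x j)
  · have := (Complex.abs_re_le_norm (u t x - u t y)).trans (lU t ht x y)
    simpa using this
  · have := (Complex.abs_im_le_norm (u t x - u t y)).trans (lU t ht x y)
    simpa using this
  · have h := congrArg Complex.im (heq t x hx)
    simp only [Complex.add_im, Complex.mul_im, Complex.I_re, Complex.I_im, zero_mul, one_mul,
      zero_add, Complex.im_sum, Complex.ofReal_re, Complex.ofReal_im, add_zero] at h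
    simp only [reF, imF, imF2]
    linarith
  · have h := congrArg Complex.re (heq t x hx)
    simp only [Complex.add_re, Complex.mul_re, Complex.I_re, Complex.I_im, zero_mul, one_mul,
      zero_sub, Complex.re_sum, Complex.ofReal_re, Complex.ofReal_im, sub_zero] at h
    simp only [reF, imF, reF2]
    linarith

end

section
variable {a b T B : ℝ} {F G : ℝ × E3 → ℝ}

lemma Sm.meas {H : ℝ × E3 → ℝ} (h : Sm H) (t : ℝ) : Measurable (fun x => H (t, x)) :=
  (h.slice t).continuous.measurable

lemma vanish_aux {h : E3 → ℝ} {A : ℝ} (hc : Continuous h)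
    (hx : ∀ x, x ≠ 0 → |h x| ≤ A * ‖x‖ ^ 2 * dk x) (x : E3) : |h x| ≤ A * ‖x‖ ^ 2 * dk x := by
  have hdk : Continuous dk := by
    have : dk = fun x : E3 => ((1 + ‖x‖) ^ 4)⁻¹ := funext dk_eq
    rw [this]
    exact (by fun_prop : Continuous fun x : E3 => (1 + ‖x‖) ^ 4).inv₀ fun x => by positivity
  have hcl : IsClosed {x : E3 | |h x| ≤ A * ‖x‖ ^ 2 * dk x} :=
    isClosed_le (by fun_prop) (by fun_prop)
  have hd : Dense ({0}ᶜ : Set E3) := dense_compl_singleton 0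
  exact (hcl.closure_subset_iff.mpr (fun y hy => hx y hy)) (hd x)

lemma vanish_pt {a b h D c : ℝ} (ha : 0 < a) {x : E3} (hx : x ≠ 0) {r : ℝ} (hr : 0 ≤ r)
    (hq : |QQ a b x r * h| ≤ c * D) : |h| ≤ c / a * ‖x‖ ^ 2 * D := by
  have hn : 0 < ‖x‖ := norm_pos_iff.mpr hx
  have hQ : a * (‖x‖ ^ 2)⁻¹ ≤ QQ a b x r := by
    unfold QQ
    have : 0 ≤ ‖x‖ ^ (-b) * r := by positivity
    linarith
  have h1 : a * (‖x‖ ^ 2)⁻¹ * |h| ≤ c * D := by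
    refine le_trans ?_ hq
    rw [abs_mul]
    exact mul_le_mul_of_nonneg_right (hQ.trans (le_abs_self _)) (abs_nonneg h)
  have : |h| = (a * (‖x‖ ^ 2)⁻¹ * |h|) * (‖x‖ ^ 2 / a) := by field_simp
  rw [this]
  calc _ ≤ (c * D) * (‖x‖ ^ 2 / a) := by gcongr
    _ = _ := by ring

lemma SolT.slice (S : SolT a b T B F G) (ha : 0 < a) (hb0 : 0 < b) (hb1 : b < 1) {t : ℝ}
    (ht : t ∈ Set.Icc (-T) T) :
    Slice a b (4 * B / a) (fun x => F (t, x)) (fun x => G (t, x))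
      (fun j x => dv (vx j) F (t, x)) (fun j x => dv (vx j) G (t, x))
      (fun j k x => dv (vx j) (dv (vx k) F) (t, x)) (fun j k x => dv (vx j) (dv (vx k) G) (t, x))
      (fun x => dv vt F (t, x)) (fun x => dv vt G (t, x))
      (fun j x => dv (vx j) (dv vt F) (t, x)) (fun j x => dv (vx j) (dv vt G) (t, x)) where
  a0 := ha
  b0 := hb0
  b1 := hb1
  A0 := by have := S.B0; positivity
  F := ⟨⟨S.sF.meas t, B, S.B0, S.uF t ht⟩,
    fun j => ⟨(S.sF.dv _).meas t, B, S.B0, fun x => S.uF1 t ht x j⟩,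
    fun j k => ⟨((S.sF.dv _).dv _).meas t, B, S.B0, fun x => S.uF2 t ht x j k⟩,
    fun j => dv_PD S.sF t j, fun j k => dv_PD (S.sF.dv _) t j,
    fun j k x => dv_comm S.sF _ _ _⟩
  G := ⟨⟨S.sG.meas t, B, S.B0, S.uG t ht⟩,
    fun j => ⟨(S.sG.dv _).meas t, B, S.B0, fun x => S.uG1 t ht x j⟩,
    fun j k => ⟨((S.sG.dv _).dv _).meas t, B, S.B0, fun x => S.uG2 t ht x j k⟩,
    fun j => dv_PD S.sG t j, fun j k => dv_PD (S.sG.dv _) t j,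
    fun j k x => dv_comm S.sG _ _ _⟩
  hf := by
    refine vanish_aux (S.sF.slice t).continuous fun x hx => ?_
    refine vanish_pt (b := b) ha hx (by positivity : 0 ≤ F (t, x) ^ 2 + G (t, x) ^ 2) ?_
    have h : QQ a b x (F (t, x) ^ 2 + G (t, x) ^ 2) * F (t, x)
        = (∑ j, dv (vx j) (dv (vx j) F) (t, x)) - dv vt G (t, x) := by
      rw [S.eq2 t x hx]; ring
    rw [h, Fin.sum_univ_three]
    have h0 := abs_le.mp (S.uF2 t ht x 0 0)
    have h1 := abs_le.mp (S.uF2 t ht x 1 1)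
    have h2 := abs_le.mp (S.uF2 t ht x 2 2)
    have h3 := abs_le.mp (S.uGt t ht x)
    rw [abs_le]
    constructor <;> linarith [h0.1, h0.2, h1.1, h1.2, h2.1, h2.2, h3.1, h3.2]
  hg := by
    refine vanish_aux (S.sG.slice t).continuous fun x hx => ?_
    refine vanish_pt (b := b) ha hx (by positivity : 0 ≤ F (t, x) ^ 2 + G (t, x) ^ 2) ?_
    have h : QQ a b x (F (t, x) ^ 2 + G (t, x) ^ 2) * G (t, x)
        = (∑ j, dv (vx j) (dv (vx j) G) (t, x)) + dv vt F (t, x) := by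
      rw [S.eq1 t x hx]; ring
    rw [h, Fin.sum_univ_three]
    have h0 := abs_le.mp (S.uG2 t ht x 0 0)
    have h1 := abs_le.mp (S.uG2 t ht x 1 1)
    have h2 := abs_le.mp (S.uG2 t ht x 2 2)
    have h3 := abs_le.mp (S.uFt t ht x)
    rw [abs_le]
    constructor <;> linarith [h0.1, h0.2, h1.1, h1.2, h2.1, h2.2, h3.1, h3.2]
  dft := ⟨(S.sF.dv _).meas t, B, S.B0, S.uFt t ht⟩
  dgt := ⟨(S.sG.dv _).meas t, B, S.B0, S.uGt t ht⟩
  dft1 k := ⟨((S.sF.dv _).dv _).meas t, B, S.B0, fun x => S.uFt1 t ht x k⟩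
  dgt1 k := ⟨((S.sG.dv _).dv _).meas t, B, S.B0, fun x => S.uGt1 t ht x k⟩
  hft k := dv_PD (S.sF.dv _) t k
  hgt k := dv_PD (S.sG.dv _) t k
  eq1 := S.eq1 t
  eq2 := S.eq2 t

lemma sq_le_of_abs {x c d : ℝ} (hd1 : d ≤ 1) (hd : 0 ≤ d) (h : |x| ≤ c * d) :
    x ^ 2 ≤ c ^ 2 * d := by
  have h1 : x ^ 2 ≤ (c * d) ^ 2 := by rw [← sq_abs]; gcongr
  have : c ^ 2 * d ^ 2 ≤ c ^ 2 * d := by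
    apply mul_le_mul_of_nonneg_left _ (sq_nonneg c); nlinarith
  nlinarith

lemma kap_bound {a b A B : ℝ} (ha : 0 < a) (hb0 : 0 < b) (hb1 : b < 1) {x : E3} {f g : ℝ}
    (hf : |f| ≤ B * dk x) (hg : |g| ≤ B * dk x) (hf' : |f| ≤ A * ‖x‖ ^ 2 * dk x)
    (hg' : |g| ≤ A * ‖x‖ ^ 2 * dk x) :
    kap a b x (f ^ 2 + g ^ 2) ≤
      (2 * a * (2 * A ^ 2) + b / 2 * ((2 * B ^ 2 + 2 * A ^ 2) * (2 * B ^ 2))) * dk x := by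
  have hd := dk_nonneg x
  have hd1 := dk_le_one x
  by_cases hx : x = 0
  · subst hx
    simp at hf' hg'
    subst hf'; subst hg'
    simp [kap]
    positivity
  have hn : 0 < ‖x‖ := norm_pos_iff.mpr hx
  set r := f ^ 2 + g ^ 2 with hr
  have r0 : 0 ≤ r := by positivity
  have h1 : r ≤ 2 * B ^ 2 * dk x := by
    have := sq_le_of_abs hd1 hd hf
    have := sq_le_of_abs hd1 hd hg
    linarith
  have h1' : r ≤ 2 * B ^ 2 := h1.trans (mul_le_of_le_one_right (by positivity) hd1)
  have h2 : r ≤ ‖x‖ ^ 4 * (2 * A ^ 2 * dk x) := by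
    have := sq_le_of_abs hd1 hd hf'
    have := sq_le_of_abs hd1 hd hg'
    nlinarith
  have h3 : (‖x‖ ^ 4)⁻¹ * r ≤ 2 * A ^ 2 * dk x := by
    rw [inv_mul_le_iff₀ (by positivity)]; exact h2
  have h4 : ‖x‖ ^ (-(b + 2)) * r ≤ (2 * B ^ 2 + 2 * A ^ 2) * dk x := by
    have := mul_le_mul_of_nonneg_right (rpow_sing hn (by linarith : 0 ≤ b + 2) (by linarith)) r0
    linarith
  unfold kap
  calc 2 * a * ((‖x‖ ^ 4)⁻¹ * r) + b / 2 * (‖x‖ ^ (-(b + 2)) * (r * r))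
      = 2 * a * ((‖x‖ ^ 4)⁻¹ * r) + b / 2 * ((‖x‖ ^ (-(b + 2)) * r) * r) := by ring
    _ ≤ 2 * a * (2 * A ^ 2 * dk x) + b / 2 * (((2 * B ^ 2 + 2 * A ^ 2) * dk x) * (2 * B ^ 2)) := by
        gcongr
    _ = _ := by ring

lemma SolT.kap_le (S : SolT a b T B F G) (ha : 0 < a) (hb0 : 0 < b) (hb1 : b < 1) :
    ∃ K, 0 ≤ K ∧ ∀ t ∈ Set.Icc (-T) T,
      ∫ x, kap a b x (F (t, x) ^ 2 + G (t, x) ^ 2) ≤ K := by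
  refine ⟨∫ x, (2 * a * (2 * (4 * B / a) ^ 2) + b / 2 *
      ((2 * B ^ 2 + 2 * (4 * B / a) ^ 2) * (2 * B ^ 2))) * dk x,
    integral_nonneg fun x => ?_, fun t ht => ?_⟩
  · have := dk_nonneg x; show 0 ≤ _; positivity
  · have Sl := S.slice ha hb0 hb1 ht
    refine integral_mono (Dec_kap Sl.sd hb0 hb1).integrable (dk_integrable.const_mul _) fun x => ?_
    exact kap_bound ha hb0 hb1 (S.uF t ht x) (S.uG t ht x) (Sl.hf x) (Sl.hg x)

lemma SolT.lip (S : SolT a b T B F G) {t : ℝ} (ht : t ∈ Set.Icc (-T) T) (x y : E3) :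
    |(F (t, x) ^ 2 + G (t, x) ^ 2) - (F (t, y) ^ 2 + G (t, y) ^ 2)| ≤ (4 * B ^ 2) * ‖x - y‖ := by
  have hB := S.B0
  have key : ∀ p q d : ℝ, |p| ≤ B → |q| ≤ B → |p - q| ≤ B * d → |p ^ 2 - q ^ 2| ≤ 2 * B ^ 2 * d := by
    intro p q d hp hq h
    rw [show p ^ 2 - q ^ 2 = (p + q) * (p - q) by ring, abs_mul]
    calc |p + q| * |p - q| ≤ (B + B) * (B * d) :=
          mul_le_mul ((abs_add_le _ _).trans (add_le_add hp hq)) h (abs_nonneg _) (by linarith)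
      _ = _ := by ring
  have hb : ∀ x, B * dk x ≤ B := fun x => mul_le_of_le_one_right hB (dk_le_one x)
  have h1 := key _ _ _ ((S.uF t ht x).trans (hb x)) ((S.uF t ht y).trans (hb y)) (S.lF t ht x y)
  have h2 := key _ _ _ ((S.uG t ht x).trans (hb x)) ((S.uG t ht y).trans (hb y)) (S.lG t ht x y)
  calc _ = |(F (t, x) ^ 2 - F (t, y) ^ 2) + (G (t, x) ^ 2 - G (t, y) ^ 2)| := by ring_nf
    _ ≤ _ := (abs_add_le _ _).trans (by linarith)

/-- mass density -/
def Rh (F G : ℝ × E3 → ℝ) (z : ℝ × E3) : ℝ := F z ^ 2 + G z ^ 2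
/-- momentum density -/
def Pm (F G : ℝ × E3 → ℝ) (k : Fin 3) (z : ℝ × E3) : ℝ :=
  F z * dv (vx k) G z - G z * dv (vx k) F z
/-- time derivative of the mass density -/
def Rt (F G : ℝ × E3 → ℝ) (z : ℝ × E3) : ℝ := 2 * (F z * dv vt F z + G z * dv vt G z)
/-- time derivative of the momentum density -/
def Pt (F G : ℝ × E3 → ℝ) (k : Fin 3) (z : ℝ × E3) : ℝ :=
  dv vt F z * dv (vx k) G z + F z * dv (vx k) (dv vt G) z - dv vt G z * dv (vx k) F z
    - G z * dv (vx k) (dv vt F) z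

lemma Rh_time (hF : Sm F) (hG : Sm G) (t : ℝ) (x : E3) :
    HasDerivAt (fun s => Rh F G (s, x)) (Rt F G (t, x)) t := by
  unfold Rh Rt
  refine (((dv_time hF t x).fun_pow 2).add ((dv_time hG t x).fun_pow 2)).congr_deriv ?_
  simp; ring

lemma Pm_time (hF : Sm F) (hG : Sm G) (k : Fin 3) (t : ℝ) (x : E3) :
    HasDerivAt (fun s => Pm F G k (s, x)) (Pt F G k (t, x)) t := by
  unfold Pm Pt
  refine (((dv_time hF t x).mul (dv_time (hG.dv (vx k)) t x)).sub
    ((dv_time hG t x).mul (dv_time (hF.dv (vx k)) t x))).congr_deriv ?_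
  rw [dv_comm hG vt, dv_comm hF vt]; ring

lemma Rh_sm (hF : Sm F) (hG : Sm G) : Sm (Rh F G) :=
  ContDiff.add (ContDiff.pow hF 2) (ContDiff.pow hG 2)
lemma Pm_sm (hF : Sm F) (hG : Sm G) (k : Fin 3) : Sm (Pm F G k) :=
  ContDiff.sub (ContDiff.mul hF (hG.dv _)) (ContDiff.mul hG (hF.dv _))
lemma Rt_sm (hF : Sm F) (hG : Sm G) : Sm (Rt F G) :=
  ContDiff.mul contDiff_const (ContDiff.add (ContDiff.mul hF (hF.dv _))
    (ContDiff.mul hG (hG.dv _)))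
lemma Pt_sm (hF : Sm F) (hG : Sm G) (k : Fin 3) : Sm (Pt F G k) :=
  ContDiff.sub (ContDiff.sub (ContDiff.add (ContDiff.mul (hF.dv _) (hG.dv _))
    (ContDiff.mul hF ((hG.dv _).dv _))) (ContDiff.mul (hG.dv _) (hF.dv _)))
    (ContDiff.mul hG ((hF.dv _).dv _))

lemma mul_dk {p q d : ℝ} (hB : 0 ≤ B) (hd0 : 0 ≤ d) (hd : d ≤ 1) (hp : |p| ≤ B * d)
    (hq : |q| ≤ B * d) : |p * q| ≤ B ^ 2 * d := by
  rw [abs_mul]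
  calc |p| * |q| ≤ (B * d) * (B * d) := mul_le_mul hp hq (abs_nonneg _) (by positivity)
    _ = B ^ 2 * (d * d) := by ring
    _ ≤ B ^ 2 * (d * 1) := by gcongr
    _ = _ := by ring

lemma SolT.uR (S : SolT a b T B F G) {t : ℝ} (ht : t ∈ Set.Icc (-T) T) (x : E3) :
    |Rh F G (t, x)| ≤ 4 * B ^ 2 * dk x := by
  have h1 := abs_le.mp (mul_dk S.B0 (dk_nonneg x) (dk_le_one x) (S.uF t ht x) (S.uF t ht x))
  have h2 := abs_le.mp (mul_dk S.B0 (dk_nonneg x) (dk_le_one x) (S.uG t ht x) (S.uG t ht x))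
  unfold Rh
  rw [abs_le]
  constructor <;> nlinarith [h1.1, h1.2, h2.1, h2.2]

lemma SolT.uRt (S : SolT a b T B F G) {t : ℝ} (ht : t ∈ Set.Icc (-T) T) (x : E3) :
    |Rt F G (t, x)| ≤ 4 * B ^ 2 * dk x := by
  have h1 := abs_le.mp (mul_dk S.B0 (dk_nonneg x) (dk_le_one x) (S.uF t ht x) (S.uFt t ht x))
  have h2 := abs_le.mp (mul_dk S.B0 (dk_nonneg x) (dk_le_one x) (S.uG t ht x) (S.uGt t ht x))
  unfold Rt
  rw [abs_le]
  constructor <;> nlinarith [h1.1, h1.2, h2.1, h2.2]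

lemma SolT.uP (S : SolT a b T B F G) {t : ℝ} (ht : t ∈ Set.Icc (-T) T) (k : Fin 3) (x : E3) :
    |Pm F G k (t, x)| ≤ 4 * B ^ 2 * dk x := by
  have h1 := abs_le.mp (mul_dk S.B0 (dk_nonneg x) (dk_le_one x) (S.uF t ht x) (S.uG1 t ht x k))
  have h2 := abs_le.mp (mul_dk S.B0 (dk_nonneg x) (dk_le_one x) (S.uG t ht x) (S.uF1 t ht x k))
  have : 0 ≤ B ^ 2 * dk x := mul_nonneg (sq_nonneg B) (dk_nonneg x)
  unfold Pm
  rw [abs_le]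
  constructor <;> linarith [h1.1, h1.2, h2.1, h2.2]

lemma SolT.uPt (S : SolT a b T B F G) {t : ℝ} (ht : t ∈ Set.Icc (-T) T) (k : Fin 3) (x : E3) :
    |Pt F G k (t, x)| ≤ 4 * B ^ 2 * dk x := by
  have h1 := abs_le.mp (mul_dk S.B0 (dk_nonneg x) (dk_le_one x) (S.uFt t ht x) (S.uG1 t ht x k))
  have h2 := abs_le.mp (mul_dk S.B0 (dk_nonneg x) (dk_le_one x) (S.uF t ht x) (S.uGt1 t ht x k))
  have h3 := abs_le.mp (mul_dk S.B0 (dk_nonneg x) (dk_le_one x) (S.uGt t ht x) (S.uF1 t ht x k))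
  have h4 := abs_le.mp (mul_dk S.B0 (dk_nonneg x) (dk_le_one x) (S.uG t ht x) (S.uFt1 t ht x k))
  unfold Pt
  rw [abs_le]
  constructor <;> linarith [h1.1, h1.2, h2.1, h2.2, h3.1, h3.2, h4.1, h4.2]

end

/-! ### The Morawetz functionals -/

section
variable {a b T B ε : ℝ} {F G : ℝ × E3 → ℝ}

/-- single-particle functional -/
def NN (ε : ℝ) (F G : ℝ × E3 → ℝ) (t : ℝ) : ℝ := ∫ x, ∑ k, v1 ε k x * Pm F G k (t, x)
/-- interaction functional -/
def MM (ε : ℝ) (F G : ℝ × E3 → ℝ) (t : ℝ) : ℝ :=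
  ∫ z, Rh F G (t, z.1) * ∑ k, v1 ε k (z.2 - z.1) * Pm F G k (t, z.2) ∂vol2

lemma measurable_v1 (ε : ℝ) (k : Fin 3) : Measurable (v1 ε k) :=
  (measurable_coord k).mul measurable_qe

lemma sum_v1_le (hε : 0 < ε) {p : Fin 3 → ℝ} {D : ℝ} (hp : ∀ k, |p k| ≤ D) (z : E3) :
    |∑ k, v1 ε k z * p k| ≤ 3 * D := by
  have h : ∀ k, |v1 ε k z * p k| ≤ D := fun k => by
    rw [abs_mul]
    calc |v1 ε k z| * |p k| ≤ 1 * D :=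
          mul_le_mul (abs_v1_le hε k z) (hp k) (abs_nonneg _) zero_le_one
      _ = D := one_mul D
  refine (Finset.abs_sum_le_sum_abs _ _).trans ?_
  rw [Fin.sum_univ_three]
  linarith [h 0, h 1, h 2]

lemma SolT.NN_deriv (S : SolT a b T B F G) (hε : 0 < ε) {t : ℝ} (ht : t ∈ Set.Ioo (-T) T) :
    HasDerivAt (NN ε F G) (∫ x, ∑ k, v1 ε k x * Pt F G k (t, x)) t := by
  have hs : Set.Icc (-T) T ∈ 𝓝 t := Icc_mem_nhds ht.1 ht.2
  have htI : t ∈ Set.Icc (-T) T := ⟨ht.1.le, ht.2.le⟩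
  have m1 : ∀ s, Measurable (fun x => ∑ k, v1 ε k x * Pm F G k (s, x)) := fun s =>
    Finset.measurable_sum _ fun k _ => (measurable_v1 ε k).mul ((Pm_sm S.sF S.sG k).meas s)
  have m2 : ∀ s, Measurable (fun x => ∑ k, v1 ε k x * Pt F G k (s, x)) := fun s =>
    Finset.measurable_sum _ fun k _ => (measurable_v1 ε k).mul ((Pt_sm S.sF S.sG k).meas s)
  have ib : Integrable (fun x : E3 => 3 * (4 * B ^ 2 * dk x)) :=
    (dk_integrable.const_mul _).const_mul _
  refine (hasDerivAt_integral_of_dominated_loc_of_deriv_le (s := Set.Icc (-T) T)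
    (F := fun s x => ∑ k, v1 ε k x * Pm F G k (s, x))
    (F' := fun s x => ∑ k, v1 ε k x * Pt F G k (s, x)) (bound := fun x => 3 * (4 * B ^ 2 * dk x))
    hs (Eventually.of_forall fun s => (m1 s).aestronglyMeasurable) ?_
    (m2 t).aestronglyMeasurable (Eventually.of_forall fun x s hs => ?_) ib
    (Eventually.of_forall fun x s hs => ?_)).2
  · exact ib.mono' (m1 t).aestronglyMeasurable (Eventually.of_forall fun x =>
      sum_v1_le hε (fun k => S.uP htI k x) x)
  · exact sum_v1_le hε (fun k => S.uPt hs k x) x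
  · exact HasDerivAt.fun_sum fun k _ => (Pm_time S.sF S.sG k s x).const_mul _

lemma gen_deriv {α : Type*} [MeasurableSpace α] {μ : Measure α} {t c : ℝ} {s : Set ℝ}
    (hs : s ∈ 𝓝 t) {R R' P P' : ℝ → α → ℝ} {d e : α → ℝ} (hd : ∀ z, 0 ≤ d z) (hc : 0 ≤ c)
    (mR : ∀ r, Measurable (R r)) (mR' : ∀ r, Measurable (R' r))
    (mP : ∀ r, Measurable (P r)) (mP' : ∀ r, Measurable (P' r))
    (bR : ∀ r ∈ s, ∀ z, |R r z| ≤ c * d z) (bR' : ∀ r ∈ s, ∀ z, |R' r z| ≤ c * d z)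
    (bP : ∀ r ∈ s, ∀ z, |P r z| ≤ 3 * (c * e z)) (bP' : ∀ r ∈ s, ∀ z, |P' r z| ≤ 3 * (c * e z))
    (hR : ∀ r z, HasDerivAt (fun r => R r z) (R' r z) r)
    (hP : ∀ r z, HasDerivAt (fun r => P r z) (P' r z) r)
    (hi : Integrable (fun z => d z * e z) μ) :
    HasDerivAt (fun r => ∫ z, R r z * P r z ∂μ) (∫ z, (R' t z * P t z + R t z * P' t z) ∂μ) t := by
  have ib : Integrable (fun z => (3 * c ^ 2) * (d z * e z) + (3 * c ^ 2) * (d z * e z)) μ :=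
    (hi.const_mul _).add (hi.const_mul _)
  have bd : ∀ (p q : ℝ) (z : α), |p| ≤ c * d z → |q| ≤ 3 * (c * e z) →
      |p * q| ≤ 3 * c ^ 2 * (d z * e z) := by
    intro p q z hp hq
    rw [abs_mul]
    calc |p| * |q| ≤ (c * d z) * (3 * (c * e z)) :=
          mul_le_mul hp hq (abs_nonneg _) (mul_nonneg hc (hd z))
      _ = _ := by ring
  have ht := mem_of_mem_nhds hs
  refine (hasDerivAt_integral_of_dominated_loc_of_deriv_le (s := s) (μ := μ)
    (F := fun r z => R r z * P r z)
    (F' := fun r z => R' r z * P r z + R r z * P' r z)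
    (bound := fun z => (3 * c ^ 2) * (d z * e z) + (3 * c ^ 2) * (d z * e z))
    hs (Eventually.of_forall fun r => ((mR r).mul (mP r)).aestronglyMeasurable) ?_
    (((mR' t).mul (mP t)).add ((mR t).mul (mP' t))).aestronglyMeasurable
    (Eventually.of_forall fun z r hr => ?_) ib
    (Eventually.of_forall fun z r hr => ?_)).2
  · refine (hi.const_mul (3 * c ^ 2)).mono' ((mR t).mul (mP t)).aestronglyMeasurable
      (Eventually.of_forall fun z => ?_)
    exact bd _ _ z (bR t ht z) (bP t ht z)
  · exact (abs_add_le _ _).trans (add_le_add (bd _ _ z (bR' r hr z) (bP r hr z))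
      (bd _ _ z (bR r hr z) (bP' r hr z)))
  · exact (hR r z).fun_mul (hP r z)

lemma SolT.MM_deriv (S : SolT a b T B F G) (hε : 0 < ε) {t : ℝ} (ht : t ∈ Set.Ioo (-T) T) :
    HasDerivAt (MM ε F G) (∫ z, (Rt F G (t, z.1) * (∑ k, v1 ε k (z.2 - z.1) * Pm F G k (t, z.2)) +
      Rh F G (t, z.1) * (∑ k, v1 ε k (z.2 - z.1) * Pt F G k (t, z.2))) ∂vol2) t := by
  have hs : Set.Icc (-T) T ∈ 𝓝 t := Icc_mem_nhds ht.1 ht.2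
  have mR : ∀ s, Measurable (fun z : E3 × E3 => Rh F G (s, z.1)) := fun s =>
    ((Rh_sm S.sF S.sG).meas s).comp measurable_fst
  have mRt : ∀ s, Measurable (fun z : E3 × E3 => Rt F G (s, z.1)) := fun s =>
    ((Rt_sm S.sF S.sG).meas s).comp measurable_fst
  have m1 : ∀ s, Measurable (fun z : E3 × E3 => ∑ k, v1 ε k (z.2 - z.1) * Pm F G k (s, z.2)) :=
    fun s => Finset.measurable_sum _ fun k _ =>
      ((measurable_v1 ε k).comp (measurable_snd.sub measurable_fst)).mul
        (((Pm_sm S.sF S.sG k).meas s).comp measurable_snd)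
  have m2 : ∀ s, Measurable (fun z : E3 × E3 => ∑ k, v1 ε k (z.2 - z.1) * Pt F G k (s, z.2)) :=
    fun s => Finset.measurable_sum _ fun k _ =>
      ((measurable_v1 ε k).comp (measurable_snd.sub measurable_fst)).mul
        (((Pt_sm S.sF S.sG k).meas s).comp measurable_snd)
  have ib : Integrable (fun z : E3 × E3 => dk z.1 * dk z.2) vol2 :=
    dk_integrable.mul_prod dk_integrable
  exact gen_deriv (c := 4 * B ^ 2) (d := fun z : E3 × E3 => dk z.1) (e := fun z => dk z.2)
    (R := fun s z => Rh F G (s, z.1)) (R' := fun s z => Rt F G (s, z.1))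
    (P := fun s z => ∑ k, v1 ε k (z.2 - z.1) * Pm F G k (s, z.2))
    (P' := fun s z => ∑ k, v1 ε k (z.2 - z.1) * Pt F G k (s, z.2)) (μ := vol2)
    hs (fun z => dk_nonneg z.1) (by positivity) mR mRt m1 m2
    (fun r hr z => S.uR hr z.1) (fun r hr z => S.uRt hr z.1)
    (fun r hr z => sum_v1_le hε (fun k => S.uP hr k z.2) (z.2 - z.1))
    (fun r hr z => sum_v1_le hε (fun k => S.uPt hr k z.2) (z.2 - z.1))
    (fun r z => Rh_time S.sF S.sG r z.1)
    (fun r z => HasDerivAt.fun_sum fun k _ => (Pm_time S.sF S.sG k r z.2).const_mul _)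
    ib

/-- energy density -/
def en (F G : ℝ × E3 → ℝ) (z : ℝ × E3) : ℝ :=
  Rh F G z + ∑ j, (dv (vx j) F z ^ 2 + dv (vx j) G z ^ 2)

lemma v1_sq (hε : 0 < ε) (z : E3) (c : Fin 3 → ℝ) : (∑ k, v1 ε k z * c k) ^ 2 ≤ ∑ k, c k ^ 2 := by
  have h := v1_dot hε z (WithLp.toLp 2 c)
  have h2 := normsq_eq (WithLp.toLp 2 c)
  simp only at h h2
  rw [← h2, ← sq_abs]
  gcongr

lemma v1_Pm_le (hε : 0 < ε) (y : E3) (z : ℝ × E3) :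
    |∑ k, v1 ε k y * Pm F G k z| ≤ 1 / 2 * en F G z := by
  have e : ∑ k, v1 ε k y * Pm F G k z = F z * (∑ k, v1 ε k y * dv (vx k) G z)
      - G z * (∑ k, v1 ε k y * dv (vx k) F z) := by
    simp only [Pm, Fin.sum_univ_three]; ring
  have h1 := v1_sq hε y (fun k => dv (vx k) G z)
  have h2 := v1_sq hε y (fun k => dv (vx k) F z)
  rw [e, en, Rh, Finset.sum_add_distrib]
  generalize ∑ k, v1 ε k y * dv (vx k) G z = p at *
  generalize ∑ k, v1 ε k y * dv (vx k) F z = q at *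
  rw [abs_le]
  constructor <;> nlinarith [sq_nonneg (F z - p), sq_nonneg (F z + p), sq_nonneg (G z - q),
    sq_nonneg (G z + q)]

lemma SolT.dec_R (S : SolT a b T B F G) {t : ℝ} (ht : t ∈ Set.Icc (-T) T) :
    Dec (fun x => Rh F G (t, x)) :=
  ⟨(Rh_sm S.sF S.sG).meas t, 4 * B ^ 2, by positivity, S.uR ht⟩

lemma SolT.dec_P (S : SolT a b T B F G) {t : ℝ} (ht : t ∈ Set.Icc (-T) T) (k : Fin 3) :
    Dec (fun x => Pm F G k (t, x)) :=
  ⟨(Pm_sm S.sF S.sG k).meas t, 4 * B ^ 2, by positivity, S.uP ht k⟩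

lemma SolT.dec_en (S : SolT a b T B F G) {t : ℝ} (ht : t ∈ Set.Icc (-T) T) :
    Dec (fun x => en F G (t, x)) := by
  unfold en
  refine (S.dec_R ht).add (Dec.sum fun j => ?_)
  have h1 : Dec (fun x => dv (vx j) F (t, x)) :=
    ⟨(S.sF.dv _).meas t, B, S.B0, fun x => S.uF1 t ht x j⟩
  have h2 : Dec (fun x => dv (vx j) G (t, x)) :=
    ⟨(S.sG.dv _).meas t, B, S.B0, fun x => S.uG1 t ht x j⟩
  exact h1.sq.add h2.sq

lemma Rh_nonneg (z : ℝ × E3) : 0 ≤ Rh F G z := by unfold Rh; positivity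
lemma en_nonneg (z : ℝ × E3) : 0 ≤ en F G z := by unfold en Rh; positivity
lemma Rh_le_en (z : ℝ × E3) : Rh F G z ≤ en F G z := by
  unfold en; exact le_add_of_nonneg_right (by positivity)

lemma SolT.int_R_le (S : SolT a b T B F G) {t : ℝ} (ht : t ∈ Set.Icc (-T) T) {m : ℝ}
    (hm : ∫ x, en F G (t, x) ≤ m) : ∫ x, Rh F G (t, x) ≤ m :=
  le_trans (integral_mono (S.dec_R ht).integrable (S.dec_en ht).integrable
    fun x => Rh_le_en (t, x)) hm

lemma SolT.NN_le (S : SolT a b T B F G) (hε : 0 < ε) {t : ℝ} (ht : t ∈ Set.Icc (-T) T) {m : ℝ}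
    (hm : ∫ x, en F G (t, x) ≤ m) : |NN ε F G t| ≤ m / 2 := by
  unfold NN
  rw [← Real.norm_eq_abs]
  refine (norm_integral_le_of_norm_le ((S.dec_en ht).integrable.const_mul (1 / 2))
    (Eventually.of_forall fun x => v1_Pm_le hε x (t, x))).trans ?_
  rw [integral_const_mul]; linarith

lemma SolT.MM_le (S : SolT a b T B F G) (hε : 0 < ε) {t : ℝ} (ht : t ∈ Set.Icc (-T) T) {m : ℝ}
    (hm : ∫ x, en F G (t, x) ≤ m) : |MM ε F G t| ≤ m ^ 2 / 2 := by
  unfold MM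
  rw [← Real.norm_eq_abs]
  refine (norm_integral_le_of_norm_le
    ((S.dec_R ht).integrable.mul_prod ((S.dec_en ht).integrable.const_mul (1 / 2)))
    (Eventually.of_forall fun z => ?_)).trans ?_
  · rw [norm_mul, Real.norm_eq_abs, Real.norm_eq_abs, abs_of_nonneg (Rh_nonneg _)]
    exact mul_le_mul_of_nonneg_left (v1_Pm_le hε (z.2 - z.1) (t, z.2)) (Rh_nonneg _)
  · rw [integral_prod_mul (fun x => Rh F G (t, x)) (fun x => 1 / 2 * en F G (t, x)),
      integral_const_mul]
    have h1 := S.int_R_le ht hm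
    have h0 : 0 ≤ ∫ x, en F G (t, x) := integral_nonneg fun x => en_nonneg _
    have := mul_le_mul h1 hm h0 (h0.trans hm)
    linarith

/-- The quartic quantity. -/
def QI (F G : ℝ × E3 → ℝ) (t : ℝ) : ℝ := ∫ x, Rh F G (t, x) ^ 2

lemma SolT.QI_cont (S : SolT a b T B F G) : ContinuousOn (QI F G) (Set.Icc (-T) T) := by
  unfold QI
  have hc : Continuous (Rh F G) := (Rh_sm S.sF S.sG).continuous
  refine continuousOn_of_dominated (bound := fun x => (4 * B ^ 2) ^ 2 * dk x) (fun t ht => ?_)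
    (fun t ht => Eventually.of_forall fun x => ?_) (dk_integrable.const_mul _)
    (Eventually.of_forall fun x => ?_)
  · exact (((Rh_sm S.sF S.sG).meas t).pow_const 2).aestronglyMeasurable
  · rw [Real.norm_eq_abs, abs_of_nonneg (sq_nonneg _)]
    exact sq_le_of_abs (dk_le_one x) (dk_nonneg x) (S.uR ht x)
  · exact ((hc.comp (by fun_prop : Continuous fun s : ℝ => (s, x))).pow 2).continuousOn

lemma SolT.main (S : SolT a b T B F G) (ha : 0 < a) (hb0 : 0 < b) (hb1 : b < 1) {m : ℝ}
    (hm : ∀ t ∈ Set.Icc (-T) T, ∫ x, en F G (t, x) ≤ m) {T' : ℝ} (hT' : 0 ≤ T') (hTT : T' < T) :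
    cph / 2 * ∫ t in (-T')..T', QI F G t ≤ 2 * m ^ 2 := by
  obtain ⟨K, hK, hKap⟩ := S.kap_le ha hb0 hb1
  have hm0 : 0 ≤ m := le_trans (integral_nonneg fun x => en_nonneg (0, x))
    (hm 0 ⟨by linarith, by linarith⟩)
  set D := 4 * B ^ 2 * cph1 / 2 * m + m * K with hD
  have hsub : Set.Icc (-T') T' ⊆ Set.Ioo (-T) T := fun t ht =>
    ⟨by linarith [ht.1], by linarith [ht.2]⟩
  have hsub' : Set.Icc (-T') T' ⊆ Set.Icc (-T) T := fun t ht =>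
    ⟨by linarith [ht.1], by linarith [ht.2]⟩
  have hQc : ContinuousOn (QI F G) (Set.Icc (-T') T') := S.QI_cont.mono hsub'
  have hQi : IntervalIntegrable (QI F G) volume (-T') T' :=
    hQc.intervalIntegrable_of_Icc (by linarith)
  have key : ∀ ε, 0 < ε →
      cph / 2 * (∫ t in (-T')..T', QI F G t) - ε * D * (2 * T') ≤ 2 * m ^ 2 := by
    intro ε hε
    have hder : ∀ t ∈ Set.Ioo (-T) T, HasDerivAt (fun t => MM ε F G t + m * NN ε F G t) _ t :=
      fun t ht => (S.MM_deriv hε ht).add ((S.NN_deriv hε ht).const_mul m)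
    have h := intervalIntegral.integral_le_sub_of_hasDeriv_right_of_le
      (φ := fun t => cph / 2 * QI F G t - ε * D)
      (by linarith : -T' ≤ T')
      (fun t ht => (hder t (hsub ht)).continuousAt.continuousWithinAt)
      (fun t ht => (hder t (hsub ⟨ht.1.le, ht.2.le⟩)).hasDerivWithinAt)
      ((hQc.const_mul _).sub continuousOn_const).integrableOn_Icc
      (fun t ht => by
        have htI : t ∈ Set.Icc (-T) T := hsub' ⟨ht.1.le, ht.2.le⟩
        have hR := S.int_R_le htI (hm t htI)
        have hmain := slice_main (S.slice ha hb0 hb1 htI) hε hR (S.lip htI)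
        refine le_trans ?_ hmain
        have h1 : 4 * B ^ 2 * cph1 / 2 * (∫ x, F (t, x) ^ 2 + G (t, x) ^ 2)
            ≤ 4 * B ^ 2 * cph1 / 2 * m :=
          mul_le_mul_of_nonneg_left hR (by have := cph1_nonneg; positivity)
        have h2 := mul_le_mul_of_nonneg_left (hKap t htI) hm0
        have h3 := mul_le_mul_of_nonneg_left (add_le_add h1 h2) hε.le
        have h4 : QI F G t = ∫ x, (F (t, x) ^ 2 + G (t, x) ^ 2) ^ 2 := rfl
        rw [← hD] at h3
        rw [h4]
        linarith)
    rw [intervalIntegral.integral_sub (hQi.const_mul _) intervalIntegrable_const,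
      intervalIntegral.integral_const_mul, intervalIntegral.integral_const, smul_eq_mul] at h
    have i1 : T' ∈ Set.Icc (-T) T := hsub' ⟨by linarith, le_rfl⟩
    have i2 : -T' ∈ Set.Icc (-T) T := hsub' ⟨le_rfl, by linarith⟩
    have a1 := abs_le.mp (S.MM_le hε i1 (hm _ i1))
    have a2 := abs_le.mp (S.MM_le hε i2 (hm _ i2))
    have a3 := abs_le.mp (S.NN_le hε i1 (hm _ i1))
    have a4 := abs_le.mp (S.NN_le hε i2 (hm _ i2))
    have a5 := mul_le_mul_of_nonneg_left a3.2 hm0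
    have a6 := mul_le_mul_of_nonneg_left a4.1 hm0
    have : T' - -T' = 2 * T' := by ring
    rw [this] at h
    linarith [a1.2, a2.1]
  have hlim : Tendsto (fun ε : ℝ => cph / 2 * (∫ t in (-T')..T', QI F G t) - ε * D * (2 * T'))
      (𝓝[>] 0) (𝓝 (cph / 2 * (∫ t in (-T')..T', QI F G t) - 0 * D * (2 * T'))) := by
    refine tendsto_nhdsWithin_of_tendsto_nhds (Continuous.tendsto (by fun_prop) 0)
  have := le_of_tendsto hlim (eventually_nhdsWithin_of_forall key)
  simpa using this

end

theorem interaction_morawetz_estimate (a b : ℝ) (ha : 0 < a)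
    (hb0 : 0 < b) (hb1 : b < 1) :
    ∃ C : ℝ, 0 < C ∧ ∀ u : ℝ → E3 → ℂ, IsSchwartzSolution a b 1 u →
      ∀ E : ℝ, 0 ≤ E →
      (∀ t : ℝ, ∫ x : E3,
          (‖u t x‖ ^ 2 + ∑ j : Fin 3, ‖pd j (u t) x‖ ^ 2) ≤ E ^ 2) →
      ∫ t : ℝ, ∫ x : E3, ‖u t x‖ ^ 4 ≤ C * E ^ 4 := by
  have hc := cph_pos
  refine ⟨4 / cph, by positivity, fun u hu E hE hen => ?_⟩
  have hU : Sm (fun z : ℝ × E3 => u z.1 z.2) := hu.smooth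
  have hn : ∀ w : ℂ, ‖w‖ ^ 2 = w.re ^ 2 + w.im ^ 2 := fun w => by
    rw [Complex.sq_norm, Complex.normSq_apply]; ring
  have hen' : ∀ t, ∫ x, en (fun z => (u z.1 z.2).re) (fun z => (u z.1 z.2).im) (t, x) ≤ E ^ 2 := by
    intro t
    refine le_trans (le_of_eq (integral_congr_ae (Eventually.of_forall fun x => ?_))) (hen t)
    simp only [en, Rh, dv_re hU, dv_im hU, hn]
    congr 1
    refine Finset.sum_congr rfl fun j _ => ?_
    rw [← pd_eq hU]
  have hQ : ∀ t, ∫ x, ‖u t x‖ ^ 4 = QI (fun z => (u z.1 z.2).re) (fun z => (u z.1 z.2).im) t := by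
    intro t
    refine integral_congr_ae (Eventually.of_forall fun x => ?_)
    simp only [Rh, ← hn]; ring
  simp only [hQ]
  have hb : ∀ T' : ℝ, 0 ≤ T' →
      ∫ t in (-T')..T', QI (fun z => (u z.1 z.2).re) (fun z => (u z.1 z.2).im) t
        ≤ 4 / cph * E ^ 4 := by
    intro T' hT'
    obtain ⟨B, S⟩ := SolT_of hu (T' + 1) (by linarith)
    have h := S.main ha hb0 hb1 (fun t _ => hen' t) hT' (by linarith)
    rw [div_mul_eq_mul_div, le_div_iff₀ hc]
    nlinarith
  by_cases hi : Integrable (QI (fun z => (u z.1 z.2).re) (fun z => (u z.1 z.2).im))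
  · have hl := intervalIntegral_tendsto_integral hi tendsto_neg_atTop_atBot tendsto_id
    refine le_of_tendsto hl ?_
    filter_upwards [eventually_ge_atTop 0] with T' hT'
    exact hb T' hT'
  · rw [integral_undef hi]
    positivity
end
end
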